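/- arXiv:2604.26246 — 2 statements merged into one kernel-verified Lean document; each statement's English description precedes it below -/
import Mathlib

section
/- Let θ > 0 and let u : ℝ² → ℝ be a smooth solution of arctan λ₁(D²u(x)) + arctan λ₂(D²u(x)) = θ + f(x) on ℝ², with θ + f(x) ∈ (0,π) for all x, f Lipschitz continuous outside a bounded set, and f satisfying the decay condition D(β) relative to u for some β > 0. Suppose there exist A ∈ 𝒜_θ, ε ∈ (0,1), C₁ > 0 and R₀ > 0 such that |u(x) − ½ xᵀAx| ≤ C₁ |x|^{2−ε} for all |x| ≥ R₀. Set w(x) = u(x) − ½ xᵀAx and ε_β = min{ε, β}. Then for every α ∈ (0,1) there exist C > 0 and R₁ > R₀ such that: |Dᵏw(x)| ≤ C |x|^{2−k−ε_β} for all |x| > R₁ and k = 0,1,2, and |D²w(x₁) − D²w(x₂)| ≤ C |x₁|^{−ε_β−α} |x₁ − x₂|^α for all x₁ with |x₁| > R₁ and all x₂ ∈ B_{|x₁|/2}(x₁). -/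
/-!
Far away the phase `θ + f` is close to `θ ∈ (0, π)`, so with `κ = cot (θ / 2)` (`kap θ`) the function
`U = u + κ |x|² / 2` is uniformly convex outside a compact set (`phase_alg`, `exists_eta`). In terms
of the inverse Hessian `P = (D²u + κ)⁻¹` the phase equation becomes linear up to an error of the size
of `f`: the trace of `P` is a constant, plus a function of `f`, plus a small multiple of `det P`
(`inv_trace`, `trace_of_phase`).

Now `P` is the Hessian of the Legendre transform of `U`. Hence the Legendre transform of `U`, minus
that of the limiting quadratic, solves a Poisson equation whose right-hand side oscillates like `f`
up to a small multiple of the oscillation of its own Hessian. It is as small as `u - xᵀAx / 2`,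
because the Legendre transform contracts uniform distances (`GradHess.legendre`). Such an equation
obeys an interior Schauder estimate (`schauder`). This estimate is proved by elementary means: a
quadratic barrier on a half-square (`max_core`) gives an interior gradient estimate (`grad_est`);
applied to second difference quotients it compares second derivatives at nearby points
(`near_est`); and the Hölder seminorm, finite a priori as `u` is smooth, is then absorbed
(`adm_step`, `le_of_halving`).

Applied on balls of radius `‖x‖ / 4` and translated back to the Hessian of `u` (`local_est`,
`local_hess`), the estimate bounds `D²w` and its local Hölder seminorm by a multiple of
`‖x‖ ^ (-ε) + ‖x‖ ^ (-β)`, in scale-invariant form. The bound on `Dw` follows by interpolation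
(`GradHess.grad_interp`), and `full_decay` extends the Hölder bound from small balls to
`B_{|x|/2}(x)`.
-/

open Real MeasureTheory

noncomputable section

abbrev E2 : Type := EuclideanSpace ℝ (Fin 2)

/-- Entries of the Hessian matrix `D²u(x)`. -/
noncomputable def Hess (u : E2 → ℝ) (x : E2) : Matrix (Fin 2) (Fin 2) ℝ :=
  Matrix.of fun i j =>
    iteratedFDeriv ℝ 2 u x ![EuclideanSpace.single i 1, EuclideanSpace.single j 1]

/-- Smaller eigenvalue of a symmetric `2×2` real matrix. -/
noncomputable def lam1 (M : Matrix (Fin 2) (Fin 2) ℝ) : ℝ :=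
  ((M 0 0 + M 1 1) - Real.sqrt ((M 0 0 - M 1 1) ^ 2 + 4 * M 0 1 ^ 2)) / 2

/-- Larger eigenvalue of a symmetric `2×2` real matrix. -/
noncomputable def lam2 (M : Matrix (Fin 2) (Fin 2) ℝ) : ℝ :=
  ((M 0 0 + M 1 1) + Real.sqrt ((M 0 0 - M 1 1) ^ 2 + 4 * M 0 1 ^ 2)) / 2

/-- The Lagrangian phase `F(M) = arctan λ₁(M) + arctan λ₂(M)`. -/
noncomputable def Phase (M : Matrix (Fin 2) (Fin 2) ℝ) : ℝ :=
  Real.arctan (lam1 M) + Real.arctan (lam2 M)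

/-- `𝒜_θ`: symmetric `2×2` matrices with phase `θ`. -/
def calA (θ : ℝ) : Set (Matrix (Fin 2) (Fin 2) ℝ) := {M | M.IsSymm ∧ Phase M = θ}

/-- The quadratic form `xᵀ A x`. -/
noncomputable def quadForm (A : Matrix (Fin 2) (Fin 2) ℝ) (x : E2) : ℝ :=
  ∑ i, ∑ j, A i j * x i * x j

/-- Hölder seminorm `[g]_{C^{0,a}(U)}`, valued in `ℝ≥0∞`. -/
noncomputable def hSemi {E F : Type*} [NormedAddCommGroup E] [NormedAddCommGroup F]
    (a : ℝ) (U : Set E) (g : E → F) : ENNReal :=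
  ⨆ x ∈ U, ⨆ y ∈ U, ENNReal.ofReal (‖g x - g y‖ / ‖x - y‖ ^ a)

/-- The decay condition `D(β)` of `f` relative to `u`:
`(|x|+|Du(x)|)^β |f(x)| + (|x|+|Du(x)|)^{β+1} [f]_{C^{0,1}(B_{|x|/2}(x))} ≤ C₀` for `|x| ≥ R₀`. -/
def DecayCond (β : ℝ) (u f : E2 → ℝ) : Prop :=
  ∃ C₀ > (0:ℝ), ∃ R₀ > (0:ℝ), ∀ x : E2, R₀ ≤ ‖x‖ →
    ENNReal.ofReal ((‖x‖ + ‖gradient u x‖) ^ β * |f x|)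
      + ENNReal.ofReal ((‖x‖ + ‖gradient u x‖) ^ (β + 1)) *
          hSemi 1 (Metric.ball x (‖x‖ / 2)) f
      ≤ ENNReal.ofReal C₀

/-! ### Maximum principle and gradient estimate for the Poisson equation -/

/-- Second-order Taylor inequality on `[0, t]` with a lower bound on the second derivative. -/
lemma taylor_lower {g g' g'' : ℝ → ℝ} {t k : ℝ} (ht : 0 ≤ t)
    (h1 : ∀ s ∈ Set.Icc 0 t, HasDerivAt g (g' s) s)
    (h2 : ∀ s ∈ Set.Icc 0 t, HasDerivAt g' (g'' s) s)
    (hk : ∀ s ∈ Set.Icc 0 t, k ≤ g'' s) : g 0 + g' 0 * t + k * t ^ 2 / 2 ≤ g t := by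
  have m1 : MonotoneOn (fun s => g' s - k * s) (Set.Icc 0 t) := by
    have hd : ∀ s ∈ Set.Icc 0 t, HasDerivAt (fun s => g' s - k * s) (g'' s - k) s := by
      intro s hs
      exact ((h2 s hs).sub ((hasDerivAt_id s).const_mul k)).congr_deriv (by simp)
    refine monotoneOn_of_hasDerivWithinAt_nonneg (convex_Icc 0 t) (f' := fun s => g'' s - k)
      (fun s hs => (hd s hs).continuousAt.continuousWithinAt)
      (fun s hs => (hd s (interior_subset hs)).hasDerivWithinAt)
      (fun s hs => by have := hk s (interior_subset hs); linarith)
  have m2 : MonotoneOn (fun s => g s - g' 0 * s - k / 2 * s ^ 2) (Set.Icc 0 t) := by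
    have hd : ∀ s ∈ Set.Icc 0 t,
        HasDerivAt (fun s => g s - g' 0 * s - k / 2 * s ^ 2) (g' s - g' 0 - k * s) s := by
      intro s hs
      have := ((h1 s hs).sub ((hasDerivAt_id s).const_mul (g' 0))).sub
        (((hasDerivAt_id s).pow 2).const_mul (k / 2))
      exact this.congr_deriv (by simp; ring)
    refine monotoneOn_of_hasDerivWithinAt_nonneg (convex_Icc 0 t)
      (f' := fun s => g' s - g' 0 - k * s)
      (fun s hs => (hd s hs).continuousAt.continuousWithinAt)
      (fun s hs => (hd s (interior_subset hs)).hasDerivWithinAt)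
      (fun s hs => ?_)
    have hs' := interior_subset hs
    have := m1 ⟨le_rfl, ht⟩ hs' hs'.1
    simp at this
    linarith
  have := m2 ⟨le_rfl, ht⟩ ⟨ht, le_rfl⟩ ht
  simp at this
  linarith

lemma second_deriv_nonpos_of_isLocalMax {g g' : ℝ → ℝ} {x k : ℝ} (hm : IsLocalMax g x)
    (h1 : ∀ᶠ s in nhds x, HasDerivAt g (g' s) s) (h2 : HasDerivAt g' k x) : k ≤ 0 := by
  by_contra! hk
  have e1 : deriv g =ᶠ[nhds x] g' := h1.mono fun s hs => hs.deriv
  have d2 : deriv (deriv g) x = k := by rw [e1.deriv_eq, h2.deriv]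
  have hmin : IsLocalMin g x := isLocalMin_of_deriv_deriv_pos (by rw [d2]; exact hk)
    hm.deriv_eq_zero h1.self_of_nhds.continuousAt
  -- a point that is both a local minimum and a local maximum has a constant neighbourhood
  have hc : g =ᶠ[nhds x] fun _ => g x := by
    filter_upwards [hm, hmin] with s hs hs'
    exact le_antisymm hs hs'
  have : deriv (deriv g) x = 0 := by
    rw [hc.deriv.deriv_eq]
    simp
  linarith

/-- Maximum principle on the half-square `[0, d] × [-d, d]` with a quadratic barrier. -/
lemma max_core {φ φ1 φ11 φ2 φ22 : ℝ → ℝ → ℝ} {d M F : ℝ} (hd : 0 < d) (hM : 0 ≤ M)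
    (hcont : ContinuousOn (fun p : ℝ × ℝ => φ p.1 p.2) (Set.Icc 0 d ×ˢ Set.Icc (-d) d))
    (h1 : ∀ x ∈ Set.Ioo 0 d, ∀ y ∈ Set.Ioo (-d) d,
      HasDerivAt (fun s => φ s y) (φ1 x y) x ∧ HasDerivAt (fun s => φ1 s y) (φ11 x y) x)
    (h2 : ∀ x ∈ Set.Ioo 0 d, ∀ y ∈ Set.Ioo (-d) d,
      HasDerivAt (fun s => φ x s) (φ2 x y) y ∧ HasDerivAt (fun s => φ2 x s) (φ22 x y) y)
    (hF : ∀ x ∈ Set.Ioo 0 d, ∀ y ∈ Set.Ioo (-d) d, -F ≤ φ11 x y + φ22 x y) (hF0 : 0 ≤ F)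
    (hb0 : ∀ y ∈ Set.Icc (-d) d, φ 0 y ≤ 0)
    (hb : ∀ x ∈ Set.Icc 0 d, ∀ y ∈ Set.Icc (-d) d, φ x y ≤ M) :
    ∀ x ∈ Set.Icc 0 d, ∀ y ∈ Set.Icc (-d) d,
      φ x y ≤ M / d ^ 2 * (y ^ 2 + x * (2 * d - x)) + F * x * (d - x) / 2 := by
  -- the strict barrier: adding `η * (x ^ 2 - d ^ 2)` makes the function strictly subharmonic
  suffices H : ∀ η > 0, ∀ x ∈ Set.Icc 0 d, ∀ y ∈ Set.Icc (-d) d,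
      φ x y - (M / d ^ 2 * (y ^ 2 + x * (2 * d - x)) + F * x * (d - x) / 2)
        + η * (x ^ 2 - d ^ 2) ≤ 0 by
    intro x hx y hy
    refine le_of_forall_pos_le_add fun ε hε => ?_
    have := H (ε / d ^ 2) (by positivity) x hx y hy
    have h3 : ε / d ^ 2 * (x ^ 2 - d ^ 2) = ε / d ^ 2 * x ^ 2 - ε := by field_simp
    have h4 : 0 ≤ ε / d ^ 2 * x ^ 2 := by positivity
    linarith
  intro η hη
  set χ : ℝ × ℝ → ℝ := fun p => φ p.1 p.2 -
    (M / d ^ 2 * (p.2 ^ 2 + p.1 * (2 * d - p.1)) + F * p.1 * (d - p.1) / 2)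
        + η * (p.1 ^ 2 - d ^ 2) with hχ
  have hχc : ContinuousOn χ (Set.Icc 0 d ×ˢ Set.Icc (-d) d) := by
    refine (hcont.sub (Continuous.continuousOn (by fun_prop))).add
      (Continuous.continuousOn (by fun_prop))
  obtain ⟨⟨a, b⟩, hab, hmax⟩ := (isCompact_Icc.prod isCompact_Icc).exists_isMaxOn
    ⟨((0 : ℝ), (0 : ℝ)), ⟨⟨le_rfl, hd.le⟩, ⟨by simpa using hd.le, hd.le⟩⟩⟩ hχc
  obtain ⟨ha, hb'⟩ := hab
  simp only at ha hb'
  suffices h0 : χ (a, b) ≤ 0 by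
    intro x hx y hy
    exact (hmax (Set.mk_mem_prod hx hy)).trans h0
  have hMd : 0 ≤ M / d ^ 2 := by positivity
  have hMd' : M / d ^ 2 * d ^ 2 = M := by field_simp
  have ha2 : η * (a ^ 2 - d ^ 2) ≤ 0 :=
    mul_nonpos_of_nonneg_of_nonpos hη.le (by nlinarith [ha.1, ha.2])
  have hFa : 0 ≤ F * a * (d - a) / 2 := by
    have := ha.1; have := sub_nonneg.2 ha.2; positivity
  by_cases hA0 : a = 0
  · subst hA0
    have := hb0 b hb'
    have h3 : 0 ≤ M / d ^ 2 * b ^ 2 := by positivity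
    simp only [hχ]
    nlinarith
  by_cases hA1 : a = d
  · have := hb a ha b hb'
    have h3 : 0 ≤ M / d ^ 2 * b ^ 2 := by positivity
    simp only [hχ]
    have e : M / d ^ 2 * (b ^ 2 + a * (2 * d - a)) = M / d ^ 2 * b ^ 2 + M / d ^ 2 * d ^ 2 := by
      rw [hA1]; ring
    linarith
  by_cases hB : b = d ∨ b = -d
  · have := hb a ha b hb'
    have hb2 : b ^ 2 = d ^ 2 := by rcases hB with h | h <;> rw [h] <;> ring
    have h3 : 0 ≤ M / d ^ 2 * (a * (2 * d - a)) :=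
      mul_nonneg hMd (mul_nonneg ha.1 (by linarith [ha.2]))
    simp only [hχ]
    rw [hb2, mul_add]
    linarith
  push Not at hB
  have hai : a ∈ Set.Ioo 0 d := ⟨lt_of_le_of_ne ha.1 (Ne.symm hA0), lt_of_le_of_ne ha.2 hA1⟩
  have hbi : b ∈ Set.Ioo (-d) d :=
    ⟨lt_of_le_of_ne hb'.1 (Ne.symm hB.2), lt_of_le_of_ne hb'.2 hB.1⟩
  exfalso
  have k1 : φ11 a b - (M / d ^ 2 * (-2) - F) + 2 * η ≤ 0 := by
    refine second_deriv_nonpos_of_isLocalMax (g := fun s => χ (s, b)) (x := a)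
      (g' := fun s => φ1 s b - (M / d ^ 2 * (2 * d - 2 * s) + (F * (d - 2 * s)) / 2)
        + η * (2 * s)) ?_ ?_ ?_
    · filter_upwards [Ioo_mem_nhds hai.1 hai.2] with s hs
      exact hmax (Set.mk_mem_prod ⟨hs.1.le, hs.2.le⟩ hb')
    · filter_upwards [Ioo_mem_nhds hai.1 hai.2] with s hs
      have i := hasDerivAt_id s
      have := ((h1 s hs b hbi).1.sub (((((i.const_mul (2 * d)).sub (i.pow 2)).const_add
        (b ^ 2)).const_mul (M / d ^ 2)).add
        (((i.const_mul d).sub (i.pow 2)).const_mul (F / 2)))).add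
        (((i.pow 2).sub_const (d ^ 2)).const_mul η)
      refine (this.congr_of_eventuallyEq (Filter.Eventually.of_forall fun r => ?_)).congr_deriv ?_
      · simp [hχ]; ring
      · simp; ring
    · have i := hasDerivAt_id a
      have := ((h1 a hai b hbi).2.sub ((((i.const_mul 2).const_sub (2 * d)).const_mul
        (M / d ^ 2)).add (((i.const_mul 2).const_sub d).const_mul (F / 2)))).add
        ((i.const_mul 2).const_mul η)
      refine (this.congr_of_eventuallyEq (Filter.Eventually.of_forall fun r => ?_)).congr_deriv ?_
      · simp; ring
      · simp; ring
  have k2 : φ22 a b - M / d ^ 2 * 2 ≤ 0 := by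
    refine second_deriv_nonpos_of_isLocalMax (g := fun s => χ (a, s)) (x := b)
      (g' := fun s => φ2 a s - M / d ^ 2 * (2 * s)) ?_ ?_ ?_
    · filter_upwards [Ioo_mem_nhds hbi.1 hbi.2] with s hs
      exact hmax (Set.mk_mem_prod ha ⟨hs.1.le, hs.2.le⟩)
    · filter_upwards [Ioo_mem_nhds hbi.1 hbi.2] with s hs
      have i := hasDerivAt_id s
      have := (((h2 a hai s hs).1.sub (((i.pow 2).add_const (a * (2 * d - a))).const_mul
        (M / d ^ 2))).sub_const (F * a * (d - a) / 2)).add_const (η * (a ^ 2 - d ^ 2))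
      refine (this.congr_of_eventuallyEq (Filter.Eventually.of_forall fun r => ?_)).congr_deriv ?_
      · simp [hχ]; ring
      · simp
    · have i := hasDerivAt_id b
      have := (h2 a hai b hbi).2.sub ((i.const_mul 2).const_mul (M / d ^ 2))
      refine (this.congr_of_eventuallyEq (Filter.Eventually.of_forall fun r => ?_)).congr_deriv ?_
      · simp
      · simp
  have := hF a hai b hbi
  linarith

/-- `DD B v e k`: along every line of direction `e`, the function `v` is twice differentiable at
the points of `B`, with second derivative `k`. -/
def DD (B : Set E2) (v : E2 → ℝ) (e : E2) (k : E2 → ℝ) : Prop :=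
  ∃ g : E2 → ℝ, ∀ (x : E2) (s : ℝ), x + s • e ∈ B →
    HasDerivAt (fun τ : ℝ => v (x + τ • e)) (g (x + s • e)) s ∧
    HasDerivAt (fun τ : ℝ => g (x + τ • e)) (k (x + s • e)) s

lemma DD.mono {B B' : Set E2} {v k : E2 → ℝ} {e : E2} (h : DD B v e k) (hB : B' ⊆ B) :
    DD B' v e k := by
  obtain ⟨g, hg⟩ := h
  exact ⟨g, fun x s hx => hg x s (hB hx)⟩

lemma dd_neg_aux {B : Set E2} {v g k : E2 → ℝ} {e : E2}
    (hg : ∀ (x : E2) (s : ℝ), x + s • e ∈ B →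
      HasDerivAt (fun τ : ℝ => v (x + τ • e)) (g (x + s • e)) s ∧
      HasDerivAt (fun τ : ℝ => g (x + τ • e)) (k (x + s • e)) s) :
    ∀ (x : E2) (s : ℝ), x + s • (-e) ∈ B →
      HasDerivAt (fun τ : ℝ => v (x + τ • (-e))) (-g (x + s • (-e))) s ∧
      HasDerivAt (fun τ : ℝ => -g (x + τ • (-e))) (k (x + s • (-e))) s := by
  intro x s hx
  have e1 : x + s • (-e) = x + (-s) • e := by simp
  rw [e1] at hx ⊢
  obtain ⟨h1, h2⟩ := hg x (-s) hx
  have i : HasDerivAt (fun τ : ℝ => -τ) (-1) s := (hasDerivAt_id s).neg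
  have c1 := HasDerivAt.comp (h₂ := fun τ : ℝ => v (x + τ • e)) s h1 i
  have c2 := (HasDerivAt.comp (h₂ := fun τ : ℝ => g (x + τ • e)) s h2 i).neg
  constructor
  · refine (c1.congr_of_eventuallyEq (Filter.Eventually.of_forall fun r => ?_)).congr_deriv ?_
    · simp
    · simp
  · refine (c2.congr_of_eventuallyEq (Filter.Eventually.of_forall fun r => ?_)).congr_deriv ?_
    · simp
    · simp

lemma DD.neg {B : Set E2} {v k : E2 → ℝ} {e : E2} (h : DD B v e k) : DD B v (-e) k := by
  obtain ⟨g, hg⟩ := h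
  exact ⟨fun x => -g x, dd_neg_aux hg⟩

lemma DD.add {B : Set E2} {v k v' k' : E2 → ℝ} {e : E2} (h : DD B v e k) (h' : DD B v' e k') :
    DD B (fun x => v x + v' x) e (fun x => k x + k' x) := by
  obtain ⟨g, hg⟩ := h
  obtain ⟨g', hg'⟩ := h'
  exact ⟨fun x => g x + g' x, fun x s hx =>
    ⟨(hg x s hx).1.add (hg' x s hx).1, (hg x s hx).2.add (hg' x s hx).2⟩⟩

lemma DD.const_mul {B : Set E2} {v k : E2 → ℝ} {e : E2} (c : ℝ) (h : DD B v e k) :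
    DD B (fun x => c * v x) e (fun x => c * k x) := by
  obtain ⟨g, hg⟩ := h
  exact ⟨fun x => c * g x, fun x s hx =>
    ⟨(hg x s hx).1.const_mul c, (hg x s hx).2.const_mul c⟩⟩

lemma DD.translate {B : Set E2} {v k : E2 → ℝ} {e : E2} (b : E2) (h : DD B v e k) :
    DD {x | x + b ∈ B} (fun x => v (x + b)) e (fun x => k (x + b)) := by
  obtain ⟨g, hg⟩ := h
  refine ⟨fun x => g (x + b), fun x s hx => ?_⟩
  have e1 : ∀ τ : ℝ, x + τ • e + b = (x + b) + τ • e := fun τ => by abel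
  simp only [Set.mem_ofPred_eq, e1] at hx ⊢
  exact hg (x + b) s hx

/-- Interior gradient estimate for the Poisson equation in symmetric-difference form, obtained from
the odd part of `v` across the midpoint and the barrier of `max_core`. -/
lemma grad_est {v k1 k2 : E2 → ℝ} {e e' z : E2} {d M F c : ℝ} {B : Set E2} (hd : 0 < d)
    (hF0 : 0 ≤ F) (hB : ∀ s t : ℝ, |s| ≤ d → |t| ≤ d → z + s • e + t • e' ∈ B)
    (h1 : DD B v e k1) (h2 : DD B v e' k2) (hcont : ContinuousOn v B)
    (hv : ∀ x ∈ B, |v x - c| ≤ M) (hΔ : ∀ x ∈ B, |k1 x + k2 x| ≤ F) {t : ℝ}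
    (ht : t ∈ Set.Icc 0 d) :
    |v (z + t • e) - v (z - t • e)| ≤ 2 * t * (2 * M / d + F * d / 2) := by
  have hM : 0 ≤ M := by
    have := hv _ (hB 0 0 (by simpa using hd.le) (by simpa using hd.le))
    exact (abs_nonneg _).trans this
  have key : ∀ e : E2, (∀ s t : ℝ, |s| ≤ d → |t| ≤ d → z + s • e + t • e' ∈ B) →
      DD B v e k1 → v (z + t • e) - v (z - t • e) ≤ 2 * t * (2 * M / d + F * d / 2) := by
    intro e hB h1
    obtain ⟨g1, hg1⟩ := h1
    obtain ⟨gm, hgm⟩ := DD.neg ⟨g1, hg1⟩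
    obtain ⟨g2, hg2⟩ := h2
    have hBm : ∀ s t : ℝ, |s| ≤ d → |t| ≤ d → z + s • (-e) + t • e' ∈ B := by
      intro s t hs ht
      have := hB (-s) t (by simpa using hs) ht
      simpa using this
    have ab : ∀ x ∈ Set.Icc 0 d, |x| ≤ d := fun x hx => by rw [abs_of_nonneg hx.1]; exact hx.2
    have ab' : ∀ x ∈ Set.Ioo 0 d, |x| ≤ d := fun x hx => ab x ⟨hx.1.le, hx.2.le⟩
    have ab2 : ∀ x ∈ Set.Icc (-d) d, |x| ≤ d := fun x hx => abs_le.2 hx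
    have ab2' : ∀ x ∈ Set.Ioo (-d) d, |x| ≤ d := fun x hx => ab2 x ⟨hx.1.le, hx.2.le⟩
    have sw : ∀ (e : E2) (x y : ℝ), z + x • e + y • e' = (z + y • e') + x • e :=
      fun e x y => by abel
    have := max_core (d := d) (M := M) (F := F)
      (φ := fun x y => (v (z + x • e + y • e') - v (z + x • (-e) + y • e')) / 2)
      (φ1 := fun x y => (g1 (z + x • e + y • e') - gm (z + x • (-e) + y • e')) / 2)
      (φ11 := fun x y => (k1 (z + x • e + y • e') - k1 (z + x • (-e) + y • e')) / 2)
      (φ2 := fun x y => (g2 (z + x • e + y • e') - g2 (z + x • (-e) + y • e')) / 2)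
      (φ22 := fun x y => (k2 (z + x • e + y • e') - k2 (z + x • (-e) + y • e')) / 2)
      hd hM ?_ ?_ ?_ ?_ hF0 ?_ ?_ t ht 0 ⟨by linarith, hd.le⟩
    · simp only [zero_smul, add_zero, smul_neg, ← sub_eq_add_neg] at this
      have h3 : M / d ^ 2 * (0 ^ 2 + t * (2 * d - t)) ≤ t * (2 * M / d) := by
        have : t * (2 * M / d) - M / d ^ 2 * (0 ^ 2 + t * (2 * d - t)) = M / d ^ 2 * t ^ 2 := by
          field_simp; ring
        have : 0 ≤ M / d ^ 2 * t ^ 2 := by positivity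
        linarith
      have h4 : F * t * (d - t) / 2 ≤ t * (F * d / 2) := by
        have := mul_nonneg (mul_nonneg hF0 ht.1) ht.1
        linarith
      linarith
    · refine ((hcont.comp (f := fun p : ℝ × ℝ => z + p.1 • e + p.2 • e')
        (Continuous.continuousOn (by fun_prop)) ?_).sub
        (hcont.comp (f := fun p : ℝ × ℝ => z + p.1 • (-e) + p.2 • e')
        (Continuous.continuousOn (by fun_prop)) ?_)).div_const 2
      · exact fun p hp => hB _ _ (ab _ hp.1) (ab2 _ hp.2)
      · exact fun p hp => hBm _ _ (ab _ hp.1) (ab2 _ hp.2)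
    · intro x hx y hy
      have m1 := hB x y (ab' x hx) (ab2' y hy)
      have m2 := hBm x y (ab' x hx) (ab2' y hy)
      simp only [sw] at m1 m2 ⊢
      exact ⟨((hg1 _ x m1).1.sub (hgm _ x m2).1).div_const 2,
        ((hg1 _ x m1).2.sub (hgm _ x m2).2).div_const 2⟩
    · intro x hx y hy
      have m1 := hB x y (ab' x hx) (ab2' y hy)
      have m2 := hBm x y (ab' x hx) (ab2' y hy)
      exact ⟨((hg2 _ y m1).1.sub (hg2 _ y m2).1).div_const 2,
        ((hg2 _ y m1).2.sub (hg2 _ y m2).2).div_const 2⟩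
    · intro x hx y hy
      have m1 := (abs_le.1 (hΔ _ (hB x y (ab' x hx) (ab2' y hy)))).1
      have m2 := (abs_le.1 (hΔ _ (hBm x y (ab' x hx) (ab2' y hy)))).2
      linarith
    · intro y hy
      simp
    · intro x hx y hy
      have m1 := (abs_le.1 (hv _ (hB x y (ab x hx) (ab2 y hy)))).2
      have m2 := (abs_le.1 (hv _ (hBm x y (ab x hx) (ab2 y hy)))).1
      linarith
  rw [abs_le]
  have k1 := key e hB h1
  have k2 := key (-e) (fun s t hs ht => by
    have := hB (-s) t (by simpa using hs) ht
    simpa using this) h1.neg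
  simp only [smul_neg, sub_neg_eq_add, ← sub_eq_add_neg] at k2
  constructor <;> linarith

lemma grad_est_abs {v k1 k2 : E2 → ℝ} {e e' z : E2} {d M F c : ℝ} {B : Set E2} (hd : 0 < d)
    (hF0 : 0 ≤ F) (hB : ∀ s t : ℝ, |s| ≤ d → |t| ≤ d → z + s • e + t • e' ∈ B)
    (h1 : DD B v e k1) (h2 : DD B v e' k2) (hcont : ContinuousOn v B)
    (hv : ∀ x ∈ B, |v x - c| ≤ M) (hΔ : ∀ x ∈ B, |k1 x + k2 x| ≤ F) {t : ℝ}
    (ht : |t| ≤ d) :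
    |v (z + t • e) - v (z - t • e)| ≤ 2 * |t| * (2 * M / d + F * d / 2) := by
  rcases le_total 0 t with h | h
  · rw [abs_of_nonneg h] at ht ⊢
    exact grad_est hd hF0 hB h1 h2 hcont hv hΔ ⟨h, ht⟩
  · rw [abs_of_nonpos h] at ht ⊢
    have := grad_est hd hF0 hB h1 h2 hcont hv hΔ (t := -t) ⟨by linarith, ht⟩
    rwa [neg_smul, sub_neg_eq_add, ← sub_eq_add_neg, abs_sub_comm] at this

/-! ### Hölder estimate for second derivatives at nearby points -/

/-- A second symmetric difference approximates the second derivative up to its oscillation. -/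
lemma second_diff {B : Set E2} {w k : E2 → ℝ} {e z : E2} {t η : ℝ} (h : DD B w e k) (ht : 0 ≤ t)
    (hB : ∀ s : ℝ, |s| ≤ t → z + s • e ∈ B)
    (hk : ∀ s : ℝ, |s| ≤ t → |k (z + s • e) - k z| ≤ η) :
    |w (z + t • e) + w (z - t • e) - 2 * w z - t ^ 2 * k z| ≤ t ^ 2 * η := by
  obtain ⟨g, hg⟩ := h
  have hm := dd_neg_aux hg
  have hB' : ∀ s : ℝ, |s| ≤ t → z + s • (-e) ∈ B := fun s hs => by
    have := hB (-s) (by simpa using hs)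
    simpa using this
  have hk' : ∀ s : ℝ, |s| ≤ t → |k (z + s • (-e)) - k z| ≤ η := fun s hs => by
    have := hk (-s) (by simpa using hs)
    simpa using this
  have ab : ∀ s ∈ Set.Icc 0 t, |s| ≤ t := fun x hx => by rw [abs_of_nonneg hx.1]; exact hx.2
  have t1 := taylor_lower (g := fun τ => w (z + τ • e) + w (z + τ • (-e)))
    (g' := fun τ => g (z + τ • e) + -g (z + τ • (-e)))
    (g'' := fun τ => k (z + τ • e) + k (z + τ • (-e))) (k := 2 * (k z - η)) ht
    (fun s hs => (hg z s (hB s (ab s hs))).1.add (hm z s (hB' s (ab s hs))).1)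
    (fun s hs => (hg z s (hB s (ab s hs))).2.add (hm z s (hB' s (ab s hs))).2)
    (fun s hs => by
      have := abs_le.1 (hk s (ab s hs)); have := abs_le.1 (hk' s (ab s hs)); linarith)
  have t2 := taylor_lower (g := fun τ => -(w (z + τ • e) + w (z + τ • (-e))))
    (g' := fun τ => -(g (z + τ • e) + -g (z + τ • (-e))))
    (g'' := fun τ => -(k (z + τ • e) + k (z + τ • (-e)))) (k := 2 * (-k z - η)) ht
    (fun s hs => ((hg z s (hB s (ab s hs))).1.add (hm z s (hB' s (ab s hs))).1).neg)
    (fun s hs => ((hg z s (hB s (ab s hs))).2.add (hm z s (hB' s (ab s hs))).2).neg)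
    (fun s hs => by
      have := abs_le.1 (hk s (ab s hs)); have := abs_le.1 (hk' s (ab s hs)); linarith)
  simp only [zero_smul, add_zero, smul_neg, ← sub_eq_add_neg, sub_zero] at t1 t2
  rw [abs_le]
  constructor <;> nlinarith

/-- The first coordinate vector. -/
abbrev ex : E2 := EuclideanSpace.single 0 1

/-- The second coordinate vector. -/
abbrev ey : E2 := EuclideanSpace.single 1 1

lemma norm_ex : ‖ex‖ = 1 := by simp
lemma norm_ey : ‖ey‖ = 1 := by simp

lemma decomp (x : E2) : x = x 0 • ex + x 1 • ey := by
  ext i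
  fin_cases i <;> simp

lemma coord_le (x : E2) (i : Fin 2) : |x i| ≤ ‖x‖ := by
  simpa using PiLp.norm_apply_le x i

set_option maxHeartbeats 1000000 in
/-- Hölder estimate for a pure second derivative `k` of `w` at two points `x, y`: compare `k` with
the second difference quotient of `w` at scale `ν ‖x - y‖` and apply the gradient estimate to that
quotient on squares of size `N ‖x - y‖`. -/
lemma near_est {α : ℝ} (hα : α ∈ Set.Ioo (0 : ℝ) 1) {w k a c : E2 → ℝ} {e x y : E2}
    {N ν H J : ℝ} (he : ‖e‖ ≤ 2) (hN : 1 ≤ N) (hν : 0 < ν) (hν1 : ν ≤ 1) (hH : 0 ≤ H) (hJ : 0 ≤ J)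
    {B : Set E2} (hxy : 0 < ‖x - y‖) (hB : Metric.ball x ((2 * N + 5) * ‖x - y‖) ⊆ B)
    (hk : DD B w e k) (ha : DD B w ex a) (hc : DD B w ey c) (hw : ContinuousOn w B)
    (hkH : ∀ p ∈ Metric.ball x ((2 * N + 5) * ‖x - y‖),
      ∀ p' ∈ Metric.ball x ((2 * N + 5) * ‖x - y‖), |k p - k p'| ≤ H * ‖p - p'‖ ^ α)
    (hacJ : ∀ p ∈ Metric.ball x ((2 * N + 5) * ‖x - y‖),
      ∀ p' ∈ Metric.ball x ((2 * N + 5) * ‖x - y‖),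
        |(a p + c p) - (a p' + c p')| ≤ J * ‖p - p'‖ ^ α) :
    |k x - k y| ≤ ‖x - y‖ ^ α *
      (4 * ν ^ α * H + 32 * H * (N ^ α / N) + 4 * J * N * (ν ^ α / ν ^ 2)) := by
  obtain ⟨hα0, hα1⟩ := hα
  set ρ := ‖x - y‖ with hρ
  set τ := ν * ρ with hτ
  have hτ0 : 0 < τ := by positivity
  have hτρ : τ ≤ ρ := by nlinarith
  set b0 := Metric.ball x ((2 * N + 5) * ρ) with hb0
  set b1 := Metric.closedBall x ((2 * N + 2) * ρ) with hb1
  have mem : ∀ z ∈ b1, ∀ s : ℝ, |s| ≤ τ → z + s • e ∈ b0 := by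
    intro z hz s hs
    rw [hb0, Metric.mem_ball, dist_eq_norm]
    rw [hb1, Metric.mem_closedBall, dist_eq_norm] at hz
    calc ‖z + s • e - x‖ = ‖(z - x) + s • e‖ := by congr 1; abel
      _ ≤ ‖z - x‖ + ‖s • e‖ := norm_add_le _ _
      _ ≤ (2 * N + 2) * ρ + τ * 2 := by
          rw [norm_smul, Real.norm_eq_abs]
          gcongr
      _ < (2 * N + 5) * ρ := by nlinarith
  have mem0 : ∀ z ∈ b1, z ∈ b0 := fun z hz => by
    simpa using mem z hz 0 (by simpa using hτ0.le)
  have memm : ∀ z ∈ b1, ∀ s : ℝ, |s| ≤ τ → z - s • e ∈ b0 := fun z hz s hs => by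
    have := mem z hz (-s) (by simpa using hs)
    simpa [sub_eq_add_neg] using this
  have hse : ∀ s : ℝ, |s| ≤ τ → ‖s • e‖ ^ α ≤ 2 * τ ^ α := by
    intro s hs
    have : ‖s • e‖ ≤ 2 * τ := by
      rw [norm_smul, Real.norm_eq_abs]; nlinarith [abs_nonneg s, norm_nonneg e]
    calc ‖s • e‖ ^ α ≤ (2 * τ) ^ α := Real.rpow_le_rpow (norm_nonneg _) this hα0.le
      _ = 2 ^ α * τ ^ α := Real.mul_rpow (by norm_num) hτ0.le
      _ ≤ 2 * τ ^ α := by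
          gcongr
          calc (2 : ℝ) ^ α ≤ 2 ^ (1 : ℝ) := Real.rpow_le_rpow_of_exponent_le (by norm_num) hα1.le
            _ = 2 := by simp
  have hττ : |τ| ≤ τ := by rw [abs_of_pos hτ0]
  set Q : E2 → ℝ := fun z => (τ ^ 2)⁻¹ * (w (z + τ • e) + w (z + (-τ) • e) + (-2) * w z) with hQ
  -- `Q` is close to `k`
  have hQk : ∀ z ∈ b1, |Q z - k z| ≤ 2 * τ ^ α * H := by
    intro z hz
    have := second_diff (η := 2 * τ ^ α * H) (t := τ) (z := z) hk hτ0.le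
      (fun s hs => hB (mem z hz s hs)) (fun s hs => by
        have := hkH _ (mem z hz s hs) _ (mem0 z hz)
        rw [add_sub_cancel_left] at this
        nlinarith [hse s hs])
    have e1 : Q z - k z = (τ ^ 2)⁻¹ *
        (w (z + τ • e) + w (z - τ • e) - 2 * w z - τ ^ 2 * k z) := by
      simp only [hQ, neg_smul, ← sub_eq_add_neg]
      field_simp
      ring
    rw [e1, abs_mul, abs_of_pos (by positivity), inv_mul_le_iff₀ (by positivity)]
    exact this
  have hQDD : ∀ (e' : E2) (l : E2 → ℝ), DD B w e' l → DD b1 Q e'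
      (fun z => (τ ^ 2)⁻¹ * (l (z + τ • e) + l (z + (-τ) • e) + (-2) * l z)) := by
    intro e' l hl
    refine DD.const_mul _ (((DD.mono (DD.translate (τ • e) hl) ?_).add
      (DD.mono (DD.translate ((-τ) • e) hl) ?_)).add ((DD.mono hl ?_).const_mul _))
    · exact fun z hz => hB (mem z hz _ hττ)
    · exact fun z hz => hB (mem z hz _ (by simpa using hττ))
    · exact fun z hz => hB (mem0 z hz)
  have hQc : ContinuousOn Q b1 := by
    refine continuousOn_const.mul (((hw.comp (f := fun z : E2 => z + τ • e)
      (Continuous.continuousOn (by fun_prop)) ?_).add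
      (hw.comp (f := fun z : E2 => z + (-τ) • e) (Continuous.continuousOn (by fun_prop)) ?_)).add
      (continuousOn_const.mul (hw.mono ?_)))
    · exact fun z hz => hB (mem z hz _ hττ)
    · exact fun z hz => hB (mem z hz _ (by simpa using hττ))
    · exact fun z hz => hB (mem0 z hz)
  have hρα : 0 ≤ ρ ^ α := by positivity
  have hNα : 1 ≤ N ^ α := Real.one_le_rpow hN hα0.le
  have hνα : ν ^ α ≤ 1 := Real.rpow_le_one hν.le hν1 hα0.le
  have hν0 : 0 ≤ ν ^ α := by positivity
  have hτα : τ ^ α = ν ^ α * ρ ^ α := Real.mul_rpow hν.le hxy.le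
  have hosc : ∀ z ∈ b1, |Q z - k x| ≤ 8 * H * N ^ α * ρ ^ α := by
    intro z hz
    have h1 := hQk z hz
    have hxb : x ∈ b0 := by rw [hb0]; exact Metric.mem_ball_self (by positivity)
    have h2 := hkH z (mem0 z hz) x hxb
    have h3 : ‖z - x‖ ^ α ≤ 4 * N ^ α * ρ ^ α := by
      rw [hb1, Metric.mem_closedBall, dist_eq_norm] at hz
      calc ‖z - x‖ ^ α ≤ (4 * N * ρ) ^ α :=
            Real.rpow_le_rpow (norm_nonneg _) (by nlinarith) hα0.le
        _ = 4 ^ α * N ^ α * ρ ^ α := by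
            rw [Real.mul_rpow (by positivity) hxy.le, Real.mul_rpow (by norm_num) (by positivity)]
        _ ≤ 4 * N ^ α * ρ ^ α := by
            gcongr
            calc (4 : ℝ) ^ α ≤ 4 ^ (1 : ℝ) :=
                  Real.rpow_le_rpow_of_exponent_le (by norm_num) hα1.le
              _ = 4 := by simp
    have h4 : |Q z - k x| ≤ |Q z - k z| + |k z - k x| := abs_sub_le _ _ _
    have h5 : 2 * τ ^ α * H ≤ 2 * H * (N ^ α * ρ ^ α) := by
      rw [hτα]
      have : ν ^ α * ρ ^ α ≤ N ^ α * ρ ^ α := by gcongr; linarith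
      nlinarith
    have h6 : H * ‖z - x‖ ^ α ≤ H * (4 * N ^ α * ρ ^ α) := by gcongr
    have h7 : 0 ≤ H * (N ^ α * ρ ^ α) := by positivity
    linarith
  set F := (τ ^ 2)⁻¹ * (4 * J * τ ^ α) with hF
  have hF0 : 0 ≤ F := by positivity
  have hlap : ∀ z ∈ b1, |(τ ^ 2)⁻¹ * (a (z + τ • e) + a (z + (-τ) • e) + (-2) * a z) +
      (τ ^ 2)⁻¹ * (c (z + τ • e) + c (z + (-τ) • e) + (-2) * c z)| ≤ F := by
    intro z hz
    have h1 := hacJ _ (mem z hz τ hττ) _ (mem0 z hz)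
    have h2 := hacJ _ (mem z hz (-τ) (by simpa using hττ)) _ (mem0 z hz)
    rw [add_sub_cancel_left] at h1 h2
    have h3 := hse τ hττ
    have h4 := hse (-τ) (by simpa using hττ)
    have h5 := mul_le_mul_of_nonneg_left h3 hJ
    have h6 := mul_le_mul_of_nonneg_left h4 hJ
    rw [← mul_add, abs_mul, abs_of_pos (by positivity), hF]
    gcongr
    rw [abs_le] at h1 h2 ⊢
    constructor <;> linarith
  have hlap' : ∀ z ∈ b1, |(τ ^ 2)⁻¹ * (c (z + τ • e) + c (z + (-τ) • e) + (-2) * c z) +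
      (τ ^ 2)⁻¹ * (a (z + τ • e) + a (z + (-τ) • e) + (-2) * a z)| ≤ F := by
    intro z hz
    rw [add_comm]
    exact hlap z hz
  have hNρ : 0 < N * ρ := by positivity
  -- the broken line from `x` to `y` with sides parallel to the axes
  set s1 := (y 0 - x 0) / 2 with hs1
  set s2 := (y 1 - x 1) / 2 with hs2
  have hs1' : |s1| ≤ ρ / 2 := by
    have := coord_le (y - x) 0
    rw [norm_sub_rev, ← hρ] at this
    rw [hs1, abs_div, abs_two]
    simp at this
    linarith
  have hs2' : |s2| ≤ ρ / 2 := by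
    have := coord_le (y - x) 1
    rw [norm_sub_rev, ← hρ] at this
    rw [hs2, abs_div, abs_two]
    simp at this
    linarith
  have hsq : ∀ (z : E2) (e1 e2 : E2), ‖z - x‖ ≤ 3 / 2 * ρ → ‖e1‖ = 1 → ‖e2‖ = 1 →
      ∀ s t : ℝ, |s| ≤ N * ρ → |t| ≤ N * ρ → z + s • e1 + t • e2 ∈ b1 := by
    intro z e1 e2 hz h1 h2 s t hs ht
    rw [hb1, Metric.mem_closedBall, dist_eq_norm]
    calc ‖z + s • e1 + t • e2 - x‖ = ‖(z - x) + s • e1 + t • e2‖ := by congr 1; abel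
      _ ≤ ‖z - x‖ + ‖s • e1‖ + ‖t • e2‖ := norm_add₃_le
      _ ≤ 3 / 2 * ρ + N * ρ + N * ρ := by
          rw [norm_smul, norm_smul, h1, h2, mul_one, mul_one, Real.norm_eq_abs, Real.norm_eq_abs]
          gcongr
      _ ≤ (2 * N + 2) * ρ := by nlinarith
  have hG : ∀ s : ℝ, |s| ≤ ρ / 2 →
      2 * |s| * (2 * (8 * H * N ^ α * ρ ^ α) / (N * ρ) + F * (N * ρ) / 2)
      ≤ ρ ^ α * (16 * H * (N ^ α / N) + 2 * J * N * (ν ^ α / ν ^ 2)) := by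
    intro s hs
    have h0 : 0 ≤ 2 * (8 * H * N ^ α * ρ ^ α) / (N * ρ) + F * (N * ρ) / 2 := by positivity
    have e1 : ρ * (2 * (8 * H * N ^ α * ρ ^ α) / (N * ρ) + F * (N * ρ) / 2)
      = ρ ^ α * (16 * H * (N ^ α / N) + 2 * J * N * (ν ^ α / ν ^ 2)) := by
      rw [hF, hτα, hτ]
      field_simp
      ring
    rw [← e1]
    gcongr
    linarith
  have n1 : ‖x + s1 • ex - x‖ ≤ 3 / 2 * ρ := by
    rw [add_sub_cancel_left, norm_smul, norm_ex, mul_one, Real.norm_eq_abs]; linarith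
  have n2 : ‖x + (2 * s1) • ex + s2 • ey - x‖ ≤ 3 / 2 * ρ := by
    have : x + (2 * s1) • ex + s2 • ey - x = (2 * s1) • ex + s2 • ey := by abel
    rw [this]
    refine (norm_add_le _ _).trans ?_
    rw [norm_smul, norm_ex, norm_smul, norm_ey, mul_one, mul_one, Real.norm_eq_abs,
      Real.norm_eq_abs, abs_mul, abs_two]
    linarith
  have hNρ2 : ρ / 2 ≤ N * ρ := by nlinarith
  have g1 := grad_est_abs (z := x + s1 • ex) hNρ hF0 (hsq _ ex ey n1 norm_ex norm_ey)
    (hQDD _ _ ha) (hQDD _ _ hc) hQc hosc hlap (hs1'.trans hNρ2)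
  have g2 := grad_est_abs (z := x + (2 * s1) • ex + s2 • ey) hNρ hF0
    (hsq _ ey ex n2 norm_ey norm_ex)
    (hQDD _ _ hc) (hQDD _ _ ha) hQc hosc hlap' (hs2'.trans hNρ2)
  have p1 : x + s1 • ex - s1 • ex = x := by abel
  have p2 : x + s1 • ex + s1 • ex = x + (2 * s1) • ex := by rw [two_mul, add_smul]; abel
  have p3 : x + (2 * s1) • ex + s2 • ey - s2 • ey = x + (2 * s1) • ex := by abel
  have p4 : x + (2 * s1) • ex + s2 • ey + s2 • ey = y := by
    ext i
    fin_cases i <;> simp [hs1, hs2]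
    all_goals ring
  rw [p1, p2] at g1
  rw [p3, p4] at g2
  have g1' := g1.trans (hG s1 hs1')
  have g2' := g2.trans (hG s2 hs2')
  have hxb : x ∈ b1 := Metric.mem_closedBall_self (by positivity)
  have hyb : y ∈ b1 := by
    rw [hb1, Metric.mem_closedBall, dist_comm, dist_eq_norm, ← hρ]; nlinarith
  have q1 := hQk x hxb
  have q2 := hQk y hyb
  rw [hτα] at q1 q2
  clear_value Q
  clear hG hsq hlap hlap' hosc hQk hQc hQDD hkH hacJ mem mem0 memm hse
  rw [abs_le] at g1' g2' q1 q2 ⊢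
  constructor <;> linarith

/-! ### Interior Schauder estimate for the Laplacian -/

/-- Total oscillation of the three second derivatives `a, c, q` between two points. -/
def osc (a c q : E2 → ℝ) (x y : E2) : ℝ := |a x - a y| + |c x - c y| + |q x - q y|

lemma osc_nonneg (a c q : E2 → ℝ) (x y : E2) : 0 ≤ osc a c q x y := by
  unfold osc; positivity

lemma exists_small_rpow {α η : ℝ} (hα : 0 < α) (hη : 0 < η) :
    ∃ ν : ℝ, 0 < ν ∧ ν ≤ 1 / 4 ∧ ν ^ α ≤ η := by
  refine ⟨min (1 / 4) (η ^ (1 / α)), by positivity, min_le_left _ _, ?_⟩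
  calc (min (1 / 4) (η ^ (1 / α))) ^ α ≤ (η ^ (1 / α)) ^ α :=
        Real.rpow_le_rpow (by positivity) (min_le_right _ _) hα.le
    _ = η := by rw [← Real.rpow_mul hη.le, one_div_mul_cancel hα.ne', Real.rpow_one]

lemma exists_large_rpow {α η : ℝ} (hα : α < 1) (hη : 0 < η) :
    ∃ N : ℝ, 1 ≤ N ∧ N ^ α / N ≤ η := by
  obtain ⟨ν, h0, h1, h2⟩ := exists_small_rpow (sub_pos.2 hα) hη
  refine ⟨ν⁻¹, (one_le_inv₀ h0).2 (by linarith), ?_⟩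
  rw [Real.inv_rpow h0.le, div_inv_eq_mul]
  rw [Real.rpow_sub h0, Real.rpow_one] at h2
  rwa [mul_comm, ← div_eq_mul_inv]

/-- `M` bounds the interior weighted Hölder seminorm of `a, c, q` on the ball `B_r(p₀)`. -/
def Adm (α r : ℝ) (p0 : E2) (a c q : E2 → ℝ) (M : ℝ) : Prop :=
  0 ≤ M ∧ ∀ x ∈ Metric.ball p0 r, ∀ y ∈ Metric.ball p0 r, ∀ d : ℝ, 0 < d → d ≤ r - ‖x - p0‖ →
    d ≤ r - ‖y - p0‖ → d ^ 2 * d ^ α * osc a c q x y ≤ M * ‖x - y‖ ^ α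

lemma two_rpow_le {α : ℝ} (hα1 : α < 1) : (2 : ℝ) ^ α ≤ 2 := by
  calc (2 : ℝ) ^ α ≤ 2 ^ (1 : ℝ) := Real.rpow_le_rpow_of_exponent_le (by norm_num) hα1.le
    _ = 2 := by simp

/-- Interpolation: second derivatives are controlled by the sup of `w` and their own weighted
Hölder seminorm, the latter with a small factor. -/
lemma interp {α : ℝ} (hα : α ∈ Set.Ioo (0 : ℝ) 1) {r m M lam : ℝ} {p0 : E2} {w a c q k : E2 → ℝ}
    {e : E2} (he : ‖e‖ ≤ 2) (hk : DD (Metric.ball p0 r) w e k)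
    (hm : ∀ x ∈ Metric.ball p0 r, |w x| ≤ m) (hM : Adm α r p0 a c q M)
    (hkosc : ∀ x y, |k x - k y| ≤ osc a c q x y) (hl : 0 < lam) (hl1 : lam ≤ 1 / 4)
    {z : E2} {d : ℝ} (hd : 0 < d) (hdz : d ≤ r - ‖z - p0‖) :
    d ^ 2 * |k z| ≤ 4 * m / lam ^ 2 + 16 * lam ^ α * M := by
  obtain ⟨hα0, hα1⟩ := hα
  have hz : z ∈ Metric.ball p0 r := by
    rw [Metric.mem_ball, dist_eq_norm]; linarith
  set t := lam * d with ht
  have ht0 : 0 < t := by positivity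
  have hnorm : ∀ s : ℝ, |s| ≤ t → ‖s • e‖ ≤ 2 * t := fun s hs => by
    rw [norm_smul, Real.norm_eq_abs]; nlinarith [abs_nonneg s, norm_nonneg e]
  have hdist : ∀ s : ℝ, |s| ≤ t → d / 2 ≤ r - ‖z + s • e - p0‖ := fun s hs => by
    have h1 : ‖z + s • e - p0‖ ≤ ‖z - p0‖ + ‖s • e‖ := by
      rw [add_sub_right_comm]; exact norm_add_le _ _
    have := hnorm s hs
    have : 2 * t ≤ d / 2 := by rw [ht]; nlinarith
    linarith
  have hmem : ∀ s : ℝ, |s| ≤ t → z + s • e ∈ Metric.ball p0 r := fun s hs => by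
    have := hdist s hs
    rw [Metric.mem_ball, dist_eq_norm]; linarith
  have hdα : 0 < d ^ α := by positivity
  have hmain := second_diff (t := t) (z := z) (η := 16 * lam ^ α * M / d ^ 2) hk ht0.le hmem
    (fun s hs => by
      refine (hkosc _ _).trans ?_
      have h1 := hM.2 _ (hmem s hs) z hz (d / 2) (by positivity) (hdist s hs) (by linarith)
      have h2 : ‖z + s • e - z‖ ^ α ≤ 2 ^ α * (lam ^ α * d ^ α) := by
        rw [add_sub_cancel_left, ← Real.mul_rpow hl.le hd.le,
          ← Real.mul_rpow (by norm_num) (by positivity)]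
        exact Real.rpow_le_rpow (norm_nonneg _) (hnorm s hs) hα0.le
      have h3 := h1.trans (mul_le_mul_of_nonneg_left h2 hM.1)
      rw [Real.div_rpow hd.le (by norm_num)] at h3
      rw [le_div_iff₀ (by positivity)]
      have h4 := two_rpow_le hα1
      have h5 : (0 : ℝ) < 2 ^ α := by positivity
      have h6 : (d / 2) ^ 2 * (d ^ α / 2 ^ α) * osc a c q (z + s • e) z
        = d ^ α * (osc a c q (z + s • e) z * d ^ 2) / (4 * 2 ^ α) := by field_simp; ring
      rw [h6, div_le_iff₀ (by positivity)] at h3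
      have h7 : M * (2 ^ α * (lam ^ α * d ^ α)) * (4 * 2 ^ α)
        = d ^ α * (4 * (2 ^ α * 2 ^ α) * (lam ^ α * M)) := by ring
      rw [h7] at h3
      have h8 := le_of_mul_le_mul_left h3 hdα
      have h9 : (2 : ℝ) ^ α * 2 ^ α ≤ 4 := by nlinarith
      have h10 : 0 ≤ lam ^ α * M := mul_nonneg (by positivity) hM.1
      nlinarith)
  have w1 := hm _ (hmem t (by rw [abs_of_pos ht0]))
  have w2 := hm _ (hmem (-t) (by rw [abs_neg, abs_of_pos ht0]))
  rw [neg_smul, ← sub_eq_add_neg] at w2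
  have w3 := hm _ hz
  have hfin : t ^ 2 * |k z| ≤ 4 * m + t ^ 2 * (16 * lam ^ α * M / d ^ 2) := by
    rw [← abs_of_nonneg (sq_nonneg t), ← abs_mul, abs_of_nonneg (sq_nonneg t)]
    rw [abs_le] at hmain w1 w2 w3 ⊢
    constructor <;> linarith
  have e1 : t ^ 2 * (16 * lam ^ α * M / d ^ 2) = lam ^ 2 * (16 * lam ^ α * M) := by
    rw [ht]; field_simp
  rw [e1, ht] at hfin
  have h11 : lam ^ 2 * (d ^ 2 * |k z|) ≤ lam ^ 2 * (4 * m / lam ^ 2 + 16 * lam ^ α * M) := by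
    have : lam ^ 2 * (4 * m / lam ^ 2 + 16 * lam ^ α * M)
      = 4 * m + lam ^ 2 * (16 * lam ^ α * M) := by field_simp
    rw [this]; nlinarith
  exact le_of_mul_le_mul_left h11 (by positivity)

/-- Absorption: iterating the improvement `M ↦ M / 2 + X` leads to its fixed point `2 * X`. -/
lemma le_of_halving {P : ℝ → Prop} {X M0 : ℝ} (h0 : P M0) (hstep : ∀ M, P M → P (M / 2 + X))
    {s b : ℝ} (hP : ∀ M, P M → s ≤ M * b) : s ≤ 2 * X * b := by
  have hn : ∀ n : ℕ, P (2 * X + (M0 - 2 * X) * (1 / 2) ^ n) := by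
    intro n
    induction n with
    | zero => simpa using h0
    | succ n ih =>
      have := hstep _ ih
      have e : (2 * X + (M0 - 2 * X) * (1 / 2) ^ n) / 2 + X
        = 2 * X + (M0 - 2 * X) * (1 / 2) ^ (n + 1) := by ring
      rwa [e] at this
  have hlim : Filter.Tendsto (fun n : ℕ => (2 * X + (M0 - 2 * X) * (1 / 2) ^ n) * b) Filter.atTop
      (nhds ((2 * X + (M0 - 2 * X) * 0) * b)) :=
    ((tendsto_pow_atTop_nhds_zero_of_lt_one (by norm_num) (by norm_num)).const_mul _
      |>.const_add _).mul_const _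
  have := ge_of_tendsto' hlim fun n => hP _ (hn n)
  simpa using this

set_option maxHeartbeats 1000000 in
/-- Absorption step of the interior Schauder estimate, with explicit parameters. -/
lemma adm_step {α : ℝ} (hα : α ∈ Set.Ioo (0 : ℝ) 1) {ν N lam δ : ℝ} (hν : 0 < ν) (hν1 : ν ≤ 1)
    (hν2 : 96 * ν ^ α ≤ 1 / 6) (hN : 1 ≤ N) (hN2 : 768 * (N ^ α / N) ≤ 1 / 6) (hδ : 0 ≤ δ)
    (hδ2 : 96 * N * (ν ^ α / ν ^ 2) * δ ≤ 1 / 6) (hl : 0 < lam) (hl1 : lam ≤ 1 / 4)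
    (hl2 : 96 * lam ^ α ≤ (1 / (2 * (2 * N + 5))) ^ α / 2)
    {r m K M : ℝ} {p0 : E2} {w a c q : E2 → ℝ} (hm0 : 0 ≤ m) (hK : 0 ≤ K) (hr : 0 < r)
    (ha : DD (Metric.ball p0 r) w ex a) (hc : DD (Metric.ball p0 r) w ey c)
    (hq : DD (Metric.ball p0 r) w (ex + ey) q) (hw : ContinuousOn w (Metric.ball p0 r))
    (hm : ∀ x ∈ Metric.ball p0 r, |w x| ≤ m)
    (hlap : ∀ x ∈ Metric.ball p0 r, ∀ y ∈ Metric.ball p0 r,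
      |(a x + c x) - (a y + c y)| ≤ K * ‖x - y‖ ^ α + δ * osc a c q x y)
    (hM : Adm α r p0 a c q M) :
    Adm α r p0 a c q (M / 2 + (24 / (lam ^ 2 * (1 / (2 * (2 * N + 5))) ^ α)
      + 12 * N * (ν ^ α / ν ^ 2)) * (m + K * (r ^ 2 * r ^ α))) := by
  have hα' := hα
  obtain ⟨hα0, hα1⟩ := hα
  set μ := 1 / (2 * (2 * N + 5)) with hμ
  have hμ0 : 0 < μ := by positivity
  have hM0 := hM.1
  have hX0 : 0 ≤ m + K * (r ^ 2 * r ^ α) := by positivity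
  have hexy : ‖ex + ey‖ ≤ 2 := by
    refine (norm_add_le _ _).trans ?_
    rw [norm_ex, norm_ey]; norm_num
  have ka : ∀ x y, |a x - a y| ≤ osc a c q x y := fun x y => by
    unfold osc; linarith [abs_nonneg (a x - a y), abs_nonneg (c x - c y), abs_nonneg (q x - q y)]
  have kc : ∀ x y, |c x - c y| ≤ osc a c q x y := fun x y => by
    unfold osc; linarith [abs_nonneg (a x - a y), abs_nonneg (c x - c y), abs_nonneg (q x - q y)]
  have kq : ∀ x y, |q x - q y| ≤ osc a c q x y := fun x y => by
    unfold osc; linarith [abs_nonneg (a x - a y), abs_nonneg (c x - c y), abs_nonneg (q x - q y)]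
  refine ⟨by positivity, fun x hx y hy d hd hdx hdy => ?_⟩
  have hdα : 0 < d ^ α := by positivity
  have c1 : 0 ≤ 24 / (lam ^ 2 * μ ^ α) := by positivity
  have c2 : 0 ≤ 12 * N * (ν ^ α / ν ^ 2) := by positivity
  have hKr : 0 ≤ K * (r ^ 2 * r ^ α) := by positivity
  rcases eq_or_ne x y with rfl | hxy
  · have : osc a c q x x = 0 := by simp [osc]
    rw [this, mul_zero]; positivity
  have hρ : 0 < ‖x - y‖ := norm_pos_iff.2 (sub_ne_zero.2 hxy)
  set ρ := ‖x - y‖ with hρdef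
  have hρα : 0 < ρ ^ α := by positivity
  rcases le_or_gt (μ * d) ρ with hfar | hnear
  · -- distant points: interpolate at both ends
    have i1 := interp hα' (by rw [norm_ex]; norm_num) ha hm hM ka hl hl1 hd hdx
    have i2 := interp hα' (by rw [norm_ey]; norm_num) hc hm hM kc hl hl1 hd hdx
    have i3 := interp hα' hexy hq hm hM kq hl hl1 hd hdx
    have j1 := interp hα' (by rw [norm_ex]; norm_num) ha hm hM ka hl hl1 hd hdy
    have j2 := interp hα' (by rw [norm_ey]; norm_num) hc hm hM kc hl hl1 hd hdy
    have j3 := interp hα' hexy hq hm hM kq hl hl1 hd hdy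
    have ho : osc a c q x y ≤ |a x| + |a y| + (|c x| + |c y|) + (|q x| + |q y|) := by
      unfold osc
      gcongr <;> exact abs_sub _ _
    have h1 : d ^ 2 * osc a c q x y ≤ 6 * (4 * m / lam ^ 2 + 16 * lam ^ α * M) := by
      have := mul_le_mul_of_nonneg_left ho (sq_nonneg d)
      linarith
    have h2 : μ ^ α * d ^ α ≤ ρ ^ α := by
      rw [← Real.mul_rpow hμ0.le hd.le]
      exact Real.rpow_le_rpow (by positivity) hfar hα0.le
    have hμα : 0 < μ ^ α := by positivity
    have h3 : μ ^ α * (d ^ 2 * d ^ α * osc a c q x y) ≤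
        ρ ^ α * (6 * (4 * m / lam ^ 2 + 16 * lam ^ α * M)) := by
      calc μ ^ α * (d ^ 2 * d ^ α * osc a c q x y)
          = (μ ^ α * d ^ α) * (d ^ 2 * osc a c q x y) := by ring
        _ ≤ _ := mul_le_mul h2 h1 (mul_nonneg (sq_nonneg d) (osc_nonneg _ _ _ _ _)) hρα.le
    have h4 : ρ ^ α * (6 * (4 * m / lam ^ 2 + 16 * lam ^ α * M)) ≤
        μ ^ α * ((M / 2 + 24 / (lam ^ 2 * μ ^ α) * m) * ρ ^ α) := by
      have e : μ ^ α * ((M / 2 + 24 / (lam ^ 2 * μ ^ α) * m) * ρ ^ α)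
        = ρ ^ α * (24 * m / lam ^ 2 + μ ^ α / 2 * M) := by field_simp; ring
      rw [e]
      refine mul_le_mul_of_nonneg_left ?_ hρα.le
      have := mul_le_mul_of_nonneg_right hl2 hM0
      have e2 : 6 * (4 * m / lam ^ 2) = 24 * m / lam ^ 2 := by ring
      linarith
    refine (le_of_mul_le_mul_left (h3.trans h4) hμα).trans ?_
    have g1 : 24 / (lam ^ 2 * μ ^ α) * m ≤ (24 / (lam ^ 2 * μ ^ α)
        + 12 * N * (ν ^ α / ν ^ 2)) * (m + K * (r ^ 2 * r ^ α)) :=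
      mul_le_mul (by linarith) (by linarith) hm0 (by linarith)
    exact mul_le_mul_of_nonneg_right (by linarith) hρα.le
  · -- nearby points: `near_est` on a ball where the weights are comparable to `d`
    have hbig : (2 * N + 5) * ρ ≤ d / 2 := by
      have : (2 * N + 5) * (μ * d) = d / 2 := by rw [hμ]; field_simp
      have : (2 * N + 5) * ρ ≤ (2 * N + 5) * (μ * d) := by gcongr
      linarith
    have hw2 : ∀ p ∈ Metric.ball x ((2 * N + 5) * ρ), d / 2 ≤ r - ‖p - p0‖ := by
      intro p hp
      rw [Metric.mem_ball, dist_eq_norm] at hp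
      have : ‖p - p0‖ ≤ ‖p - x‖ + ‖x - p0‖ := norm_sub_le_norm_sub_add_norm_sub _ _ _
      linarith
    have hsub : Metric.ball x ((2 * N + 5) * ρ) ⊆ Metric.ball p0 r := by
      intro p hp
      have := hw2 p hp
      rw [Metric.mem_ball, dist_eq_norm]; linarith
    set H := 8 * M / (d ^ 2 * d ^ α) with hH
    have hH0 : 0 ≤ H := by positivity
    have hosc : ∀ p ∈ Metric.ball x ((2 * N + 5) * ρ), ∀ p' ∈ Metric.ball x ((2 * N + 5) * ρ),
        osc a c q p p' ≤ H * ‖p - p'‖ ^ α := by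
      intro p hp p' hp'
      have h1 := hM.2 p (hsub hp) p' (hsub hp') (d / 2) (by positivity) (hw2 p hp) (hw2 p' hp')
      rw [Real.div_rpow hd.le (by norm_num)] at h1
      have h4 := two_rpow_le hα1
      have h5 : (0 : ℝ) < 2 ^ α := by positivity
      have h6 : (d / 2) ^ 2 * (d ^ α / 2 ^ α) * osc a c q p p'
        = (d ^ 2 * d ^ α) * osc a c q p p' / (4 * 2 ^ α) := by field_simp; ring
      rw [h6, div_le_iff₀ (by positivity)] at h1
      have h7 : 0 ≤ M * ‖p - p'‖ ^ α := by positivity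
      rw [hH, div_mul_eq_mul_div, le_div_iff₀ (by positivity)]
      nlinarith
    set J := K + δ * H with hJ
    have hJ0 : 0 ≤ J := by positivity
    have hac : ∀ p ∈ Metric.ball x ((2 * N + 5) * ρ), ∀ p' ∈ Metric.ball x ((2 * N + 5) * ρ),
        |(a p + c p) - (a p' + c p')| ≤ J * ‖p - p'‖ ^ α := by
      intro p hp p' hp'
      refine (hlap p (hsub hp) p' (hsub hp')).trans ?_
      have := mul_le_mul_of_nonneg_left (hosc p hp p' hp') hδ
      rw [hJ]; linarith
    have n1 := near_est hα' (by rw [norm_ex]; norm_num) hN hν hν1 hH0 hJ0 hρ hsub ha ha hc hw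
      (fun p hp p' hp' => (ka p p').trans (hosc p hp p' hp')) hac
    have n2 := near_est hα' (by rw [norm_ey]; norm_num) hN hν hν1 hH0 hJ0 hρ hsub hc ha hc hw
      (fun p hp p' hp' => (kc p p').trans (hosc p hp p' hp')) hac
    have n3 := near_est hα' hexy hN hν hν1 hH0 hJ0 hρ hsub hq ha hc hw
      (fun p hp p' hp' => (kq p p').trans (hosc p hp p' hp')) hac
    have ho : osc a c q x y ≤ 3 * (ρ ^ α *
      (4 * ν ^ α * H + 32 * H * (N ^ α / N) + 4 * J * N * (ν ^ α / ν ^ 2))) := by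
      unfold osc; linarith
    have hdr : d ^ 2 * d ^ α ≤ r ^ 2 * r ^ α := by
      have : d ≤ r := by linarith [norm_nonneg (x - p0)]
      have : d ^ α ≤ r ^ α := Real.rpow_le_rpow hd.le this hα0.le
      gcongr
    have hdH : d ^ 2 * d ^ α * H = 8 * M := by rw [hH]; field_simp
    have hdJ : d ^ 2 * d ^ α * J ≤ K * (r ^ 2 * r ^ α) + δ * (8 * M) := by
      have e : d ^ 2 * d ^ α * J = K * (d ^ 2 * d ^ α) + δ * (d ^ 2 * d ^ α * H) := by
        rw [hJ]; ring
      rw [e, hdH]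
      gcongr
    have hn : 0 ≤ N * (ν ^ α / ν ^ 2) := by positivity
    have h1 : d ^ 2 * d ^ α * osc a c q x y ≤ ρ ^ α * (3 * (4 * ν ^ α * (8 * M)
        + 32 * (8 * M) * (N ^ α / N) + 4 * (K * (r ^ 2 * r ^ α) + δ * (8 * M)) *
          (N * (ν ^ α / ν ^ 2)))) := by
      have := mul_le_mul_of_nonneg_left ho (by positivity : 0 ≤ d ^ 2 * d ^ α)
      refine this.trans ?_
      have e : d ^ 2 * d ^ α * (3 * (ρ ^ α *
        (4 * ν ^ α * H + 32 * H * (N ^ α / N) + 4 * J * N * (ν ^ α / ν ^ 2))))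
        = ρ ^ α * (3 * (4 * ν ^ α * (d ^ 2 * d ^ α * H) + 32 * (d ^ 2 * d ^ α * H) * (N ^ α / N)
          + 4 * (d ^ 2 * d ^ α * J) * (N * (ν ^ α / ν ^ 2)))) := by ring
      rw [e, hdH]
      gcongr
    refine h1.trans ?_
    rw [mul_comm (M / 2 + _)]
    gcongr
    have k1 := mul_le_mul_of_nonneg_right hν2 hM0
    have k2 := mul_le_mul_of_nonneg_right hN2 hM0
    have k3 := mul_le_mul_of_nonneg_right hδ2 hM0
    have k4 : 0 ≤ 12 * N * (ν ^ α / ν ^ 2) * m := by positivity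
    have k5 : 0 ≤ 24 / (lam ^ 2 * μ ^ α) * (m + K * (r ^ 2 * r ^ α)) := by positivity
    linarith

/-- Interior Schauder estimate for the Laplacian on `B_r(p₀)` where the oscillation of the
right-hand side may contain a small multiple of the oscillation of the Hessian. -/
lemma schauder {α : ℝ} (hα : α ∈ Set.Ioo (0 : ℝ) 1) : ∃ δ > 0, ∃ C > 0,
    ∀ (p0 : E2) (r m K : ℝ) (w a c q : E2 → ℝ), 0 < r → 0 ≤ m → 0 ≤ K →
    DD (Metric.ball p0 r) w ex a → DD (Metric.ball p0 r) w ey c →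
    DD (Metric.ball p0 r) w (ex + ey) q → ContinuousOn w (Metric.ball p0 r) →
    (∀ x ∈ Metric.ball p0 r, |w x| ≤ m) →
    (∃ L, ∀ x ∈ Metric.ball p0 r, ∀ y ∈ Metric.ball p0 r, osc a c q x y ≤ L * ‖x - y‖ ^ α) →
    (∀ x ∈ Metric.ball p0 r, ∀ y ∈ Metric.ball p0 r,
      |(a x + c x) - (a y + c y)| ≤ K * ‖x - y‖ ^ α + δ * osc a c q x y) →
    ∀ x ∈ Metric.ball p0 (r / 2),
      r ^ 2 * (|a x| + |c x| + |q x|) ≤ C * (m + K * (r ^ 2 * r ^ α)) ∧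
      ∀ y ∈ Metric.ball p0 (r / 2),
        r ^ 2 * r ^ α * osc a c q x y ≤ C * (m + K * (r ^ 2 * r ^ α)) * ‖x - y‖ ^ α := by
  have hα' := hα
  obtain ⟨hα0, hα1⟩ := hα
  obtain ⟨ν, hν, hν1, hν2⟩ := exists_small_rpow hα0 (show (0 : ℝ) < 1 / 576 by norm_num)
  obtain ⟨N, hN, hN2⟩ := exists_large_rpow hα1 (show (0 : ℝ) < 1 / 4608 by norm_num)
  obtain ⟨lam, hl, hl1, hl2⟩ := exists_small_rpow hα0
    (show (0 : ℝ) < (1 / (2 * (2 * N + 5))) ^ α / 192 by positivity)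
  have hq0 : 0 < N * (ν ^ α / ν ^ 2) := by positivity
  set C0 := 24 / (lam ^ 2 * (1 / (2 * (2 * N + 5))) ^ α) + 12 * N * (ν ^ α / ν ^ 2) with hC0
  have hC00 : 0 < C0 := by positivity
  refine ⟨1 / (576 * (N * (ν ^ α / ν ^ 2))), by positivity, 1000 + 1000 * C0, by positivity, ?_⟩
  intro p0 r m K w a c q hr hm0 hK ha hc hq hw hm hL hlap
  set X := m + K * (r ^ 2 * r ^ α) with hX
  have hKr : 0 ≤ K * (r ^ 2 * r ^ α) := by positivity
  have hX0 : 0 ≤ X := by positivity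
  have step : ∀ M, Adm α r p0 a c q M → Adm α r p0 a c q (M / 2 + C0 * X) := fun M hM =>
    adm_step hα' hν (by linarith) (by linarith) hN (by linarith) (by positivity)
      (by field_simp; norm_num) hl hl1 (by linarith) hm0 hK hr ha hc hq hw hm hlap hM
  have h0 : ∃ M0, Adm α r p0 a c q M0 := by
    obtain ⟨L, hL⟩ := hL
    refine ⟨r ^ 2 * r ^ α * |L|, by positivity, fun x hx y hy d hd hdx hdy => ?_⟩
    have h1 := hL x hx y hy
    have hdr : d ^ 2 * d ^ α ≤ r ^ 2 * r ^ α := by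
      have : d ≤ r := by linarith [norm_nonneg (x - p0)]
      have : d ^ α ≤ r ^ α := Real.rpow_le_rpow hd.le this hα0.le
      gcongr
    rw [mul_assoc (r ^ 2 * r ^ α)]
    refine mul_le_mul hdr (h1.trans ?_) (osc_nonneg _ _ _ _ _) (by positivity)
    gcongr
    exact le_abs_self L
  obtain ⟨M0, hM0⟩ := h0
  have hfin : Adm α r p0 a c q (2 * (C0 * X)) :=
    ⟨by positivity, fun x hx y hy d hd hdx hdy =>
      le_of_halving hM0 step fun M hM => hM.2 x hx y hy d hd hdx hdy⟩
  have hexy : ‖ex + ey‖ ≤ 2 := by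
    refine (norm_add_le _ _).trans ?_
    rw [norm_ex, norm_ey]; norm_num
  have ka : ∀ x y, |a x - a y| ≤ osc a c q x y := fun x y => by
    unfold osc; linarith [abs_nonneg (a x - a y), abs_nonneg (c x - c y), abs_nonneg (q x - q y)]
  have kc : ∀ x y, |c x - c y| ≤ osc a c q x y := fun x y => by
    unfold osc; linarith [abs_nonneg (a x - a y), abs_nonneg (c x - c y), abs_nonneg (q x - q y)]
  have kq : ∀ x y, |q x - q y| ≤ osc a c q x y := fun x y => by
    unfold osc; linarith [abs_nonneg (a x - a y), abs_nonneg (c x - c y), abs_nonneg (q x - q y)]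
  have hC0X : 0 ≤ C0 * X := by positivity
  have hw2 : ∀ x ∈ Metric.ball p0 (r / 2), r / 2 ≤ r - ‖x - p0‖ := fun x hx => by
    rw [Metric.mem_ball, dist_eq_norm] at hx; linarith
  have hmX : m ≤ X := by linarith
  intro x hx
  refine ⟨?_, fun y hy => ?_⟩
  · have hlα : (1 / 4 : ℝ) ^ α ≤ 1 := Real.rpow_le_one (by norm_num) (by norm_num) hα0.le
    have i1 := interp hα' (by rw [norm_ex]; norm_num) ha hm hfin ka (lam := 1 / 4) (by norm_num)
      le_rfl (half_pos hr) (hw2 x hx)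
    have i2 := interp hα' (by rw [norm_ey]; norm_num) hc hm hfin kc (lam := 1 / 4) (by norm_num)
      le_rfl (half_pos hr) (hw2 x hx)
    have i3 := interp hα' hexy hq hm hfin kq (lam := 1 / 4) (by norm_num)
      le_rfl (half_pos hr) (hw2 x hx)
    have h5 : (1 / 4 : ℝ) ^ α * (2 * (C0 * X)) ≤ 2 * (C0 * X) :=
      mul_le_of_le_one_left (by positivity) hlα
    have e1 : ∀ t : ℝ, (r / 2) ^ 2 * t = r ^ 2 * t / 4 := fun t => by ring
    rw [e1] at i1 i2 i3
    rw [mul_assoc 16] at i1 i2 i3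
    norm_num at i1 i2 i3 h5
    linarith
  · have hsub : Metric.ball p0 (r / 2) ⊆ Metric.ball p0 r :=
      Metric.ball_subset_ball (by linarith)
    have h1 := hfin.2 x (hsub hx) y (hsub hy) (r / 2) (by positivity) (hw2 x hx) (hw2 y hy)
    rw [Real.div_rpow hr.le (by norm_num)] at h1
    have h4 := two_rpow_le hα1
    have h5 : (0 : ℝ) < 2 ^ α := by positivity
    have h6 : (r / 2) ^ 2 * (r ^ α / 2 ^ α) * osc a c q x y
      = (r ^ 2 * r ^ α) * osc a c q x y / (4 * 2 ^ α) := by field_simp; ring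
    rw [h6, div_le_iff₀ (by positivity)] at h1
    refine h1.trans ?_
    have h7 : 0 ≤ ‖x - y‖ ^ α := by positivity
    have h8 : 2 * (C0 * X) * (4 * 2 ^ α) ≤ (1000 + 1000 * C0) * X := by nlinarith
    calc 2 * (C0 * X) * ‖x - y‖ ^ α * (4 * 2 ^ α)
        = 2 * (C0 * X) * (4 * 2 ^ α) * ‖x - y‖ ^ α := by ring
      _ ≤ _ := mul_le_mul_of_nonneg_right h8 h7

/-! ### Algebra of the phase equation -/

/-- The phase equation in polynomial form, together with the lower bound on the smaller
eigenvalue that it forces. -/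
lemma phase_alg {M : Matrix (Fin 2) (Fin 2) ℝ} {Θ : ℝ} (hΘ : Θ ∈ Set.Ioo 0 π)
    (hM : Phase M = Θ) :
    (M 0 0 + M 1 1) * cos Θ + (M 0 0 * M 1 1 - M 0 1 ^ 2 - 1) * sin Θ = 0 ∧
    ∀ h1 h2 : ℝ, -(cos Θ / sin Θ) * (h1 ^ 2 + h2 ^ 2) ≤
      M 0 0 * h1 ^ 2 + 2 * M 0 1 * h1 * h2 + M 1 1 * h2 ^ 2 := by
  set S := Real.sqrt ((M 0 0 - M 1 1) ^ 2 + 4 * M 0 1 ^ 2) with hS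
  have hSS : S ^ 2 = (M 0 0 - M 1 1) ^ 2 + 4 * M 0 1 ^ 2 := Real.sq_sqrt (by positivity)
  have hS0 : 0 ≤ S := Real.sqrt_nonneg _
  have l1 : lam1 M = ((M 0 0 + M 1 1) - S) / 2 := rfl
  have l2 : lam2 M = ((M 0 0 + M 1 1) + S) / 2 := rfl
  set a := lam1 M
  set b := lam2 M
  have hab : Real.arctan a + Real.arctan b = Θ := hM
  have hsum : M 0 0 + M 1 1 = a + b := by rw [l1, l2]; ring
  have hprod : M 0 0 * M 1 1 - M 0 1 ^ 2 = a * b := by rw [l1, l2]; linarith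
  constructor
  · rw [hsum, hprod, ← hab, Real.cos_add, Real.sin_add]
    have ca := (Real.cos_arctan_pos a).ne'
    have cb := (Real.cos_arctan_pos b).ne'
    have ha : sin (Real.arctan a) = a * cos (Real.arctan a) := by
      have := Real.tan_arctan a
      rw [Real.tan_eq_sin_div_cos, div_eq_iff ca] at this
      exact this
    have hb : sin (Real.arctan b) = b * cos (Real.arctan b) := by
      have := Real.tan_arctan b
      rw [Real.tan_eq_sin_div_cos, div_eq_iff cb] at this
      exact this
    rw [ha, hb]; ring
  · have hlow : -(cos Θ / sin Θ) ≤ a := by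
      by_contra! hlt
      have htan : Real.tan (Θ - π / 2) = -(cos Θ / sin Θ) := by
        rw [Real.tan_eq_sin_div_cos, Real.sin_sub_pi_div_two, Real.cos_sub_pi_div_two, neg_div]
      have h1 := Real.arctan_strictMono hlt
      rw [← htan, Real.arctan_tan (by linarith [hΘ.1]) (by linarith [hΘ.2])] at h1
      linarith [Real.arctan_lt_pi_div_two b]
    intro h1 h2
    have hA : 0 ≤ M 0 0 - a := by
      have : |M 0 0 - M 1 1| ≤ S := Real.abs_le_sqrt (by nlinarith [sq_nonneg (M 0 1)])
      linarith [neg_abs_le (M 0 0 - M 1 1)]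
    have hB : 0 ≤ M 1 1 - a := by
      have : |M 0 0 - M 1 1| ≤ S := Real.abs_le_sqrt (by nlinarith [sq_nonneg (M 0 1)])
      linarith [le_abs_self (M 0 0 - M 1 1)]
    have hAB : (M 0 0 - a) * (M 1 1 - a) = M 0 1 ^ 2 := by rw [l1]; linarith
    have key : 0 ≤ (M 0 0 - a) * h1 ^ 2 + 2 * M 0 1 * h1 * h2 + (M 1 1 - a) * h2 ^ 2 := by
      rcases hA.eq_or_lt with h0 | hpos
      · have : M 0 1 = 0 := by rw [← h0, zero_mul] at hAB; exact pow_eq_zero_iff (two_ne_zero) |>.1 hAB.symm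
        rw [← h0, this]
        have := mul_nonneg hB (sq_nonneg h2)
        linarith
      · refine nonneg_of_mul_nonneg_right (a := M 0 0 - a) ?_ hpos
        have : (M 0 0 - a) * ((M 0 0 - a) * h1 ^ 2 + 2 * M 0 1 * h1 * h2 + (M 1 1 - a) * h2 ^ 2)
          = ((M 0 0 - a) * h1 + M 0 1 * h2) ^ 2 + ((M 0 0 - a) * (M 1 1 - a) - M 0 1 ^ 2) * h2 ^ 2 := by
          ring
        rw [this, hAB]
        nlinarith [sq_nonneg ((M 0 0 - a) * h1 + M 0 1 * h2)]
    have := mul_le_mul_of_nonneg_right hlow (add_nonneg (sq_nonneg h1) (sq_nonneg h2))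
    linarith

/-- The rotation constant `cot (θ / 2)`: adding `kap θ * |x|² / 2` to a solution of phase close to
`θ` makes it uniformly convex. -/
def kap (θ : ℝ) : ℝ := cos (θ / 2) / sin (θ / 2)

/-- Rotated equation for the inverse `P` of `N = M + kap θ`: its trace is almost constant. -/
lemma inv_trace {θ f m11 m12 m22 p11 p12 p22 : ℝ} (hθ : 0 < sin (θ / 2))
    (hphase : (m11 + m22) * cos (θ + f) + (m11 * m22 - m12 ^ 2 - 1) * sin (θ + f) = 0)
    (h1 : (m11 + kap θ) * p11 + m12 * p12 = 1) (h2 : m12 * p11 + (m22 + kap θ) * p12 = 0)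
    (h3 : (m11 + kap θ) * p12 + m12 * p22 = 0) (h4 : m12 * p12 + (m22 + kap θ) * p22 = 1) :
    sin (θ / 2 + f) * (p11 + p22) =
      sin (θ / 2) * sin (θ + f) + (p11 * p22 - p12 ^ 2) * sin f / sin (θ / 2) := by
  set s := sin (θ / 2) with hs
  set k := cos (θ / 2) with hk
  have hkap : kap θ = k / s := rfl
  rw [hkap] at h1 h2 h3 h4
  set n11 := m11 + k / s
  set n22 := m22 + k / s
  have e1 : m11 = n11 - k / s := by simp [n11]
  have e2 : m22 = n22 - k / s := by simp [n22]
  have hsk : s ^ 2 + k ^ 2 = 1 := Real.sin_sq_add_cos_sq _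
  have hθ2 : θ = θ / 2 + θ / 2 := by ring
  have hst : sin (θ + f) = 2 * s * k * cos f + (k ^ 2 - s ^ 2) * sin f := by
    have : θ + f = θ / 2 + θ / 2 + f := by ring
    rw [this, Real.sin_add, Real.sin_add, Real.cos_add]; ring
  have hct : cos (θ + f) = (k ^ 2 - s ^ 2) * cos f - 2 * s * k * sin f := by
    have : θ + f = θ / 2 + θ / 2 + f := by ring
    rw [this, Real.cos_add, Real.sin_add, Real.cos_add]; ring
  have hsh : sin (θ / 2 + f) = s * cos f + k * sin f := Real.sin_add _ _
  have hdet : (n11 * n22 - m12 ^ 2) * (p11 * p22 - p12 ^ 2) = 1 := by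
    linear_combination (m12 * p12 + n22 * p22) * h1 + h4 - (n11 * p12 + m12 * p22) * h2
  have hp11 : p11 = n22 * (p11 * p22 - p12 ^ 2) := by
    linear_combination p12 * h2 - p11 * h4
  have hp22 : p22 = n11 * (p11 * p22 - p12 ^ 2) := by
    linear_combination p12 * h3 - p22 * h1
  set d := p11 * p22 - p12 ^ 2
  have hN : (n11 + n22) * (s * cos f + k * sin f) =
      s * (n11 * n22 - m12 ^ 2) * sin (θ + f) + sin f / s := by
    have hs0 := hθ.ne'
    have hks : k / s * s = k := div_mul_cancel₀ _ hs0
    have A : k * sin (θ + f) - s * cos (θ + f) = s * cos f + k * sin f := by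
      rw [hst, hct]; linear_combination (s * cos f + k * sin f) * hsk
    have B : 2 * k * cos (θ + f) - (k / s * k - s) * sin (θ + f) = -(sin f / s) := by
      have : s * (2 * k * cos (θ + f)) - (k * k - s * s) * sin (θ + f) = -sin f := by
        rw [hst, hct]; linear_combination (-sin f) * (s ^ 2 + k ^ 2 + 1) * hsk
      field_simp
      linear_combination this
    rw [e1, e2] at hphase
    linear_combination (-s) * hphase - (n11 + n22) * A - B + (-(n11 + n22) * sin (θ + f)
      + (k / s) * sin (θ + f) - 2 * cos (θ + f)) * hks
  rw [hsh]
  calc (s * cos f + k * sin f) * (p11 + p22)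
      = ((n11 + n22) * (s * cos f + k * sin f)) * d := by rw [hp11, hp22]; ring
    _ = _ := by rw [hN]; linear_combination (s * sin (θ + f)) * hdet

/-- Coefficient bounds that hold for all small perturbations `t` of the phase `θ`. -/
lemma exists_eta {θ : ℝ} (hθ : θ ∈ Set.Ioo 0 π) : ∃ η > 0, ∀ t : ℝ, |t| ≤ η →
    sin (θ / 2) / 2 ≤ sin (θ / 2 + t) ∧
    1 / (2 * sin θ) ≤ kap θ - cos (θ + t) / sin (θ + t) := by
  have hs : 0 < sin (θ / 2) := Real.sin_pos_of_pos_of_lt_pi (by linarith [hθ.1])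
    (by linarith [hθ.1, hθ.2])
  have hS : 0 < sin θ := Real.sin_pos_of_mem_Ioo hθ
  have e1 : ∀ᶠ t in nhds (0 : ℝ), sin (θ / 2) / 2 < sin (θ / 2 + t) := by
    have : ContinuousAt (fun t : ℝ => sin (θ / 2 + t)) 0 := by fun_prop
    exact this.eventually (lt_mem_nhds (by simpa using hs))
  have e2 : ∀ᶠ t in nhds (0 : ℝ), 1 / (2 * sin θ) < kap θ - cos (θ + t) / sin (θ + t) := by
    have : ContinuousAt (fun t : ℝ => kap θ - cos (θ + t) / sin (θ + t)) 0 := by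
      refine continuousAt_const.sub (ContinuousAt.div (by fun_prop) (by fun_prop) ?_)
      simpa using hS.ne'
    refine this.eventually (lt_mem_nhds ?_)
    have : kap θ - cos θ / sin θ = 1 / sin θ := by
      have h2 : sin θ = 2 * sin (θ / 2) * cos (θ / 2) := by
        rw [← Real.sin_two_mul]; congr 1; ring
      have h3 : cos θ = 2 * cos (θ / 2) ^ 2 - 1 := by
        rw [← Real.cos_two_mul]; congr 1; ring
      have hc : cos (θ / 2) ≠ 0 := by
        rintro h; rw [h2, h] at hS; simp at hS
      rw [kap, h2, h3]; field_simp; ring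
    beta_reduce
    rw [add_zero, this]
    have : 1 / (2 * sin θ) = 1 / sin θ / 2 := by field_simp
    rw [this]
    have := one_div_pos.2 hS
    linarith
  obtain ⟨η, hη, h⟩ := Metric.eventually_nhds_iff.1 (e1.and e2)
  refine ⟨η / 2, by positivity, fun t ht => ?_⟩
  have := h (y := t) (by rw [Real.dist_eq, sub_zero]; linarith)
  exact ⟨this.1.le, this.2.le⟩

/-- Variation of the trace of `P` between two points. -/
lemma trace_diff {θ f f' B p11 p12 p22 p11' p12' p22' o : ℝ} (hs : 0 < sin (θ / 2))
    (hf : sin (θ / 2) / 2 ≤ sin (θ / 2 + f)) (hB : 0 ≤ B)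
    (b11 : |p11| ≤ B) (b12 : |p12| ≤ B) (b22 : |p22| ≤ B)
    (b11' : |p11'| ≤ B) (b12' : |p12'| ≤ B) (b22' : |p22'| ≤ B)
    (h : sin (θ / 2 + f) * (p11 + p22) =
      sin (θ / 2) * sin (θ + f) + (p11 * p22 - p12 ^ 2) * sin f / sin (θ / 2))
    (h' : sin (θ / 2 + f') * (p11' + p22') =
      sin (θ / 2) * sin (θ + f') + (p11' * p22' - p12' ^ 2) * sin f' / sin (θ / 2))
    (ho : |p11 - p11'| + |p22 - p22'| + 2 * |p12 - p12'| ≤ 3 * o) :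
    |(p11 + p22) - (p11' + p22')| ≤
      2 / sin (θ / 2) * (2 * B + sin (θ / 2) + 2 * B ^ 2 / sin (θ / 2)) * |f - f'|
      + 6 * B / sin (θ / 2) ^ 2 * |f'| * o := by
  set s := sin (θ / 2) with hsd
  have lip : ∀ x y : ℝ, |sin x - sin y| ≤ |x - y| := fun x y => by
    have := Real.lipschitzWith_sin.dist_le_mul x y
    simpa [Real.dist_eq] using this
  have l1 : |sin (θ / 2 + f) - sin (θ / 2 + f')| ≤ |f - f'| := by
    have := lip (θ / 2 + f) (θ / 2 + f'); rwa [add_sub_add_left_eq_sub] at this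
  have l2 : |sin (θ + f) - sin (θ + f')| ≤ |f - f'| := by
    have := lip (θ + f) (θ + f'); rwa [add_sub_add_left_eq_sub] at this
  have l3 := lip f f'
  have l4 : |sin f'| ≤ |f'| := by simpa using lip f' 0
  have hdet : |p11 * p22 - p12 ^ 2| ≤ 2 * B ^ 2 := by
    have a1 : |p11 * p22| ≤ B * B := by rw [abs_mul]; gcongr
    have a2 : |p12 ^ 2| ≤ B * B := by rw [sq, abs_mul]; gcongr
    have := abs_sub (p11 * p22) (p12 ^ 2)
    linarith
  have htr : |p11' + p22'| ≤ 2 * B := (abs_add_le _ _).trans (by linarith)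
  have hdd : |(p11 * p22 - p12 ^ 2) - (p11' * p22' - p12' ^ 2)| ≤ 3 * B * o := by
    have e : (p11 * p22 - p12 ^ 2) - (p11' * p22' - p12' ^ 2)
      = (p11 - p11') * p22 + p11' * (p22 - p22') - (p12 - p12') * (p12 + p12') := by ring
    have a1 : |(p11 - p11') * p22| ≤ |p11 - p11'| * B := by rw [abs_mul]; gcongr
    have a2 : |p11' * (p22 - p22')| ≤ B * |p22 - p22'| := by rw [abs_mul]; gcongr
    have a3 : |(p12 - p12') * (p12 + p12')| ≤ |p12 - p12'| * (2 * B) := by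
      rw [abs_mul]; gcongr; exact (abs_add_le _ _).trans (by linarith)
    rw [e]
    have := mul_le_mul_of_nonneg_left ho hB
    have b1 := abs_sub ((p11 - p11') * p22 + p11' * (p22 - p22')) ((p12 - p12') * (p12 + p12'))
    have b2 := abs_add_le ((p11 - p11') * p22) (p11' * (p22 - p22'))
    linarith
  set d := p11 * p22 - p12 ^ 2
  set d' := p11' * p22' - p12' ^ 2
  have ho0 : 0 ≤ o := by
    linarith [abs_nonneg (p11 - p11'), abs_nonneg (p22 - p22'), abs_nonneg (p12 - p12')]
  have key : sin (θ / 2 + f) * ((p11 + p22) - (p11' + p22')) =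
      -((sin (θ / 2 + f) - sin (θ / 2 + f')) * (p11' + p22'))
      + s * (sin (θ + f) - sin (θ + f'))
      + (d * (sin f - sin f') + (d - d') * sin f') / s := by
    rw [mul_sub, h, mul_add (sin (θ / 2 + f)) p11' p22']
    linear_combination -h'
  have est : sin (θ / 2 + f) * |(p11 + p22) - (p11' + p22')| ≤
      (2 * B + s + 2 * B ^ 2 / s) * |f - f'| + 3 * B / s * |f'| * o := by
    have hpos : 0 < sin (θ / 2 + f) := by linarith
    rw [← abs_of_pos hpos, ← abs_mul, key]
    have a1 : |-((sin (θ / 2 + f) - sin (θ / 2 + f')) * (p11' + p22'))| ≤ |f - f'| * (2 * B) := by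
      rw [abs_neg, abs_mul]; gcongr
    have a2 : |s * (sin (θ + f) - sin (θ + f'))| ≤ s * |f - f'| := by
      rw [abs_mul, abs_of_pos hs]; gcongr
    have a3 : |(d * (sin f - sin f') + (d - d') * sin f') / s| ≤
        (2 * B ^ 2 * |f - f'| + 3 * B * o * |f'|) / s := by
      rw [abs_div, abs_of_pos hs]
      gcongr
      refine (abs_add_le _ _).trans ?_
      rw [abs_mul, abs_mul]
      gcongr
    refine (abs_add_three _ _ _).trans ?_
    have e : (2 * B ^ 2 * |f - f'| + 3 * B * o * |f'|) / s
      = 2 * B ^ 2 / s * |f - f'| + 3 * B / s * |f'| * o := by ring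
    rw [e] at a3
    linarith
  have h2 : s / 2 * |(p11 + p22) - (p11' + p22')| ≤
      (2 * B + s + 2 * B ^ 2 / s) * |f - f'| + 3 * B / s * |f'| * o :=
    (mul_le_mul_of_nonneg_right hf (abs_nonneg _)).trans est
  refine le_of_mul_le_mul_left (h2.trans (le_of_eq ?_)) (half_pos hs)
  field_simp
  ring

/-! ### Uniformly convex functions and the Legendre dual point -/

/-- Coercivity with constant `c` of a linear map. -/
def Coer (c : ℝ) (T : E2 →L[ℝ] E2) : Prop := ∀ h : E2, c * ‖h‖ ^ 2 ≤ inner ℝ (T h) h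

/-- Symmetry of a linear map. -/
def Symm (T : E2 →L[ℝ] E2) : Prop := ∀ h k : E2, inner ℝ (T h) k = inner ℝ h (T k)

lemma Coer.le_norm {c : ℝ} {T : E2 →L[ℝ] E2} (h : Coer c T) (k : E2) : c * ‖k‖ ≤ ‖T k‖ := by
  rcases eq_or_ne k 0 with rfl | hk
  · simp
  · have := (h k).trans (real_inner_le_norm (T k) k)
    have hk' := norm_pos_iff.2 hk
    refine le_of_mul_le_mul_right (a := ‖k‖) ?_ hk'
    linarith

/-- A coercive map of the plane is invertible. -/
lemma Coer.inverse {c : ℝ} {T : E2 →L[ℝ] E2} (hc : 0 < c) (h : Coer c T) :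
    (∀ k, T (T.inverse k) = k) ∧ (∀ k, T.inverse (T k) = k) ∧
      ∀ k, ‖T.inverse k‖ ≤ 1 / c * ‖k‖ := by
  have hinj : Function.Injective (T : E2 →ₗ[ℝ] E2) := by
    refine (injective_iff_map_eq_zero _).2 fun k hk => ?_
    have h1 := h.le_norm k
    have h2 : T k = 0 := hk
    rw [h2, norm_zero] at h1
    have : ‖k‖ ≤ 0 := by nlinarith
    exact norm_le_zero_iff.1 this
  set e := (LinearEquiv.ofInjectiveEndo (T : E2 →ₗ[ℝ] E2) hinj).toContinuousLinearEquiv with he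
  have hT : T = (e : E2 →L[ℝ] E2) := by ext1 k; rfl
  have hi : T.inverse = (e.symm : E2 →L[ℝ] E2) := by rw [hT]; exact ContinuousLinearMap.inverse_equiv e
  have a1 : ∀ k, T (T.inverse k) = k := fun k => by rw [hi, hT]; simp
  refine ⟨a1, fun k => by rw [hi, hT]; simp, fun k => ?_⟩
  have := h.le_norm (T.inverse k)
  rw [a1] at this
  rw [one_div, inv_mul_eq_div, le_div_iff₀ hc]
  linarith

/-- `G` and `N` are the gradient and Hessian fields of `U`. -/
structure GradHess (U : E2 → ℝ) (G : E2 → E2) (N : E2 → E2 →L[ℝ] E2) : Prop where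
  grad : ∀ x, HasFDerivAt U (innerSL ℝ (G x)) x
  hess : ∀ x, HasFDerivAt G (N x) x

lemma line_deriv {F : Type*} [NormedAddCommGroup F] [NormedSpace ℝ F] {g : E2 → F}
    {g' : E2 →L[ℝ] F} {x h : E2} {s : ℝ}
    (hg : HasFDerivAt g g' (x + s • h)) : HasDerivAt (fun τ : ℝ => g (x + τ • h)) (g' h) s := by
  have h1 : HasDerivAt (fun τ : ℝ => x + τ • h) h s := by
    simpa using ((hasDerivAt_id s).smul_const h).const_add x
  exact hg.comp_hasDerivAt s h1

lemma GradHess.line1 {U : E2 → ℝ} {G : E2 → E2} {N : E2 → E2 →L[ℝ] E2} (H : GradHess U G N)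
    (x h : E2) (s : ℝ) :
    HasDerivAt (fun τ : ℝ => U (x + τ • h)) (inner ℝ (G (x + s • h)) h) s :=
  (line_deriv (H.grad (x + s • h))).congr_deriv (by simp)

lemma line_inner {G : E2 → E2} {T : E2 →L[ℝ] E2} {x h : E2} {s : ℝ}
    (hG : HasFDerivAt G T (x + s • h)) (k : E2) :
    HasDerivAt (fun τ : ℝ => inner ℝ (G (x + τ • h)) k) (inner ℝ (T h) k) s :=
  ((line_deriv hG).inner ℝ (hasDerivAt_const s k)).congr_deriv (by simp)

/-- The gradient of a uniformly convex function is strongly monotone. -/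
lemma GradHess.mono {U : E2 → ℝ} {G : E2 → E2} {N : E2 → E2 →L[ℝ] E2} (H : GradHess U G N)
    {s : Set E2} (hs : Convex ℝ s) {c : ℝ} (hc : ∀ x ∈ s, Coer c (N x)) {x y : E2} (hx : x ∈ s)
    (hy : y ∈ s) : c * ‖x - y‖ ^ 2 ≤ inner ℝ (G x - G y) (x - y) := by
  have hd : ∀ t : ℝ, HasDerivAt (fun τ : ℝ => inner ℝ (G (y + τ • (x - y))) (x - y))
      (inner ℝ (N (y + t • (x - y)) (x - y)) (x - y)) t := fun t =>
    line_inner (H.hess _) _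
  obtain ⟨t, ht, he⟩ := exists_hasDerivAt_eq_slope _ _ (zero_lt_one)
    (fun t _ => (hd t).continuousAt.continuousWithinAt) (fun t _ => hd t)
  have hmem : y + t • (x - y) ∈ s := hs.add_smul_sub_mem hy hx ⟨ht.1.le, ht.2.le⟩
  have := hc _ hmem (x - y)
  rw [he] at this
  simpa [inner_sub_left] using this

/-- Strong monotonicity makes the gradient map expanding. -/
lemma GradHess.expand {U : E2 → ℝ} {G : E2 → E2} {N : E2 → E2 →L[ℝ] E2} (H : GradHess U G N)
    {s : Set E2} (hs : Convex ℝ s) {c : ℝ} (hc : ∀ x ∈ s, Coer c (N x)) {x y : E2} (hx : x ∈ s)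
    (hy : y ∈ s) : c * ‖x - y‖ ≤ ‖G x - G y‖ := by
  rcases eq_or_ne x y with rfl | hxy
  · simp
  · have h1 := (H.mono hs hc hx hy).trans (real_inner_le_norm _ _)
    have h2 : 0 < ‖x - y‖ := norm_pos_iff.2 (sub_ne_zero.2 hxy)
    refine le_of_mul_le_mul_right (a := ‖x - y‖) ?_ h2
    linarith

/-- The quadratic function with Hessian `T`. -/
def quad (T : E2 →L[ℝ] E2) (x : E2) : ℝ := inner ℝ (T x) x / 2

lemma quad_add {T : E2 →L[ℝ] E2} (hT : Symm T) (x h : E2) :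
    quad T (x + h) = quad T x + inner ℝ (T x) h + quad T h := by
  have : inner ℝ (T h) x = inner ℝ (T x) h := by rw [hT h x, real_inner_comm]
  simp only [quad, map_add, inner_add_left, inner_add_right, this]
  ring

lemma gradHess_quad {T : E2 →L[ℝ] E2} (hT : Symm T) : GradHess (quad T) T fun _ => T where
  grad x := by
    have h := (T.hasFDerivAt (x := x)).inner ℝ (hasFDerivAt_id x)
    refine (h.mul_const (2⁻¹ : ℝ)).congr_fderiv ?_
    ext k
    have : inner ℝ (T k) x = inner ℝ (T x) k := by rw [hT k x, real_inner_comm]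
    simp [this]
    ring
  hess _ := T.hasFDerivAt

lemma GradHess.sub {U U' : E2 → ℝ} {G G' : E2 → E2} {N N' : E2 → E2 →L[ℝ] E2}
    (H : GradHess U G N) (J : GradHess U' G' N') :
    GradHess (fun x => U x - U' x) (fun x => G x - G' x) fun x => N x - N' x where
  grad x := ((H.grad x).sub (J.grad x)).congr_fderiv (by simp)
  hess x := (H.hess x).sub (J.hess x)

lemma GradHess.add {U U' : E2 → ℝ} {G G' : E2 → E2} {N N' : E2 → E2 →L[ℝ] E2}
    (H : GradHess U G N) (J : GradHess U' G' N') :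
    GradHess (fun x => U x + U' x) (fun x => G x + G' x) fun x => N x + N' x where
  grad x := ((H.grad x).add (J.grad x)).congr_fderiv (by simp)
  hess x := (H.hess x).add (J.hess x)

/-- Interpolation: the gradient of a semiconvex function is controlled by the sup norm. -/
lemma GradHess.grad_interp {w : E2 → ℝ} {g : E2 → E2} {Q : E2 → E2 →L[ℝ] E2} (H : GradHess w g Q)
    {s : Set E2} {S m : ℝ} (hS : 0 ≤ S) (hc : ∀ x ∈ s, Coer (-S) (Q x))
    (hm : ∀ x ∈ s, |w x| ≤ m) {x : E2} {t : ℝ} (ht : 0 < t)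
    (hx : Metric.closedBall x t ⊆ s) : t * ‖g x‖ ≤ 2 * m + S * t ^ 2 / 2 := by
  have hxs : x ∈ s := hx (Metric.mem_closedBall_self ht.le)
  have hm0 : 0 ≤ m := (abs_nonneg _).trans (hm x hxs)
  rcases eq_or_ne (g x) 0 with h0 | h0
  · rw [h0, norm_zero, mul_zero]; positivity
  have hv := norm_pos_iff.2 h0
  set h : E2 := ‖g x‖⁻¹ • g x with hh
  have hh1 : ‖h‖ = 1 := norm_smul_inv_norm h0
  have hmem : ∀ τ ∈ Set.Icc 0 t, x + τ • h ∈ s := fun τ hτ => hx (by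
    rw [Metric.mem_closedBall, dist_eq_norm, add_sub_cancel_left, norm_smul, hh1, mul_one,
      Real.norm_eq_abs, abs_of_nonneg hτ.1]
    exact hτ.2)
  have hconv := taylor_lower ht.le (fun τ _ => H.line1 x h τ)
    (fun τ _ => line_inner (H.hess (x + τ • h)) h) (k := -S) (fun τ hτ => by
      have := hc _ (hmem τ hτ) h
      rwa [hh1, one_pow, mul_one] at this)
  have b1 := hm x hxs
  have b2 := hm (x + t • h) (hmem t ⟨ht.le, le_rfl⟩)
  have hin : inner ℝ (g x) h = ‖g x‖ := by
    rw [hh, inner_smul_right, real_inner_self_eq_norm_sq]; field_simp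
  simp only [zero_smul, add_zero, hin] at hconv
  rw [abs_le] at b1 b2
  linarith [b1.1, b2.2]

lemma neg_coer {T : E2 →L[ℝ] E2} {L : ℝ} (hL : ‖T‖ ≤ L) : Coer (-L) T := fun h => by
  have h1 := (abs_le.1 (abs_real_inner_le_norm (T h) h)).1
  have h2 : ‖T h‖ * ‖h‖ ≤ L * ‖h‖ * ‖h‖ := by
    exact mul_le_mul_of_nonneg_right ((T.le_opNorm h).trans
      (mul_le_mul_of_nonneg_right hL (norm_nonneg _))) (norm_nonneg _)
  linarith

/-- A convex function uniformly close to a quadratic has its gradient close to that of the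
quadratic. -/
lemma GradHess.near_grad {U : E2 → ℝ} {G : E2 → E2} {N : E2 → E2 →L[ℝ] E2} (H : GradHess U G N)
    {s : Set E2} {c : ℝ} (hc0 : 0 ≤ c) (hc : ∀ x ∈ s, Coer c (N x))
    {T : E2 →L[ℝ] E2} (hT : Symm T) {L m : ℝ} (hL : ‖T‖ ≤ L)
    (hm : ∀ x ∈ s, |U x - quad T x| ≤ m) {x : E2} {t : ℝ} (ht : 0 < t)
    (hx : Metric.closedBall x t ⊆ s) : t * ‖G x - T x‖ ≤ 2 * m + L * t ^ 2 / 2 := by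
  refine (H.sub (gradHess_quad hT)).grad_interp ((norm_nonneg _).trans hL) (fun y hy h => ?_)
    hm ht hx
  have h1 := hc y hy h
  have h2 := neg_coer (T := -T) (L := L) (by rwa [norm_neg]) h
  have h3 : 0 ≤ c * ‖h‖ ^ 2 := by positivity
  simp only [neg_apply, sub_apply, inner_neg_left, inner_sub_left] at h2 ⊢
  linarith

/-- Existence of the Legendre dual point: `p` is a value of the gradient of `U`, and the Legendre
transform of `U` at `p` is close to that of the quadratic. -/
lemma GradHess.legendre {U : E2 → ℝ} {G : E2 → E2} {N : E2 → E2 →L[ℝ] E2} (H : GradHess U G N)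
    {T : E2 →L[ℝ] E2} (hT : Symm T) {c m R : ℝ} (hc : 0 < c) (hTc : Coer c T) (hR : 0 < R)
    {x0 : E2} (hm : ∀ x ∈ Metric.closedBall x0 R, |U x - quad T x| ≤ m)
    (hmR : 16 * m < c * R ^ 2) {p y : E2} (hy : T y = p) (hyR : ‖y - x0‖ ≤ R / 2) :
    ∃ X ∈ Metric.ball x0 R, G X = p ∧
      |inner ℝ p X - U X - inner ℝ p y / 2| ≤ m := by
  have hdecomp : ∀ x, quad T x - inner ℝ p x = quad T (x - y) - inner ℝ p y / 2 := by
    intro x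
    have h1 := quad_add hT y (x - y)
    rw [add_sub_cancel, hy] at h1
    have h2 : quad T y = inner ℝ p y / 2 := by rw [quad, hy]
    rw [h1, h2, inner_sub_right]; ring
  have hcont : ContinuousOn (fun x => U x - inner ℝ p x) (Metric.closedBall x0 R) :=
    fun x _ => ((H.grad x).continuousAt.sub (by fun_prop)).continuousWithinAt
  have hyB : y ∈ Metric.closedBall x0 R := by
    rw [Metric.mem_closedBall, dist_eq_norm]; linarith
  obtain ⟨X, hX, hmin⟩ := (isCompact_closedBall x0 R).exists_isMinOn ⟨y, hyB⟩ hcont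
  have h1 : U X - inner ℝ p X ≤ U y - inner ℝ p y := hmin hyB
  have b1 := hm X hX
  have b2 := hm y hyB
  rw [abs_le] at b1 b2
  have d1 := hdecomp X
  have d2 := hdecomp y
  have q0 : quad T (y - y) = 0 := by simp [quad]
  rw [q0] at d2
  have hq : c * ‖X - y‖ ^ 2 / 2 ≤ quad T (X - y) := by
    have := hTc (X - y); unfold quad; linarith
  have hlt : ‖X - y‖ < R / 2 := by
    have : c * ‖X - y‖ ^ 2 < c * (R / 2) ^ 2 := by nlinarith
    exact lt_of_pow_lt_pow_left₀ 2 (by positivity) (lt_of_mul_lt_mul_left this hc.le)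
  have hXb : X ∈ Metric.ball x0 R := by
    rw [Metric.mem_ball, dist_eq_norm]
    linarith [norm_sub_le_norm_sub_add_norm_sub X y x0]
  refine ⟨X, hXb, ?_, ?_⟩
  · have hloc : IsLocalMin (fun x => U x - inner ℝ p x) X :=
      hmin.isLocalMin (Filter.mem_of_superset (Metric.isOpen_ball.mem_nhds hXb)
        Metric.ball_subset_closedBall)
    have hd : HasFDerivAt (fun x => U x - inner ℝ p x) (innerSL ℝ (G X) - innerSL ℝ p) X :=
      (H.grad X).sub (innerSL ℝ p).hasFDerivAt
    have h0 := hloc.hasFDerivAt_eq_zero hd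
    have h2 := congrArg (fun L : E2 →L[ℝ] ℝ => L (G X - p)) h0
    have h3 : inner ℝ (G X - p) (G X - p) = 0 := by
      rw [inner_sub_left]; exact h2
    exact sub_eq_zero.1 (inner_self_eq_zero.1 h3)
  · have : 0 ≤ c * ‖X - y‖ ^ 2 / 2 := by positivity
    rw [abs_le]; constructor <;> linarith [b1.1, b1.2, b2.1, b2.2]

/-! ### Regularity of the Legendre transform -/

lemma dd_of_fderiv {B : Set E2} {W : E2 → ℝ} {g : E2 → E2} {Q : E2 → E2 →L[ℝ] E2}
    (h1 : ∀ p ∈ B, HasFDerivAt W (innerSL ℝ (g p)) p) (h2 : ∀ p ∈ B, HasFDerivAt g (Q p) p)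
    (e : E2) : DD B W e (fun p => inner ℝ (Q p e) e) :=
  ⟨fun p => inner ℝ (g p) e, fun _ _ hx =>
    ⟨(line_deriv (h1 _ hx)).congr_deriv (by simp), line_inner (h2 _ hx) e⟩⟩

lemma Symm.sub {S T : E2 →L[ℝ] E2} (hS : Symm S) (hT : Symm T) : Symm (S - T) := fun h k => by
  simp only [sub_apply, inner_sub_left, inner_sub_right, hS h k, hT h k]

lemma Symm.inverse {c : ℝ} {T : E2 →L[ℝ] E2} (hT : Symm T) (hc : 0 < c) (h : Coer c T) :
    Symm T.inverse := fun x y => by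
  obtain ⟨i1, -, -⟩ := h.inverse hc
  have := hT (T.inverse x) (T.inverse y)
  rw [i1, i1] at this
  exact this.symm

/-- A symmetric map is controlled by three values of its quadratic form. -/
lemma Symm.norm_le {Q : E2 →L[ℝ] E2} (hQ : Symm Q) :
    ‖Q‖ ≤ 3 * (|inner ℝ (Q ex) ex| + |inner ℝ (Q ey) ey| +
      |inner ℝ (Q (ex + ey)) (ex + ey)|) := by
  set a := inner ℝ (Q ex) ex with ha
  set b := inner ℝ (Q ey) ey with hb
  set q := inner ℝ (Q (ex + ey)) (ex + ey) with hq
  set o := inner ℝ (Q ex) ey with ho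
  have ho' : inner ℝ (Q ey) ex = o := by rw [hQ, real_inner_comm]
  have hqo : q = a + 2 * o + b := by
    rw [hq, map_add, inner_add_left, inner_add_right, inner_add_right, ho', ← ha, ← hb, ← ho]; ring
  have comp : ∀ v : E2, ‖v‖ ≤ |inner ℝ v ex| + |inner ℝ v ey| := fun v => by
    have h1 : inner ℝ v ex = v 0 := by simp [ex, EuclideanSpace.inner_single_right]
    have h2 : inner ℝ v ey = v 1 := by simp [ey, EuclideanSpace.inner_single_right]
    rw [h1, h2]
    conv_lhs => rw [decomp v]
    refine (norm_add_le _ _).trans ?_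
    rw [norm_smul, norm_smul, norm_ex, norm_ey, mul_one, mul_one]; rfl
  have hx := comp (Q ex)
  have hy := comp (Q ey)
  rw [ho'] at hy
  have h2o : 2 * |o| ≤ |q| + |a| + |b| := by
    have : 2 * o = q - a - b := by rw [hqo]; ring
    calc 2 * |o| = |q - a - b| := by rw [← this, abs_mul]; simp
      _ ≤ |q - a| + |b| := abs_sub _ _
      _ ≤ |q| + |a| + |b| := by gcongr; exact abs_sub _ _
  refine Q.opNorm_le_bound (by positivity) fun v => ?_
  calc ‖Q v‖ = ‖v 0 • Q ex + v 1 • Q ey‖ := by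
        conv_lhs => rw [decomp v, map_add, map_smul, map_smul]
    _ ≤ ‖v‖ * ‖Q ex‖ + ‖v‖ * ‖Q ey‖ := by
        refine (norm_add_le _ _).trans ?_
        rw [norm_smul, norm_smul]
        gcongr <;> exact coord_le v _
    _ = (‖Q ex‖ + ‖Q ey‖) * ‖v‖ := by ring
    _ ≤ _ := by
        gcongr
        linarith [abs_nonneg q, abs_nonneg a, abs_nonneg b]

lemma quad_form_le {Q : E2 →L[ℝ] E2} : |inner ℝ (Q ex) ex| ≤ ‖Q‖ ∧ |inner ℝ (Q ey) ey| ≤ ‖Q‖ ∧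
    |inner ℝ (Q ex) ey| ≤ ‖Q‖ ∧ |inner ℝ (Q (ex + ey)) (ex + ey)| ≤ 4 * ‖Q‖ := by
  have key : ∀ u v : E2, |inner ℝ (Q u) v| ≤ ‖Q‖ * ‖u‖ * ‖v‖ := fun u v =>
    (abs_real_inner_le_norm _ _).trans (by gcongr; exact Q.le_opNorm u)
  have h1 := key ex ex
  have h2 := key ey ey
  have h3 := key ex ey
  have h4 := key (ex + ey) (ex + ey)
  rw [norm_ex] at h1 h3
  rw [norm_ey] at h2 h3
  refine ⟨by linarith, by linarith, by linarith, h4.trans ?_⟩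
  have : ‖ex + ey‖ ≤ 2 := by
    refine (norm_add_le _ _).trans ?_
    rw [norm_ex, norm_ey]; norm_num
  calc ‖Q‖ * ‖ex + ey‖ * ‖ex + ey‖ ≤ ‖Q‖ * 2 * 2 := by gcongr
    _ = 4 * ‖Q‖ := by ring

lemma Coer.norm_inverse_le {c : ℝ} {T : E2 →L[ℝ] E2} (hc : 0 < c) (h : Coer c T) :
    ‖T.inverse‖ ≤ 1 / c :=
  ContinuousLinearMap.opNorm_le_bound _ (by positivity) (h.inverse hc).2.2

lemma inverse_sub {c : ℝ} {S T : E2 →L[ℝ] E2} (hc : 0 < c) (hS : Coer c S) (hT : Coer c T) :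
    S.inverse - T.inverse = S.inverse.comp ((T - S).comp T.inverse) := by
  ext1 h
  simp [(hS.inverse hc).2.1, (hT.inverse hc).1]

lemma norm_inverse_sub_le {c : ℝ} {S T : E2 →L[ℝ] E2} (hc : 0 < c) (hS : Coer c S)
    (hT : Coer c T) : ‖S.inverse - T.inverse‖ ≤ 1 / c ^ 2 * ‖S - T‖ := by
  rw [inverse_sub hc hS hT]
  have h1 := hS.norm_inverse_le hc
  have h2 := hT.norm_inverse_le hc
  calc _ ≤ ‖S.inverse‖ * (‖T - S‖ * ‖T.inverse‖) :=
        (ContinuousLinearMap.opNorm_comp_le _ _).trans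
          (by gcongr; exact ContinuousLinearMap.opNorm_comp_le _ _)
    _ ≤ 1 / c * (‖S - T‖ * (1 / c)) := by rw [norm_sub_rev]; gcongr
    _ = _ := by field_simp

/-- Differentiability of the local inverse of the gradient map. -/
lemma GradHess.hasFDerivAt_inv {U : E2 → ℝ} {G : E2 → E2} {N : E2 → E2 →L[ℝ] E2}
    (H : GradHess U G N) {c : ℝ} (hc : 0 < c) {X : E2 → E2} {B : Set E2} (hB : IsOpen B)
    (hX : ∀ p ∈ B, G (X p) = p) (hN : ∀ p ∈ B, Coer c (N (X p)))
    (hlip : ∀ p ∈ B, ∀ p' ∈ B, c * ‖X p - X p'‖ ≤ ‖p - p'‖) {p : E2} (hp : p ∈ B) :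
    HasFDerivAt X (N (X p)).inverse p := by
  obtain ⟨i1, i2, -⟩ := (hN p hp).inverse hc
  set e : E2 ≃L[ℝ] E2 := ContinuousLinearEquiv.equivOfInverse (N (X p)) (N (X p)).inverse i2 i1
  have hcont : ContinuousAt X p := by
    rw [Metric.continuousAt_iff]
    intro ε hε
    obtain ⟨δ, hδ, hb⟩ := Metric.isOpen_iff.1 hB p hp
    refine ⟨min δ (c * ε), by positivity, fun {q} hq => ?_⟩
    have h1 := hlip q (hb (hq.trans_le (min_le_left _ _))) p hp
    have h2 := hq.trans_le (min_le_right _ _)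
    rw [dist_eq_norm] at h2 ⊢
    exact lt_of_mul_lt_mul_left (h1.trans_lt h2) hc.le
  exact HasFDerivAt.of_local_left_inverse (f' := e) hcont (H.hess (X p))
    (Filter.mem_of_superset (hB.mem_nhds hp) hX)

/-- The Legendre transform has gradient `X`. -/
lemma GradHess.hasFDerivAt_legendre {U : E2 → ℝ} {G : E2 → E2} {N : E2 → E2 →L[ℝ] E2}
    (H : GradHess U G N) {X : E2 → E2} {Q : E2 →L[ℝ] E2} {p : E2} (hX : G (X p) = p)
    (hd : HasFDerivAt X Q p) {S : E2 →L[ℝ] E2} (hS : Symm S) :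
    HasFDerivAt (fun p => inner ℝ p (X p) - U (X p) - inner ℝ p (S p) / 2)
      (innerSL ℝ (X p - S p)) p := by
  have h1 := ((hasFDerivAt_id p).inner ℝ hd).sub ((H.grad (X p)).comp p hd)
  have h2 := ((hasFDerivAt_id p).inner ℝ S.hasFDerivAt).mul_const (2⁻¹ : ℝ)
  refine ((h1.sub h2).congr_fderiv ?_)
  ext h
  have e : inner ℝ p (S h) = inner ℝ (S p) h := (hS p h).symm
  have e2 : inner ℝ h (S p) = inner ℝ (S p) h := real_inner_comm _ _
  have e3 : inner ℝ h (X p) = inner ℝ (X p) h := real_inner_comm _ _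
  simp [hX, e, e2, e3]
  ring

/-- Lipschitz bounds are Hölder bounds on sets of diameter `D`. -/
lemma le_rpow_split {α d D : ℝ} (hα : α ∈ Set.Ioo (0 : ℝ) 1) (hd : 0 ≤ d) (hD : d ≤ D) :
    d ≤ D ^ (1 - α) * d ^ α := by
  rcases hd.eq_or_lt with rfl | hd
  · have := hα.1.ne'
    simp [Real.zero_rpow this]
  calc d = d ^ (1 - α) * d ^ α := by rw [← Real.rpow_add hd]; simp
    _ ≤ _ := by
        gcongr
        linarith [hα.2]

/-! ### Interior estimate on the Legendre side -/

set_option maxHeartbeats 1000000 in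
/-- Scale-invariant interior estimate: if `U` is uniformly convex, close to a quadratic with
Hessian `T` on `B_R(x₀)`, and the inverse Hessian solves the rotated phase equation, then the
inverse Hessian is Hölder close to `T⁻¹`. It is the Schauder estimate for the Legendre transform
of `U`, whose Laplacian is the trace of the inverse Hessian. -/
lemma local_est {α θ c L : ℝ} (hα : α ∈ Set.Ioo (0 : ℝ) 1) (hθ : θ ∈ Set.Ioo 0 π) (hc : 0 < c)
    (hL : 0 ≤ L) : ∃ η > 0, ∃ γ > 0, ∃ C > 0, γ ≤ 1 / 8 ∧
    ∀ (U : E2 → ℝ) (G : E2 → E2) (N : E2 → E2 →L[ℝ] E2) (T : E2 →L[ℝ] E2) (f : E2 → ℝ) (x0 : E2)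
      (R m F : ℝ), GradHess U G N → (∀ x, Symm (N x)) → Symm T → Coer c T → ‖T‖ ≤ L → 0 < R →
    (∀ x ∈ Metric.closedBall x0 R, Coer c (N x)) →
    (∃ K, ∀ x ∈ Metric.closedBall x0 R, ∀ y ∈ Metric.closedBall x0 R,
      ‖N x - N y‖ ≤ K * ‖x - y‖) →
    (∀ x ∈ Metric.closedBall x0 R, |U x - quad T x| ≤ m) →
    (∀ x ∈ Metric.ball x0 R, |f x| ≤ η) → 0 ≤ F →
    (∀ x ∈ Metric.ball x0 R, ∀ y ∈ Metric.ball x0 R, |f x - f y| ≤ F / R * ‖x - y‖) →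
    (∀ x ∈ Metric.ball x0 R,
      sin (θ / 2 + f x) * (inner ℝ ((N x).inverse ex) ex + inner ℝ ((N x).inverse ey) ey) =
      sin (θ / 2) * sin (θ + f x) +
        (inner ℝ ((N x).inverse ex) ex * inner ℝ ((N x).inverse ey) ey
          - inner ℝ ((N x).inverse ex) ey ^ 2) * sin (f x) / sin (θ / 2)) →
    m ≤ η * R ^ 2 →
    ∀ x ∈ Metric.ball x0 (γ * R),
      ‖(N x).inverse - T.inverse‖ ≤ C * (m / R ^ 2 + F) ∧
      ∀ y ∈ Metric.ball x0 (γ * R),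
        R ^ α * ‖(N x).inverse - (N y).inverse‖ ≤ C * (m / R ^ 2 + F) * ‖G x - G y‖ ^ α := by
  have hs : 0 < sin (θ / 2) := Real.sin_pos_of_pos_of_lt_pi (by linarith [hθ.1])
    (by linarith [hθ.1, hθ.2])
  obtain ⟨η1, hη1, heta⟩ := exists_eta hθ
  obtain ⟨δ, hδ, Cs, hCs, hschauder⟩ := schauder hα
  set A1 := 2 / sin (θ / 2) * (2 * (1 / c) + sin (θ / 2) + 2 * (1 / c) ^ 2 / sin (θ / 2)) with hA1
  set A2 := 6 * (1 / c) / sin (θ / 2) ^ 2 with hA2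
  have hA10 : 0 < A1 := by positivity
  have hA20 : 0 < A2 := by positivity
  set τ := c / (8 * (L + c)) with hτ
  have hτ0 : 0 < τ := by positivity
  have hLc : L * τ < c / 8 := by
    rw [hτ, mul_div_assoc', div_lt_div_iff₀ (by positivity) (by norm_num)]; nlinarith [mul_pos hc hc]
  have hτ8 : τ ≤ 1 / 8 := by
    rw [hτ, div_le_div_iff₀ (by positivity) (by norm_num)]; nlinarith
  set C' := 4 / c ^ 2 + A1 with hC'
  refine ⟨min η1 (min (c * τ / 32) (δ / A2)), by positivity, τ, hτ0,
    3 * Cs * C' * (1 + (2 / c) ^ α), by positivity, hτ8, ?_⟩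
  intro U G N T f x0 R m F H hNs hTs hTc hTL hR hNc hNlip hm hf hF hflip htr hmR
  set η := min η1 (min (c * τ / 32) (δ / A2))
  have hη1' : η ≤ η1 := min_le_left _ _
  have hη2 : η ≤ c * τ / 32 := (min_le_right _ _).trans (min_le_left _ _)
  have hη3 : η ≤ δ / A2 := (min_le_right _ _).trans (min_le_right _ _)
  have hm0 : 0 ≤ m := (abs_nonneg _).trans (hm x0 (Metric.mem_closedBall_self hR.le))
  have hR2 : 0 < R ^ 2 := by positivity
  have hmR' : m ≤ c * τ / 32 * R ^ 2 := hmR.trans (by gcongr)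
  have hm16 : 16 * m < c * R ^ 2 := by nlinarith [mul_pos hc hR2]
  obtain ⟨Ti1, Ti2, Ti3⟩ := hTc.inverse hc
  set r := c * R / 2 with hr
  have hr0 : 0 < r := by positivity
  set p0 := T x0 with hp0
  -- `X p` is the Legendre dual point of `p`: a preimage of `p` under the gradient map `G`
  have hXex : ∀ p, ∃ X, p ∈ Metric.ball p0 r → X ∈ Metric.ball x0 R ∧ G X = p ∧
      |inner ℝ p X - U X - inner ℝ p (T.inverse p) / 2| ≤ m := by
    intro p
    by_cases hp : p ∈ Metric.ball p0 r
    · have hy : ‖T.inverse p - x0‖ ≤ R / 2 := by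
        have h1 := Ti3 (p - p0)
        rw [map_sub, hp0, Ti2] at h1
        rw [Metric.mem_ball, dist_eq_norm] at hp
        refine h1.trans ?_
        calc 1 / c * ‖p - T x0‖ ≤ 1 / c * r := by gcongr
          _ = R / 2 := by rw [hr]; field_simp
      obtain ⟨X, h1, h2, h3⟩ := H.legendre hTs hc hTc hR hm hm16 (Ti1 p) hy
      exact ⟨X, fun _ => ⟨h1, h2, h3⟩⟩
    · exact ⟨0, fun h => absurd h hp⟩
  choose X hX using hXex
  have hball : Metric.ball x0 R ⊆ Metric.closedBall x0 R := Metric.ball_subset_closedBall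
  have hexp : ∀ x ∈ Metric.ball x0 R, ∀ y ∈ Metric.ball x0 R, c * ‖x - y‖ ≤ ‖G x - G y‖ :=
    fun x hx y hy => H.expand (convex_ball x0 R) (fun z hz => hNc z (hball hz)) hx hy
  have hXlip : ∀ p ∈ Metric.ball p0 r, ∀ p' ∈ Metric.ball p0 r, c * ‖X p - X p'‖ ≤ ‖p - p'‖ := by
    intro p hp p' hp'
    have := hexp _ (hX p hp).1 _ (hX p' hp').1
    rwa [(hX p hp).2.1, (hX p' hp').2.1] at this
  have hXN : ∀ p ∈ Metric.ball p0 r, Coer c (N (X p)) := fun p hp => hNc _ (hball (hX p hp).1)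
  have hXd : ∀ p ∈ Metric.ball p0 r, HasFDerivAt X (N (X p)).inverse p := fun p hp =>
    H.hasFDerivAt_inv hc Metric.isOpen_ball (fun p hp => (hX p hp).2.1) hXN hXlip hp
  -- `W` is the Legendre transform of `U` minus that of the quadratic; its Hessian is `Q`
  set W : E2 → ℝ := fun p => inner ℝ p (X p) - U (X p) - inner ℝ p (T.inverse p) / 2 with hW
  have hWd : ∀ p ∈ Metric.ball p0 r, HasFDerivAt W (innerSL ℝ (X p - T.inverse p)) p := fun p hp =>
    H.hasFDerivAt_legendre (hX p hp).2.1 (hXd p hp) (hTs.inverse hc hTc)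
  set Q : E2 → E2 →L[ℝ] E2 := fun p => (N (X p)).inverse - T.inverse with hQ
  have hgd : ∀ p ∈ Metric.ball p0 r, HasFDerivAt (fun p => X p - T.inverse p) (Q p) p :=
    fun p hp => (hXd p hp).sub T.inverse.hasFDerivAt
  set a : E2 → ℝ := fun p => inner ℝ (Q p ex) ex with ha
  set b : E2 → ℝ := fun p => inner ℝ (Q p ey) ey with hb
  set q : E2 → ℝ := fun p => inner ℝ (Q p (ex + ey)) (ex + ey) with hq
  have hsub : ∀ p p' u v, inner ℝ (Q p u) v - inner ℝ (Q p' u) v =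
      inner ℝ (((N (X p)).inverse - (N (X p')).inverse) u) v := fun p p' u v => by
    simp [hQ, inner_sub_left]
  have hosc1 : ∀ p p', osc a b q p p' ≤ 6 * ‖(N (X p)).inverse - (N (X p')).inverse‖ := by
    intro p p'
    obtain ⟨h1, h2, -, h4⟩ := quad_form_le (Q := (N (X p)).inverse - (N (X p')).inverse)
    unfold osc
    simp only [ha, hb, hq, hsub]
    linarith
  have hosc2 : ∀ p ∈ Metric.ball p0 r, ∀ p' ∈ Metric.ball p0 r,
      ‖(N (X p)).inverse - (N (X p')).inverse‖ ≤ 3 * osc a b q p p' := by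
    intro p hp p' hp'
    have := (((hNs (X p)).inverse hc (hXN p hp)).sub
      ((hNs (X p')).inverse hc (hXN p' hp'))).norm_le
    unfold osc
    simp only [ha, hb, hq, hsub]
    exact this
  have hdist : ∀ p ∈ Metric.ball p0 r, ∀ p' ∈ Metric.ball p0 r,
      ‖p - p'‖ ≤ (2 * r) ^ (1 - α) * ‖p - p'‖ ^ α := by
    intro p hp p' hp'
    refine le_rpow_split hα (norm_nonneg _) ?_
    rw [Metric.mem_ball, dist_eq_norm] at hp hp'
    have := norm_sub_le_norm_sub_add_norm_sub p p0 p'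
    rw [norm_sub_rev p0 p'] at this
    linarith
  -- the constant `Λ` is not under control; only its finiteness matters, for the absorption
  have hapriori : ∃ Λ, ∀ p ∈ Metric.ball p0 r, ∀ p' ∈ Metric.ball p0 r,
      osc a b q p p' ≤ Λ * ‖p - p'‖ ^ α := by
    obtain ⟨K, hK⟩ := hNlip
    refine ⟨6 * (1 / c ^ 2 * (|K| * (1 / c * (2 * r) ^ (1 - α)))), fun p hp p' hp' => ?_⟩
    have h1 := norm_inverse_sub_le hc (hXN p hp) (hXN p' hp')
    have h2 := hK _ (hball (hX p hp).1) _ (hball (hX p' hp').1)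
    have h3 : ‖X p - X p'‖ ≤ 1 / c * ‖p - p'‖ := by
      rw [one_div, inv_mul_eq_div, le_div_iff₀ hc]; linarith [hXlip p hp p' hp']
    calc osc a b q p p' ≤ 6 * (1 / c ^ 2 * (|K| * (1 / c * ((2 * r) ^ (1 - α) * ‖p - p'‖ ^ α)))) := by
          refine (hosc1 p p').trans ?_
          gcongr
          refine h1.trans ?_
          gcongr
          refine h2.trans ?_
          gcongr
          · exact le_abs_self K
          · refine h3.trans ?_
            gcongr
            exact hdist p hp p' hp'
      _ = _ := by ring
  set K := A1 * (F / R * (1 / c * (2 * r) ^ (1 - α))) with hKd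
  have hK0 : 0 ≤ K := by positivity
  -- the Laplacian of `W` oscillates like `f`, up to a small multiple of the Hessian oscillation
  have hlap : ∀ p ∈ Metric.ball p0 r, ∀ p' ∈ Metric.ball p0 r,
      |(a p + b p) - (a p' + b p')| ≤ K * ‖p - p'‖ ^ α + δ * osc a b q p p' := by
    intro p hp p' hp'
    have hb1 := (hXN p hp).norm_inverse_le hc
    have hb2 := (hXN p' hp').norm_inverse_le hc
    obtain ⟨x1, x2, x3, -⟩ := quad_form_le (Q := (N (X p)).inverse)
    obtain ⟨y1, y2, y3, -⟩ := quad_form_le (Q := (N (X p')).inverse)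
    have ho : |inner ℝ ((N (X p)).inverse ex) ex - inner ℝ ((N (X p')).inverse ex) ex|
        + |inner ℝ ((N (X p)).inverse ey) ey - inner ℝ ((N (X p')).inverse ey) ey|
        + 2 * |inner ℝ ((N (X p)).inverse ex) ey - inner ℝ ((N (X p')).inverse ex) ey|
        ≤ 3 * osc a b q p p' := by
      set D := (N (X p)).inverse - (N (X p')).inverse with hD
      have hDs : Symm D := ((hNs (X p)).inverse hc (hXN p hp)).sub
        ((hNs (X p')).inverse hc (hXN p' hp'))
      have e0 : ∀ u v, inner ℝ ((N (X p)).inverse u) v - inner ℝ ((N (X p')).inverse u) v =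
        inner ℝ (D u) v := fun u v => by simp [hD, inner_sub_left]
      have e1 : inner ℝ (D (ex + ey)) (ex + ey) =
          inner ℝ (D ex) ex + 2 * inner ℝ (D ex) ey + inner ℝ (D ey) ey := by
        have : inner ℝ (D ey) ex = inner ℝ (D ex) ey := by rw [hDs, real_inner_comm]
        rw [map_add, inner_add_left, inner_add_right, inner_add_right, this]; ring
      unfold osc
      simp only [ha, hb, hq, hsub, e0]
      rw [← hD]
      set d1 := inner ℝ (D ex) ex
      set d2 := inner ℝ (D ex) ey
      set d3 := inner ℝ (D ey) ey
      set d4 := inner ℝ (D (ex + ey)) (ex + ey)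
      have h2 : 2 * |d2| ≤ |d4| + |d1| + |d3| := by
        have : 2 * d2 = d4 - d1 - d3 := by rw [e1]; ring
        calc 2 * |d2| = |d4 - d1 - d3| := by rw [← this, abs_mul]; simp
          _ ≤ |d4 - d1| + |d3| := abs_sub _ _
          _ ≤ |d4| + |d1| + |d3| := by gcongr; exact abs_sub _ _
      linarith [abs_nonneg d1, abs_nonneg d3, abs_nonneg d4]
    have htd := trace_diff hs (heta _ ((hf _ (hX p hp).1).trans hη1')).1 (by positivity : 0 ≤ 1 / c)
      (x1.trans hb1) (x3.trans hb1) (x2.trans hb1) (y1.trans hb2) (y3.trans hb2) (y2.trans hb2)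
      (htr _ (hX p hp).1) (htr _ (hX p' hp').1) ho
    have e : (a p + b p) - (a p' + b p') =
        (inner ℝ ((N (X p)).inverse ex) ex + inner ℝ ((N (X p)).inverse ey) ey) -
        (inner ℝ ((N (X p')).inverse ex) ex + inner ℝ ((N (X p')).inverse ey) ey) := by
      simp only [ha, hb, hQ, sub_apply, inner_sub_left]; ring
    rw [e]
    refine htd.trans (add_le_add ?_ ?_)
    · rw [← hA1]
      have h1 := hflip _ (hX p hp).1 _ (hX p' hp').1
      have h3 : ‖X p - X p'‖ ≤ 1 / c * ‖p - p'‖ := by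
        rw [one_div, inv_mul_eq_div, le_div_iff₀ hc]; linarith [hXlip p hp p' hp']
      calc A1 * |f (X p) - f (X p')| ≤ A1 * (F / R * (1 / c * ((2 * r) ^ (1 - α) * ‖p - p'‖ ^ α))) := by
            gcongr
            refine h1.trans ?_
            gcongr
            refine h3.trans ?_
            gcongr
            exact hdist p hp p' hp'
        _ = _ := by rw [hKd]; ring
    · rw [← hA2]
      refine mul_le_mul_of_nonneg_right ?_ (osc_nonneg _ _ _ _ _)
      have h1 := (hf _ (hX p' hp').1).trans hη3
      rw [le_div_iff₀ hA20] at h1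
      linarith
  have hmain := hschauder p0 r m K W a b q hr0 hm0 hK0 (dd_of_fderiv hWd hgd ex)
    (dd_of_fderiv hWd hgd ey) (dd_of_fderiv hWd hgd (ex + ey))
    (fun p hp => (hWd p hp).continuousAt.continuousWithinAt)
    (fun p hp => (hX p hp).2.2) hapriori hlap
  have hKr : m + K * (r ^ 2 * r ^ α) ≤ r ^ 2 * (C' * (m / R ^ 2 + F)) := by
    have h1 : (2 * r) ^ (1 - α) * r ^ α ≤ 2 * r := by
      calc (2 * r) ^ (1 - α) * r ^ α ≤ (2 * r) ^ (1 - α) * (2 * r) ^ α := by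
            have := hα.1
            gcongr
            linarith
        _ = 2 * r := by rw [← Real.rpow_add (by positivity)]; simp
    have h2 : K * (r ^ 2 * r ^ α) ≤ A1 * F * r ^ 2 := by
      calc K * (r ^ 2 * r ^ α) = A1 * (F / R * (1 / c * ((2 * r) ^ (1 - α) * r ^ α))) * r ^ 2 := by
            rw [hKd]; ring
        _ ≤ A1 * (F / R * (1 / c * (2 * r))) * r ^ 2 := by gcongr
        _ = A1 * F * r ^ 2 := by rw [hr]; field_simp
    have h3 : r ^ 2 * (4 / c ^ 2 * (m / R ^ 2)) = m := by rw [hr]; field_simp; norm_num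
    have h4 : 0 ≤ r ^ 2 * (4 / c ^ 2 * F) := by positivity
    have h5 : 0 ≤ r ^ 2 * (A1 * (m / R ^ 2)) := by positivity
    rw [hC']
    linarith
  set Y := m / R ^ 2 + F with hY
  have hY0 : 0 ≤ Y := by positivity
  have hrα : 0 < r ^ α := by positivity
  have hD0 : 0 < (2 / c) ^ α := by positivity
  -- the gradient maps the small ball into the domain of the Schauder estimate
  have hG : ∀ x ∈ Metric.ball x0 (τ * R), x ∈ Metric.ball x0 R ∧ G x ∈ Metric.ball p0 (r / 2) := by
    intro x hx
    rw [Metric.mem_ball, dist_eq_norm] at hx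
    have hτR : τ * R ≤ 1 / 8 * R := by gcongr
    have hxb : x ∈ Metric.ball x0 R := by rw [Metric.mem_ball, dist_eq_norm]; linarith
    refine ⟨hxb, ?_⟩
    have hcb : Metric.closedBall x (τ * R) ⊆ Metric.closedBall x0 R :=
      Metric.closedBall_subset_closedBall' (by rw [dist_eq_norm]; linarith)
    have h1 := H.near_grad hc.le hNc hTs hTL hm (by positivity : 0 < τ * R) hcb
    have h2 : ‖G x - T x‖ ≤ c * R / 16 + L * (τ * R) / 2 := by
      refine le_of_mul_le_mul_left (h1.trans ?_) (by positivity : 0 < τ * R)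
      nlinarith
    have h3 : ‖T x - p0‖ ≤ L * (τ * R) := by
      rw [hp0, ← map_sub]
      exact (T.le_opNorm _).trans (by gcongr)
    rw [Metric.mem_ball, dist_eq_norm]
    have h4 := norm_sub_le_norm_sub_add_norm_sub (G x) (T x) p0
    have h5 : L * (τ * R) < c / 8 * R := by rw [← mul_assoc]; gcongr
    rw [hr]
    linarith
  have hXG : ∀ x ∈ Metric.ball x0 (τ * R), X (G x) = x := by
    intro x hx
    obtain ⟨hx1, hx2⟩ := hG x hx
    have hx3 := Metric.ball_subset_ball (by linarith : r / 2 ≤ r) hx2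
    have h1 := hexp _ (hX _ hx3).1 _ hx1
    rw [(hX _ hx3).2.1, sub_self, norm_zero] at h1
    have : ‖X (G x) - x‖ ≤ 0 := by nlinarith
    exact sub_eq_zero.1 (norm_le_zero_iff.1 this)
  intro x hx
  obtain ⟨hx1, hx2⟩ := hG x hx
  have hx3 := Metric.ball_subset_ball (by linarith : r / 2 ≤ r) hx2
  obtain ⟨m1, m2⟩ := hmain _ hx2
  refine ⟨?_, fun y hy => ?_⟩
  · have h1 := (((hNs x).inverse hc (hNc x (hball hx1))).sub (hTs.inverse hc hTc)).norm_le
    have h2 : |a (G x)| + |b (G x)| + |q (G x)| ≤ Cs * (C' * Y) := by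
      refine le_of_mul_le_mul_left (m1.trans ?_) (by positivity : 0 < r ^ 2)
      have := mul_le_mul_of_nonneg_left hKr hCs.le
      linarith
    simp only [ha, hb, hq, hQ, hXG x hx] at h2
    have h3 : 0 ≤ 3 * (Cs * (C' * Y)) * (2 / c) ^ α := by positivity
    linarith
  · obtain ⟨hy1, hy2⟩ := hG y hy
    have hy3 := Metric.ball_subset_ball (by linarith : r / 2 ≤ r) hy2
    have h1 := hosc2 _ hx3 _ hy3
    rw [hXG x hx, hXG y hy] at h1
    have h2 := m2 _ hy2
    have h3 : r ^ α * osc a b q (G x) (G y) ≤ Cs * (C' * Y) * ‖G x - G y‖ ^ α := by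
      refine le_of_mul_le_mul_left (a := r ^ 2) ?_ (by positivity)
      calc r ^ 2 * (r ^ α * osc a b q (G x) (G y)) = r ^ 2 * r ^ α * osc a b q (G x) (G y) := by ring
        _ ≤ _ := h2
        _ ≤ Cs * (r ^ 2 * (C' * Y)) * ‖G x - G y‖ ^ α := by gcongr
        _ = _ := by ring
    have hRr : R ^ α = (2 / c) ^ α * r ^ α := by
      rw [← Real.mul_rpow (by positivity) (by positivity), hr]
      congr 1; field_simp
    rw [hRr]
    calc (2 / c) ^ α * r ^ α * ‖(N x).inverse - (N y).inverse‖
        ≤ (2 / c) ^ α * r ^ α * (3 * osc a b q (G x) (G y)) := by gcongr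
      _ = (2 / c) ^ α * (3 * (r ^ α * osc a b q (G x) (G y))) := by ring
      _ ≤ (2 / c) ^ α * (3 * (Cs * (C' * Y) * ‖G x - G y‖ ^ α)) := by gcongr
      _ = 3 * Cs * C' * (2 / c) ^ α * Y * ‖G x - G y‖ ^ α := by ring
      _ ≤ _ := by
        gcongr
        linarith

/-- The interior estimate of `local_est` expressed through the Hessian itself. -/
lemma local_hess {α θ c L : ℝ} (hα : α ∈ Set.Ioo (0 : ℝ) 1) (hθ : θ ∈ Set.Ioo 0 π) (hc : 0 < c)
    (hL : 0 < L) : ∃ η > 0, ∃ γ > 0, ∃ C > 0, γ ≤ 1 / 8 ∧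
    ∀ (U : E2 → ℝ) (G : E2 → E2) (N : E2 → E2 →L[ℝ] E2) (T : E2 →L[ℝ] E2) (f : E2 → ℝ) (x0 : E2)
      (R m F : ℝ), GradHess U G N → (∀ x, Symm (N x)) → Symm T → Coer c T → ‖T‖ ≤ L → 0 < R →
    (∀ x ∈ Metric.closedBall x0 R, Coer c (N x)) →
    (∃ K, ∀ x ∈ Metric.closedBall x0 R, ∀ y ∈ Metric.closedBall x0 R,
      ‖N x - N y‖ ≤ K * ‖x - y‖) →
    (∀ x ∈ Metric.closedBall x0 R, |U x - quad T x| ≤ m) →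
    (∀ x ∈ Metric.ball x0 R, |f x| ≤ η) → 0 ≤ F →
    (∀ x ∈ Metric.ball x0 R, ∀ y ∈ Metric.ball x0 R, |f x - f y| ≤ F / R * ‖x - y‖) →
    (∀ x ∈ Metric.ball x0 R,
      sin (θ / 2 + f x) * (inner ℝ ((N x).inverse ex) ex + inner ℝ ((N x).inverse ey) ey) =
      sin (θ / 2) * sin (θ + f x) +
        (inner ℝ ((N x).inverse ex) ex * inner ℝ ((N x).inverse ey) ey
          - inner ℝ ((N x).inverse ex) ey ^ 2) * sin (f x) / sin (θ / 2)) →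
    m / R ^ 2 + F ≤ η →
    ∀ x ∈ Metric.ball x0 (γ * R),
      ‖N x - T‖ ≤ C * (m / R ^ 2 + F) ∧
      ∀ y ∈ Metric.ball x0 (γ * R),
        R ^ α * ‖N x - N y‖ ≤ C * (m / R ^ 2 + F) * ‖x - y‖ ^ α := by
  obtain ⟨η, hη, γ, hγ, C, hC, hγ8, hmain⟩ := local_est hα hθ hc hL.le
  refine ⟨min η (1 / (2 * L * C)), by positivity, γ, hγ, 2 * L ^ 2 * C + 4 * L ^ 2 * C * (2 * L) ^ α,
    by positivity, hγ8, ?_⟩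
  intro U G N T f x0 R m F H hNs hTs hTc hTL hR hNc hNlip hm hf hF hflip htr hmF
  have hm0 : 0 ≤ m := (abs_nonneg _).trans (hm x0 (Metric.mem_closedBall_self hR.le))
  have hm1 : m ≤ η * R ^ 2 := by
    rw [← div_le_iff₀ (by positivity)]
    linarith [hmF.trans (min_le_left _ _)]
  have hY := hmF.trans (min_le_right _ _)
  have est := hmain U G N T f x0 R m F H hNs hTs hTc hTL hR hNc hNlip hm
    (fun x hx => (hf x hx).trans (min_le_left _ _)) hF hflip htr hm1
  set Y := m / R ^ 2 + F
  have hY0 : 0 ≤ Y := by positivity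
  rw [le_div_iff₀ (by positivity)] at hY
  have hin : ∀ x ∈ Metric.ball x0 (γ * R), x ∈ Metric.closedBall x0 R := fun x hx => by
    rw [Metric.mem_ball] at hx
    rw [Metric.mem_closedBall]
    nlinarith
  have hsubN : ∀ S S' : E2 →L[ℝ] E2, Coer c S → Coer c S' →
      ‖S - S'‖ ≤ ‖S‖ * ‖S.inverse - S'.inverse‖ * ‖S'‖ := by
    intro S S' hS hS'
    have e : S - S' = S.comp ((S'.inverse - S.inverse).comp S') := by
      ext1 h
      simp [(hS'.inverse hc).2.1, (hS.inverse hc).1]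
    rw [norm_sub_rev S.inverse, mul_assoc]
    calc ‖S - S'‖ = ‖S.comp ((S'.inverse - S.inverse).comp S')‖ := by rw [← e]
      _ ≤ ‖S‖ * ‖(S'.inverse - S.inverse).comp S'‖ := ContinuousLinearMap.opNorm_comp_le _ _
      _ ≤ _ := by gcongr; exact ContinuousLinearMap.opNorm_comp_le _ _
  have hNb : ∀ x ∈ Metric.ball x0 (γ * R), ‖N x‖ ≤ 2 * L := by
    intro x hx
    have h1 := hsubN _ _ (hNc x (hin x hx)) hTc
    have h2 := (est x hx).1
    have h3 : ‖N x‖ * ‖(N x).inverse - T.inverse‖ * ‖T‖ ≤ ‖N x‖ * (C * Y) * L := by gcongr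
    have h4 : ‖N x‖ * (C * Y * L) ≤ ‖N x‖ * (1 / 2) := by gcongr; linarith
    have h5 := norm_sub_norm_le (N x) T
    linarith
  intro x hx
  refine ⟨?_, fun y hy => ?_⟩
  · have h1 := hsubN _ _ (hNc x (hin x hx)) hTc
    have h3 : ‖N x‖ * ‖(N x).inverse - T.inverse‖ * ‖T‖ ≤ 2 * L * (C * Y) * L := by
      gcongr
      · exact hNb x hx
      · exact (est x hx).1
    have h4 : 0 ≤ 4 * L ^ 2 * C * (2 * L) ^ α * Y := by positivity
    linarith
  · have h1 := hsubN _ _ (hNc x (hin x hx)) (hNc y (hin y hy))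
    have hG : ‖G x - G y‖ ≤ 2 * L * ‖x - y‖ :=
      (convex_ball x0 (γ * R)).norm_image_sub_le_of_norm_hasFDerivWithin_le
        (fun z _ => (H.hess z).hasFDerivWithinAt) hNb hy hx
    have h2 := (est x hx).2 y hy
    have hα0 := hα.1.le
    have h3 : ‖G x - G y‖ ^ α ≤ (2 * L) ^ α * ‖x - y‖ ^ α := by
      rw [← Real.mul_rpow (by positivity) (norm_nonneg _)]
      gcongr
    have hx2 := hNb x hx
    have hy2 := hNb y hy
    calc R ^ α * ‖N x - N y‖
        ≤ R ^ α * (2 * L * ‖(N x).inverse - (N y).inverse‖ * (2 * L)) := by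
          gcongr
          exact h1.trans (by gcongr)
      _ = 4 * L ^ 2 * (R ^ α * ‖(N x).inverse - (N y).inverse‖) := by ring
      _ ≤ 4 * L ^ 2 * (C * Y * ((2 * L) ^ α * ‖x - y‖ ^ α)) := by
          exact mul_le_mul_of_nonneg_left
            (h2.trans (mul_le_mul_of_nonneg_left h3 (by positivity))) (by positivity)
      _ = (4 * L ^ 2 * C * (2 * L) ^ α) * (Y * ‖x - y‖ ^ α) := by ring
      _ ≤ (2 * L ^ 2 * C + 4 * L ^ 2 * C * (2 * L) ^ α) * (Y * ‖x - y‖ ^ α) := by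
          gcongr
          linarith [(by positivity : 0 ≤ 2 * L ^ 2 * C)]
      _ = _ := by ring

/-! ### Gradient and Hessian fields of a smooth function -/

lemma iteratedFDeriv_two_eq {U : E2 → ℝ} {G : E2 → E2} {N : E2 → E2 →L[ℝ] E2} (H : GradHess U G N)
    (x : E2) (v : Fin 2 → E2) : iteratedFDeriv ℝ 2 U x v = inner ℝ (N x (v 0)) (v 1) := by
  have h1 : fderiv ℝ U = fun y => innerSL ℝ (G y) := funext fun y => (H.grad y).fderiv
  have h2 : HasFDerivAt (fun y => innerSL ℝ (G y)) ((innerSL ℝ).comp (N x)) x :=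
    (innerSL ℝ).hasFDerivAt.comp x (H.hess x)
  rw [iteratedFDeriv_two_apply, h1, h2.fderiv]
  rfl

lemma norm_iteratedFDeriv_one_eq {U : E2 → ℝ} {G : E2 → E2} {N : E2 → E2 →L[ℝ] E2}
    (H : GradHess U G N) (x : E2) : ‖iteratedFDeriv ℝ 1 U x‖ = ‖G x‖ := by
  rw [norm_iteratedFDeriv_one, (H.grad x).fderiv, innerSL_apply_norm]

lemma norm_iteratedFDeriv_two_le {U : E2 → ℝ} {G : E2 → E2} {N : E2 → E2 →L[ℝ] E2}
    (H : GradHess U G N) (x : E2) : ‖iteratedFDeriv ℝ 2 U x‖ ≤ ‖N x‖ := by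
  refine ContinuousMultilinearMap.opNorm_le_bound (norm_nonneg _) fun v => ?_
  rw [iteratedFDeriv_two_eq H, Fin.prod_univ_two, ← mul_assoc]
  exact (norm_inner_le_norm _ _).trans (by gcongr; exact (N x).le_opNorm _)

lemma norm_iteratedFDeriv_two_sub_le {U : E2 → ℝ} {G : E2 → E2} {N : E2 → E2 →L[ℝ] E2}
    (H : GradHess U G N) (x y : E2) :
    ‖iteratedFDeriv ℝ 2 U x - iteratedFDeriv ℝ 2 U y‖ ≤ ‖N x - N y‖ := by
  refine ContinuousMultilinearMap.opNorm_le_bound (norm_nonneg _) fun v => ?_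
  rw [sub_apply, iteratedFDeriv_two_eq H, iteratedFDeriv_two_eq H, Fin.prod_univ_two,
    ← mul_assoc, ← inner_sub_left, ← sub_apply]
  exact (norm_inner_le_norm _ _).trans (by gcongr; exact (N x - N y).le_opNorm _)

lemma lip_of_contDiff {F : Type*} [NormedAddCommGroup F] [NormedSpace ℝ F] {N : E2 → F}
    (hN : ContDiff ℝ (⊤ : ℕ∞) N) (x0 : E2) (R : ℝ) :
    ∃ K, ∀ x ∈ Metric.closedBall x0 R, ∀ y ∈ Metric.closedBall x0 R,
      ‖N x - N y‖ ≤ K * ‖x - y‖ := by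
  have hd := hN.differentiable (by simp)
  have hcont : Continuous fun x => ‖fderiv ℝ N x‖ := (hN.continuous_fderiv (by simp)).norm
  obtain ⟨K, hK⟩ := (isCompact_closedBall x0 R).bddAbove_image hcont.continuousOn
  rw [mem_upperBounds, Set.forall_mem_image] at hK
  exact ⟨K, fun x hx y hy => (convex_closedBall x0 R).norm_image_sub_le_of_norm_fderiv_le
    (fun z _ => hd z) (fun z hz => hK hz) hy hx⟩

/-- A smooth function has gradient and Hessian fields, the Hessian being symmetric and locally
Lipschitz. -/
lemma exists_gradHess {u : E2 → ℝ} (hu : ContDiff ℝ (⊤ : ℕ∞) u) :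
    ∃ (G : E2 → E2) (N : E2 → E2 →L[ℝ] E2), GradHess u G N ∧ (∀ x, Symm (N x)) ∧
      ∀ x0 R, ∃ K, ∀ x ∈ Metric.closedBall x0 R, ∀ y ∈ Metric.closedBall x0 R,
        ‖N x - N y‖ ≤ K * ‖x - y‖ := by
  obtain ⟨I, hin⟩ : ∃ I : StrongDual ℝ E2 →L[ℝ] E2,
      ∀ (l : StrongDual ℝ E2) (k : E2), inner ℝ (I l) k = l k := by
    refine ⟨⟨⟨⟨(InnerProductSpace.toDual ℝ E2).symm, fun a b => map_add _ a b⟩, fun a b => ?_⟩,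
      (InnerProductSpace.toDual ℝ E2).symm.continuous⟩, fun l k => ?_⟩
    · simp
    · exact InnerProductSpace.toDual_symm_apply
  have h1 : ContDiff ℝ (⊤ : ℕ∞) (fderiv ℝ u) := hu.fderiv_right (m := (⊤ : ℕ∞)) (by simp)
  have h2 : ContDiff ℝ (⊤ : ℕ∞) (fderiv ℝ (fderiv ℝ u)) :=
    h1.fderiv_right (m := (⊤ : ℕ∞)) (by simp)
  have hN : ContDiff ℝ (⊤ : ℕ∞) fun x => I.comp (fderiv ℝ (fderiv ℝ u) x) :=
    contDiff_const.clm_comp h2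
  have H : GradHess u (fun x => I (fderiv ℝ u x)) (fun x => I.comp (fderiv ℝ (fderiv ℝ u) x)) :=
    { grad := fun x => ((hu.differentiable (by simp)) x).hasFDerivAt.congr_fderiv (by
        ext k; simp [hin])
      hess := fun x => I.hasFDerivAt.comp x ((h1.differentiable (by simp)) x).hasFDerivAt }
  refine ⟨_, _, H, fun x h k => ?_, fun x0 R => ?_⟩
  · have hs : IsSymmSndFDerivAt ℝ u x :=
      hu.contDiffAt.isSymmSndFDerivAt (by
        simp only [minSmoothness_of_isRCLikeNormedField]; exact ENat.LEInfty.out)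
    simp only [ContinuousLinearMap.comp_apply]
    rw [hin, real_inner_comm, hin]
    exact hs h k
  · exact lip_of_contDiff hN x0 R

/-! ### From the phase equation to the Legendre side -/

lemma form_eq {S : E2 →L[ℝ] E2} (hS : Symm S) (h : E2) :
    inner ℝ (S h) h = inner ℝ (S ex) ex * h 0 ^ 2 + 2 * inner ℝ (S ex) ey * h 0 * h 1 +
      inner ℝ (S ey) ey * h 1 ^ 2 := by
  have e : inner ℝ (S ey) ex = inner ℝ (S ex) ey := by rw [hS, real_inner_comm]
  conv_lhs => rw [decomp h]
  simp only [map_add, map_smul, inner_add_left, inner_add_right, real_inner_smul_left,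
    real_inner_smul_right, e]
  ring

lemma inner_shift (S : E2 →L[ℝ] E2) (κ : ℝ) (h k : E2) :
    inner ℝ ((S + κ • ContinuousLinearMap.id ℝ E2) h) k = inner ℝ (S h) k + κ * inner ℝ h k := by
  simp [inner_add_left, real_inner_smul_left]

lemma Symm.shift {S : E2 →L[ℝ] E2} (hS : Symm S) (κ : ℝ) :
    Symm (S + κ • ContinuousLinearMap.id ℝ E2) := fun h k => by
  rw [real_inner_comm _ h, inner_shift, inner_shift, hS h k, real_inner_comm h k,
    real_inner_comm h]

/-- A lower bound for the phase gives convexity of the function shifted by a quadratic. -/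
lemma coer_of_phase {θ Θ : ℝ} {S : E2 →L[ℝ] E2} {M : Matrix (Fin 2) (Fin 2) ℝ} (hS : Symm S)
    (h00 : M 0 0 = inner ℝ (S ex) ex) (h01 : M 0 1 = inner ℝ (S ex) ey)
    (h11 : M 1 1 = inner ℝ (S ey) ey) (hΘ : Θ ∈ Set.Ioo 0 π) (hM : Phase M = Θ)
    (hk : 1 / (2 * sin θ) ≤ kap θ - cos Θ / sin Θ) :
    Coer (1 / (2 * sin θ)) (S + kap θ • ContinuousLinearMap.id ℝ E2) := fun h => by
  have h1 := (phase_alg hΘ hM).2 (h 0) (h 1)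
  have h2 := form_eq hS h
  have h3 : ‖h‖ ^ 2 = h 0 ^ 2 + h 1 ^ 2 := by
    rw [EuclideanSpace.norm_sq_eq]; simp [Fin.sum_univ_two]
  rw [inner_shift, real_inner_self_eq_norm_sq, h2, h3, ← h00, ← h01, ← h11]
  have h4 := mul_le_mul_of_nonneg_right hk (by positivity : 0 ≤ h 0 ^ 2 + h 1 ^ 2)
  linarith

/-- The phase equation in terms of the inverse of the shifted Hessian. -/
lemma trace_of_phase {θ t c : ℝ} {S : E2 →L[ℝ] E2} {M : Matrix (Fin 2) (Fin 2) ℝ} (hS : Symm S)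
    (h00 : M 0 0 = inner ℝ (S ex) ex) (h01 : M 0 1 = inner ℝ (S ex) ey)
    (h11 : M 1 1 = inner ℝ (S ey) ey) (hΘ : θ + t ∈ Set.Ioo 0 π) (hM : Phase M = θ + t)
    (hθ : 0 < sin (θ / 2)) (hc : 0 < c) {N : E2 →L[ℝ] E2}
    (hN : N = S + kap θ • ContinuousLinearMap.id ℝ E2) (hNc : Coer c N) :
    sin (θ / 2 + t) * (inner ℝ (N.inverse ex) ex + inner ℝ (N.inverse ey) ey) =
      sin (θ / 2) * sin (θ + t) +
        (inner ℝ (N.inverse ex) ex * inner ℝ (N.inverse ey) ey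
          - inner ℝ (N.inverse ex) ey ^ 2) * sin t / sin (θ / 2) := by
  have hNs : Symm N := hN ▸ hS.shift _
  have hP := hNs.inverse hc hNc
  have hxx : inner ℝ ex ex = (1 : ℝ) := by simp [ex]
  have hyy : inner ℝ ey ey = (1 : ℝ) := by simp [ey]
  have hxy : inner ℝ ex ey = (0 : ℝ) := by simp [ex, ey, EuclideanSpace.inner_single_right]
  have hyx : inner ℝ ey ex = (0 : ℝ) := by simp [ex, ey, EuclideanSpace.inner_single_right]
  have co : ∀ v : E2, v = (inner ℝ v ex : ℝ) • ex + (inner ℝ v ey : ℝ) • ey := fun v => by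
    conv_lhs => rw [decomp v]
    simp [ex, ey, EuclideanSpace.inner_single_right]
  have e : inner ℝ (N.inverse ey) ex = inner ℝ (N.inverse ex) ey := by rw [hP, real_inner_comm]
  have eS : inner ℝ (S ey) ex = inner ℝ (S ex) ey := by rw [hS, real_inner_comm]
  have key : ∀ v k : E2, inner ℝ v k = inner ℝ (N.inverse v) ex * inner ℝ (N ex) k +
      inner ℝ (N.inverse v) ey * inner ℝ (N ey) k := fun v k => by
    conv_lhs => rw [← (hNc.inverse hc).1 v, co (N.inverse v)]
    simp only [map_add, map_smul, inner_add_left, real_inner_smul_left]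
  have k1 := key ex ex
  have k2 := key ex ey
  have k3 := key ey ex
  have k4 := key ey ey
  simp only [hN, inner_shift, hxx, hyy, hxy, hyx, eS] at k1 k2 k3 k4
  rw [← hN, ← h00, ← h01] at k1
  rw [← hN, ← h01, ← h11] at k2
  rw [← hN, e, ← h00, ← h01] at k3
  rw [← hN, e, ← h01, ← h11] at k4
  exact inv_trace hθ ((phase_alg hΘ hM).1) (m11 := M 0 0) (m12 := M 0 1) (m22 := M 1 1)
    (by linarith) (by linarith) (by linarith) (by linarith)

lemma exists_of_matrix {A : Matrix (Fin 2) (Fin 2) ℝ} (hA : A.IsSymm) : ∃ S : E2 →L[ℝ] E2,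
    Symm S ∧ A 0 0 = inner ℝ (S ex) ex ∧ A 0 1 = inner ℝ (S ex) ey ∧ A 1 1 = inner ℝ (S ey) ey ∧
      ∀ x, inner ℝ (S x) x = quadForm A x := by
  have h10 : A 1 0 = A 0 1 := hA.apply 0 1
  have hS : ∀ h k : E2, inner ℝ (LinearMap.toContinuousLinearMap (Matrix.toEuclideanLin A) h) k =
      A 0 0 * h 0 * k 0 + A 0 1 * (h 0 * k 1 + h 1 * k 0) + A 1 1 * h 1 * k 1 := fun h k => by
    simp [PiLp.inner_apply, Fin.sum_univ_two, Matrix.toLpLin_apply, h10]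
    ring
  refine ⟨LinearMap.toContinuousLinearMap (Matrix.toEuclideanLin A), fun h k => ?_, ?_, ?_, ?_,
    fun x => ?_⟩
  · rw [hS, real_inner_comm, hS]; ring
  · rw [hS]; simp [ex]
  · rw [hS]; simp [ex, ey]
  · rw [hS]; simp [ey]
  · rw [hS]; simp [quadForm, Fin.sum_univ_two, h10]; ring

/-- The decay condition as a pointwise bound and a Lipschitz bound on large balls. -/
lemma decay_bounds {β : ℝ} {u f : E2 → ℝ} (hβ : 0 < β) (h : DecayCond β u f) :
    ∃ C₀ > 0, ∃ R₀ > 0, ∀ x : E2, R₀ ≤ ‖x‖ → |f x| ≤ C₀ * ‖x‖ ^ (-β) ∧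
      ∀ y ∈ Metric.ball x (‖x‖ / 2), ∀ z ∈ Metric.ball x (‖x‖ / 2),
        |f y - f z| ≤ C₀ * ‖x‖ ^ (-β - 1) * ‖y - z‖ := by
  obtain ⟨C₀, hC₀, R₀, hR₀, h⟩ := h
  refine ⟨C₀, hC₀, R₀, hR₀, fun x hx => ?_⟩
  have hx0 : 0 < ‖x‖ := hR₀.trans_le hx
  have hA : ‖x‖ ≤ ‖x‖ + ‖gradient u x‖ := by linarith [norm_nonneg (gradient u x)]
  have hmain := h x hx
  constructor
  · have h1 := (ENNReal.ofReal_le_ofReal_iff hC₀.le).1 (le_self_add.trans hmain)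
    have h2 : ‖x‖ ^ β * |f x| ≤ C₀ := le_trans (by gcongr) h1
    rw [Real.rpow_neg hx0.le, ← div_eq_mul_inv, le_div_iff₀ (by positivity)]
    linarith
  · intro y hy z hz
    rcases eq_or_ne y z with rfl | hyz
    · simp
    have hyz' : 0 < ‖y - z‖ := norm_pos_iff.2 (sub_ne_zero.2 hyz)
    have h1 : ENNReal.ofReal (‖f y - f z‖ / ‖y - z‖ ^ (1 : ℝ)) ≤
        hSemi 1 (Metric.ball x (‖x‖ / 2)) f := by
      refine le_trans ?_ (le_iSup₂ (f := fun a (_ : a ∈ Metric.ball x (‖x‖ / 2)) =>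
        ⨆ b ∈ Metric.ball x (‖x‖ / 2), ENNReal.ofReal (‖f a - f b‖ / ‖a - b‖ ^ (1 : ℝ))) y hy)
      exact le_iSup₂ (f := fun b (_ : b ∈ Metric.ball x (‖x‖ / 2)) =>
        ENNReal.ofReal (‖f y - f b‖ / ‖y - b‖ ^ (1 : ℝ))) z hz
    have h2 := (mul_le_mul_right h1 (ENNReal.ofReal ((‖x‖ + ‖gradient u x‖) ^ (β + 1)))).trans
      (le_add_self.trans hmain)
    rw [← ENNReal.ofReal_mul (by positivity), ENNReal.ofReal_le_ofReal_iff hC₀.le,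
      Real.rpow_one] at h2
    have h3 : ‖x‖ ^ (β + 1) * (‖f y - f z‖ / ‖y - z‖) ≤ C₀ := le_trans (by gcongr) h2
    rw [show -β - 1 = -(β + 1) by ring, Real.rpow_neg hx0.le, ← div_eq_mul_inv,
      div_mul_eq_mul_div, le_div_iff₀ (by positivity), ← Real.norm_eq_abs]
    rw [← mul_div_assoc, div_le_iff₀ hyz'] at h3
    linarith

/-! ### Decay of all derivatives up to second order -/

/-- Decay of the second derivative of `w` and its Hölder quotient on small balls give the full
estimates: the gradient is interpolated, and far pairs of points only need the decay. -/
lemma full_decay {w : E2 → ℝ} {g : E2 → E2} {Q : E2 → E2 →L[ℝ] E2} (H : GradHess w g Q)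
    {e α C₁ C₄ γ R₂ : ℝ} (he : e ∈ Set.Ioo (0 : ℝ) 1) (hα : α ∈ Set.Ioo (0 : ℝ) 1) (hγ : 0 < γ)
    (hγ8 : γ ≤ 1 / 8) (hC₁ : 0 < C₁) (hC₄ : 0 < C₄) (hR₂ : 1 ≤ R₂)
    (hw : ∀ x : E2, R₂ ≤ ‖x‖ → |w x| ≤ C₁ * ‖x‖ ^ (2 - e))
    (hQ : ∀ x : E2, R₂ ≤ ‖x‖ → ‖Q x‖ ≤ C₄ * ‖x‖ ^ (-e))
    (hQα : ∀ x y : E2, R₂ ≤ ‖x‖ → ‖x - y‖ < γ * (‖x‖ / 4) →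
      (‖x‖ / 4) ^ α * ‖Q x - Q y‖ ≤ C₄ * ‖x‖ ^ (-e) * ‖x - y‖ ^ α) :
    ∃ C > (0 : ℝ), ∃ R₁ > R₂,
      (∀ x : E2, R₁ < ‖x‖ → ∀ k : ℕ, k ≤ 2 →
        ‖iteratedFDeriv ℝ k w x‖ ≤ C * ‖x‖ ^ (2 - k - e))
      ∧ ∀ x₁ x₂ : E2, R₁ < ‖x₁‖ → x₂ ∈ Metric.ball x₁ (‖x₁‖ / 2) →
          ‖iteratedFDeriv ℝ 2 w x₁ - iteratedFDeriv ℝ 2 w x₂‖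
            ≤ C * ‖x₁‖ ^ (-e - α) * ‖x₁ - x₂‖ ^ α := by
  obtain ⟨he0, he1⟩ := he
  obtain ⟨hα0, hα1⟩ := hα
  have hnear : ∀ x y : E2, 2 * R₂ < ‖x‖ → ‖x - y‖ ≤ ‖x‖ / 2 →
      R₂ ≤ ‖y‖ ∧ ‖Q y‖ ≤ 2 * C₄ * ‖x‖ ^ (-e) ∧ |w y| ≤ 4 * C₁ * ‖x‖ ^ (2 - e) := by
    intro x y hx hxy
    have h1 := norm_sub_norm_le x y
    have h2 := norm_sub_norm_le y x
    rw [norm_sub_rev] at h2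
    have hx0 : 0 < ‖x‖ := by linarith
    have hy : R₂ ≤ ‖y‖ := by linarith
    have hy2 : ‖x‖ / 2 ≤ ‖y‖ := by linarith
    have hy3 : ‖y‖ ≤ 2 * ‖x‖ := by linarith
    have hy0 : 0 < ‖y‖ := by linarith
    refine ⟨hy, (hQ y hy).trans ?_, (hw y hy).trans ?_⟩
    · have h3 : ‖y‖ ^ (-e) ≤ (‖x‖ / 2) ^ (-e) :=
        Real.rpow_le_rpow_of_nonpos (by positivity) hy2 (by linarith)
      have h4 : (‖x‖ / 2) ^ (-e) = 2 ^ e * ‖x‖ ^ (-e) := by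
        rw [Real.div_rpow hx0.le (by norm_num), Real.rpow_neg (by norm_num : (0 : ℝ) ≤ 2),
          div_inv_eq_mul, mul_comm]
      have h5 : (2 : ℝ) ^ e ≤ 2 := by
        simpa using Real.rpow_le_rpow_of_exponent_le (by norm_num : (1 : ℝ) ≤ 2) he1.le
      calc C₄ * ‖y‖ ^ (-e) ≤ C₄ * (2 * ‖x‖ ^ (-e)) := by
            gcongr; rw [h4] at h3; exact h3.trans (by gcongr)
        _ = _ := by ring
    · have h5 : (2 : ℝ) ^ (2 - e) ≤ 4 := by
        have := Real.rpow_le_rpow_of_exponent_le (by norm_num : (1 : ℝ) ≤ 2)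
          (by push_cast; linarith : 2 - e ≤ (2 : ℕ))
        rw [Real.rpow_natCast] at this
        linarith
      calc C₁ * ‖y‖ ^ (2 - e) ≤ C₁ * (2 * ‖x‖) ^ (2 - e) := by
            gcongr; linarith
        _ = C₁ * 2 ^ (2 - e) * ‖x‖ ^ (2 - e) := by
            rw [Real.mul_rpow (by norm_num) hx0.le]; ring
        _ ≤ C₁ * 4 * ‖x‖ ^ (2 - e) := by gcongr
        _ = _ := by ring
  refine ⟨32 * C₁ + 4 * C₄ + 12 * C₄ / γ, by positivity, 2 * R₂, by linarith, ?_, ?_⟩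
  · intro x hx k hk
    have hx0 : 0 < ‖x‖ := by linarith
    have hx2 : R₂ ≤ ‖x‖ := by linarith
    have hD : 0 < 12 * C₄ / γ := by positivity
    interval_cases k
    · rw [norm_iteratedFDeriv_zero, Real.norm_eq_abs]
      refine (hw x hx2).trans ?_
      simp only [Nat.cast_zero, sub_zero]
      gcongr
      linarith
    · rw [norm_iteratedFDeriv_one_eq H]
      have hs : ∀ y ∈ Metric.closedBall x (‖x‖ / 4), ‖x - y‖ ≤ ‖x‖ / 2 := fun y hy => by
        rw [Metric.mem_closedBall, dist_comm, dist_eq_norm] at hy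
        linarith
      have h1 := H.grad_interp (s := Metric.closedBall x (‖x‖ / 4)) (S := 2 * C₄ * ‖x‖ ^ (-e))
        (m := 4 * C₁ * ‖x‖ ^ (2 - e)) (by positivity)
        (fun y hy => neg_coer (hnear x y hx (hs y hy)).2.1)
        (fun y hy => (hnear x y hx (hs y hy)).2.2) (by positivity : 0 < ‖x‖ / 4) subset_rfl
      have e1 : ‖x‖ ^ (2 - e) = ‖x‖ * ‖x‖ ^ (1 - e) := by
        rw [← Real.rpow_one_add' hx0.le (by linarith)]; ring_nf
      have e2 : ‖x‖ * ‖x‖ ^ (-e) = ‖x‖ ^ (1 - e) := by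
        rw [← Real.rpow_one_add' hx0.le (by linarith)]; ring_nf
      have e3 : (2 : ℝ) - ((1 : ℕ) : ℝ) - e = 1 - e := by norm_num
      rw [e3]
      have h2 : ‖x‖ / 4 * ‖g x‖ ≤ ‖x‖ / 4 * ((32 * C₁ + C₄) * ‖x‖ ^ (1 - e)) := by
        refine h1.trans ?_
        rw [e1, ← e2]
        have : 0 ≤ C₄ * (‖x‖ * (‖x‖ * ‖x‖ ^ (-e))) := by positivity
        nlinarith
      refine (le_of_mul_le_mul_left h2 (by positivity)).trans
        (mul_le_mul_of_nonneg_right ?_ (by positivity))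
      linarith
    · refine (norm_iteratedFDeriv_two_le H x).trans ((hQ x hx2).trans ?_)
      rw [show (2 : ℝ) - ((2 : ℕ) : ℝ) - e = -e by norm_num]
      gcongr
      linarith
  · intro x y hx hy
    have hx0 : 0 < ‖x‖ := by linarith
    have hx2 : R₂ ≤ ‖x‖ := by linarith
    rw [Metric.mem_ball, dist_comm, dist_eq_norm] at hy
    refine (norm_iteratedFDeriv_two_sub_le H x y).trans ?_
    have hXα : 0 < ‖x‖ ^ α := by positivity
    rw [Real.rpow_sub hx0]
    by_cases hd : ‖x - y‖ < γ * (‖x‖ / 4)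
    · have h1 := hQα x y hx2 hd
      have h2 : ‖x‖ ^ α / 4 ≤ (‖x‖ / 4) ^ α := by
        rw [Real.div_rpow hx0.le (by norm_num)]
        gcongr
        simpa using Real.rpow_le_rpow_of_exponent_le (by norm_num : (1 : ℝ) ≤ 4) hα1.le
      have h3 : ‖x‖ ^ α / 4 * ‖Q x - Q y‖ ≤ C₄ * ‖x‖ ^ (-e) * ‖x - y‖ ^ α :=
        le_trans (by gcongr) h1
      have h4 : ‖Q x - Q y‖ ≤ 4 * C₄ * (‖x‖ ^ (-e) / ‖x‖ ^ α) * ‖x - y‖ ^ α := by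
        rw [mul_div_assoc', div_mul_eq_mul_div, le_div_iff₀ hXα]
        linarith
      refine h4.trans ?_
      gcongr
      linarith [(by positivity : 0 < 12 * C₄ / γ)]
    · push Not at hd
      have h1 : ‖Q x - Q y‖ ≤ 3 * C₄ * ‖x‖ ^ (-e) := by
        linarith [norm_sub_le (Q x) (Q y), hQ x hx2, (hnear x y hx hy.le).2.1]
      have h2 : γ / 4 * ‖x‖ ^ α ≤ ‖x - y‖ ^ α := by
        calc γ / 4 * ‖x‖ ^ α ≤ (γ / 4) ^ α * ‖x‖ ^ α := by
              gcongr
              simpa using Real.rpow_le_rpow_of_exponent_ge (by positivity : 0 < γ / 4)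
                (by linarith) hα1.le
          _ = (γ / 4 * ‖x‖) ^ α := (Real.mul_rpow (by positivity) hx0.le).symm
          _ ≤ _ := by gcongr; linarith
      calc ‖Q x - Q y‖ ≤ 3 * C₄ * ‖x‖ ^ (-e) := h1
        _ = 12 * C₄ / γ * (‖x‖ ^ (-e) / ‖x‖ ^ α) * (γ / 4 * ‖x‖ ^ α) := by
            field_simp; ring
        _ ≤ 12 * C₄ / γ * (‖x‖ ^ (-e) / ‖x‖ ^ α) * ‖x - y‖ ^ α := by gcongr
        _ ≤ _ := by
            gcongr
            linarith

/-! ### Decay of solutions of the phase equation -/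

theorem statement12
    (θ β : ℝ) (hθ : 0 < θ) (hβ : 0 < β)
    (u f : E2 → ℝ) (hu : ContDiff ℝ (⊤ : ℕ∞) u)
    (hrange : ∀ x : E2, θ + f x ∈ Set.Ioo 0 π)
    (hfl : ∃ Ω : Set E2, Bornology.IsBounded Ω ∧ ∃ K : NNReal, LipschitzOnWith K f Ωᶜ)
    (heq : ∀ x : E2, Phase (Hess u x) = θ + f x)
    (hdecay : DecayCond β u f)
    (A : Matrix (Fin 2) (Fin 2) ℝ) (hA : A ∈ calA θ)
    (ε C₁ R₀ : ℝ) (hε : ε ∈ Set.Ioo (0:ℝ) 1) (hC₁ : 0 < C₁) (hR₀ : 0 < R₀)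
    (hclose : ∀ x : E2, R₀ ≤ ‖x‖ → |u x - quadForm A x / 2| ≤ C₁ * ‖x‖ ^ (2 - ε)) :
    ∀ α ∈ Set.Ioo (0:ℝ) 1, ∃ C > (0:ℝ), ∃ R₁ > R₀,
      (∀ x : E2, R₁ < ‖x‖ → ∀ k : ℕ, k ≤ 2 →
        ‖iteratedFDeriv ℝ k (fun y => u y - quadForm A y / 2) x‖
          ≤ C * ‖x‖ ^ (2 - k - min ε β))
      ∧ ∀ x₁ x₂ : E2, R₁ < ‖x₁‖ → x₂ ∈ Metric.ball x₁ (‖x₁‖ / 2) →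
          ‖iteratedFDeriv ℝ 2 (fun y => u y - quadForm A y / 2) x₁
            - iteratedFDeriv ℝ 2 (fun y => u y - quadForm A y / 2) x₂‖
            ≤ C * ‖x₁‖ ^ (-(min ε β) - α) * ‖x₁ - x₂‖ ^ α := by
  intro α hα
  obtain ⟨hAs, hAθ⟩ := hA
  have hθπ : θ < π := by
    rw [← hAθ, Phase]
    linarith [Real.arctan_lt_pi_div_two (lam1 A), Real.arctan_lt_pi_div_two (lam2 A)]
  have hθI : θ ∈ Set.Ioo 0 π := ⟨hθ, hθπ⟩
  have hs2 : 0 < sin (θ / 2) := Real.sin_pos_of_pos_of_lt_pi (by linarith) (by linarith)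
  have hs1 : 0 < sin θ := Real.sin_pos_of_pos_of_lt_pi hθ hθπ
  obtain ⟨S, hS, a00, a01, a11, hSq⟩ := exists_of_matrix hAs
  obtain ⟨G, H, hG, hHs, hHlip⟩ := exists_gradHess hu
  -- the entries of the Hessian matrix in terms of the Hessian field
  have hent : ∀ x i j, Hess u x i j =
      inner ℝ (H x (EuclideanSpace.single i 1)) (EuclideanSpace.single j 1) := fun x i j => by
    rw [Hess, Matrix.of_apply, iteratedFDeriv_two_eq hG]; rfl
  have hKs : Symm (kap θ • ContinuousLinearMap.id ℝ E2) := fun h k => by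
    simp [real_inner_smul_left, real_inner_smul_right]
  have hU := hG.add (gradHess_quad hKs)
  have hquad : ∀ x, quad S x = quadForm A x / 2 := fun x => by rw [quad, hSq]
  have hw : GradHess (fun y => u y - quadForm A y / 2) (fun x => G x - S x) (fun x => H x - S) := by
    simpa only [hquad] using hG.sub (gradHess_quad hS)
  obtain ⟨η₁, hη₁, hη₁'⟩ := exists_eta hθI
  set c := 1 / (2 * sin θ) with hc_def
  have hc : 0 < c := by positivity
  set T := S + kap θ • ContinuousLinearMap.id ℝ E2 with hT
  have hTc : Coer c T := coer_of_phase hS a00 a01 a11 hθI hAθ (by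
    have h0 := (hη₁' 0 (by simpa using hη₁.le)).2
    rwa [add_zero] at h0)
  have hNc : ∀ x, |f x| ≤ η₁ → Coer c (H x + kap θ • ContinuousLinearMap.id ℝ E2) := fun x hx =>
    coer_of_phase (hHs x) (hent x 0 0) (hent x 0 1) (hent x 1 1) (hrange x) (heq x) (hη₁' _ hx).2
  have hdiff : ∀ x, H x + kap θ • ContinuousLinearMap.id ℝ E2 - T = H x - S := fun x => by
    rw [hT]; abel
  obtain ⟨η₂, hη₂, γ, hγ, C, hC, hγ8, hloc⟩ := local_hess hα hθI hc
    (by positivity : 0 < ‖T‖ + 1)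
  obtain ⟨C₀, hC₀, Rd, hRd, hdec⟩ := decay_bounds hβ hdecay
  set e := min ε β with he_def
  have he : e ∈ Set.Ioo (0 : ℝ) 1 := ⟨lt_min hε.1 hβ, (min_le_left _ _).trans_lt hε.2⟩
  set C₃ := 64 * C₁ + C₀ with hC₃
  have hC₃0 : 0 < C₃ := by positivity
  have lim : ∀ K p : ℝ, 0 < p → Filter.Tendsto (fun t : ℝ => K * t ^ (-p)) Filter.atTop (nhds 0) :=
    fun K p hp => by simpa using (tendsto_rpow_neg_atTop hp).const_mul K
  obtain ⟨R₂, hR₂⟩ := Filter.eventually_atTop.1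
    (((lim C₀ β hβ).eventually_le_const (lt_min hη₁ hη₂)).and
      ((lim C₃ e he.1).eventually_le_const hη₂))
  have hpow : ∀ p, e ≤ p → ∀ x : E2, 1 ≤ ‖x‖ → ‖x‖ ^ (-p) ≤ ‖x‖ ^ (-e) := fun p hp x hx =>
    Real.rpow_le_rpow_of_exponent_le hx (by linarith)
  -- the factor 2 keeps the balls of radius `‖x‖ / 4` in the region where the decay bounds hold
  set R₃ := 2 * max (max 1 R₂) (max Rd R₀) with hR₃
  have hmax : ∀ t, max (max 1 R₂) (max Rd R₀) ≤ t → 1 ≤ t ∧ R₂ ≤ t ∧ Rd ≤ t ∧ R₀ ≤ t := by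
    intro t ht
    simp only [max_le_iff] at ht
    exact ⟨ht.1.1, ht.1.2, ht.2.1, ht.2.2⟩
  obtain ⟨hb1, hb2, hb3, hb4⟩ := hmax _ le_rfl
  -- the scale-invariant estimate on the ball of radius `‖x‖ / 4` about `x`
  have key : ∀ x : E2, R₃ ≤ ‖x‖ → ‖H x - S‖ ≤ C * C₃ * ‖x‖ ^ (-e) ∧
      ∀ y, ‖x - y‖ < γ * (‖x‖ / 4) →
        (‖x‖ / 4) ^ α * ‖(H x - S) - (H y - S)‖ ≤ C * C₃ * ‖x‖ ^ (-e) * ‖x - y‖ ^ α := by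
    intro x hx
    have hx0 : 0 < ‖x‖ := by linarith
    obtain ⟨hx1, hx2, hx3, hx4⟩ := hmax ‖x‖ (by linarith)
    have hnear : ∀ y ∈ Metric.closedBall x (‖x‖ / 4),
        max (max 1 R₂) (max Rd R₀) ≤ ‖y‖ ∧ ‖y‖ ≤ 2 * ‖x‖ := fun y hy => by
      rw [Metric.mem_closedBall, dist_eq_norm] at hy
      have h1 := norm_sub_norm_le x y
      have h2 := norm_sub_norm_le y x
      rw [norm_sub_rev] at h1
      constructor <;> linarith
    have hfη : ∀ y ∈ Metric.closedBall x (‖x‖ / 4), |f y| ≤ min η₁ η₂ := fun y hy => by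
      obtain ⟨-, hy2, hy3, -⟩ := hmax ‖y‖ (hnear y hy).1
      exact (hdec y hy3).1.trans (hR₂ _ hy2).1
    have hbig : Metric.ball x (‖x‖ / 4) ⊆ Metric.ball x (‖x‖ / 2) :=
      Metric.ball_subset_ball (by linarith)
    set F := C₀ * ‖x‖ ^ (-β) / 4 with hF
    set m := 4 * C₁ * ‖x‖ ^ (2 - ε) with hm
    have hY : m / (‖x‖ / 4) ^ 2 + F ≤ C₃ * ‖x‖ ^ (-e) := by
      have e1 : ‖x‖ ^ (2 - ε) = ‖x‖ ^ 2 * ‖x‖ ^ (-ε) := by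
        rw [sub_eq_add_neg, Real.rpow_add hx0, Real.rpow_two]
      have e2 : m / (‖x‖ / 4) ^ 2 = 64 * C₁ * ‖x‖ ^ (-ε) := by
        rw [hm, e1]; field_simp; ring
      have h1 := mul_le_mul_of_nonneg_left (hpow ε (min_le_left _ _) x hx1)
        (by positivity : 0 ≤ 64 * C₁)
      have h2 := mul_le_mul_of_nonneg_left (hpow β (min_le_right _ _) x hx1) hC₀.le
      have h3 : 0 ≤ C₀ * ‖x‖ ^ (-β) := by positivity
      rw [e2, hF, hC₃]
      linarith
    have hmain := hloc _ _ _ T f x (‖x‖ / 4) m F hU (fun y => (hHs y).shift _) (hS.shift _) hTc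
      (by linarith) (by positivity) (fun y hy => hNc y ((hfη y hy).trans (min_le_left _ _)))
      (by simpa only [add_sub_add_right_eq_sub] using hHlip x (‖x‖ / 4))
      (fun y hy => by
        obtain ⟨hy1, -, -, hy4⟩ := hmax ‖y‖ (hnear y hy).1
        have e1 : u y + quad (kap θ • ContinuousLinearMap.id ℝ E2) y - quad T y =
            u y - quadForm A y / 2 := by
          rw [← hquad, quad, quad, quad, hT, add_apply, inner_add_left]; ring
        rw [e1]
        refine (hclose y hy4).trans ?_
        have h5 : (2 : ℝ) ^ (2 - ε) ≤ 4 := by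
          have := Real.rpow_le_rpow_of_exponent_le (by norm_num : (1 : ℝ) ≤ 2)
            (by push_cast; linarith [hε.1] : 2 - ε ≤ (2 : ℕ))
          rw [Real.rpow_natCast] at this
          linarith
        calc C₁ * ‖y‖ ^ (2 - ε) ≤ C₁ * (2 * ‖x‖) ^ (2 - ε) := by
              gcongr
              · linarith [hε.2]
              · exact (hnear y hy).2
          _ = C₁ * 2 ^ (2 - ε) * ‖x‖ ^ (2 - ε) := by
              rw [Real.mul_rpow (by norm_num) hx0.le]; ring
          _ ≤ C₁ * 4 * ‖x‖ ^ (2 - ε) := by gcongr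
          _ = m := by rw [hm]; ring)
      (fun y hy => (hfη y (Metric.ball_subset_closedBall hy)).trans (min_le_right _ _))
      (by positivity)
      (fun y hy z hz => by
        refine ((hdec x hx3).2 y (hbig hy) z (hbig hz)).trans (le_of_eq ?_)
        rw [Real.rpow_sub hx0, Real.rpow_one, hF]; field_simp)
      (fun y hy => trace_of_phase (hHs y) (hent y 0 0) (hent y 0 1) (hent y 1 1) (hrange y) (heq y)
        hs2 hc rfl (hNc y ((hfη y (Metric.ball_subset_closedBall hy)).trans (min_le_left _ _))))
      (hY.trans (hR₂ _ hx2).2) x (Metric.mem_ball_self (by positivity))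
    have hCY := mul_le_mul_of_nonneg_left hY hC.le
    rw [← mul_assoc] at hCY
    refine ⟨?_, fun y hy => ?_⟩
    · rw [← hdiff]
      exact hmain.1.trans hCY
    · rw [← hdiff x, ← hdiff y, sub_sub_sub_cancel_right]
      refine (hmain.2 y ?_).trans (by gcongr)
      rwa [Metric.mem_ball, dist_comm, dist_eq_norm]
  obtain ⟨D, hD, R₁, hR₁, h1, h2⟩ := full_decay hw he hα hγ hγ8 hC₁ (by positivity : 0 < C * C₃)
    (by linarith : 1 ≤ R₃)
    (fun x hx => by
      obtain ⟨hx1, -, -, hx4⟩ := hmax ‖x‖ (by linarith)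
      refine (hclose x hx4).trans ?_
      gcongr
      exact min_le_left _ _)
    (fun x hx => (key x hx).1) (fun x y hx hxy => (key x hx).2 y hxy)
  exact ⟨D, hD, R₁, by linarith, h1, h2⟩
end
end

section
/- Let u : ℝ² → ℝ be smooth on {x ∈ ℝ² : |x| > 1} and harmonic there, i.e. ∂₁₁u(x) + ∂₂₂u(x) = 0 for |x| > 1. Suppose there exist ξ ∈ (−1, 2), C₀ > 0 and R₀ > 1 such that |u(x)| ≤ C₀ |x|^{ξ} for all |x| ≥ R₀. Then there exist b ∈ ℝ², constants c, d ∈ ℝ, and constants C > 0, R > 1 such that |u(x) − b·x − d ln|x| − c| ≤ C |x|^{−1} for all |x| ≥ R. Moreover: if 0 < ξ < 1 then b = 0; if ξ = 0 (i.e. u is bounded) then b = 0 and d = 0; and if −1 < ξ < 0 then b = 0, c = 0 and d = 0. -/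
/-!
Identify `ℝ²` with `ℂ` and let `v` be `u` in the complex coordinate. The complex gradient
`g = ∂₁v - i ∂₂v` is holomorphic on `|z| > 1`. On the disc of radius `|z|/2` around `z` the function
`v` is the real part of a holomorphic function, so Borel-Carathéodory and Cauchy's estimate bound
`g` by the growth of `v` (`norm_complexGradient_le`), and `ξ < 2` gives `g(z) = o(|z|)` at infinity
(`complexGradient_div_tendsto_zero`). Removing the singularity of `w ↦ g(1/w)` at `0` yields
`g(z) = β + δ/z + z⁻² k(1/z)` with `k` holomorphic on the unit disc (`exists_laurent_at_infinity`).

To integrate this, pull back by `exp` to the right half plane, which is convex: `v ∘ exp` differs by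
a constant from the real part of `β e^ζ + δ ζ - K(e^{-ζ})`, where `K' = k` and `K(0) = 0`. Since
`v ∘ exp` has period `2πi`, `δ` is real. Hence `v(z) = Re(βz) + δ log|z| + c - Re K(1/z)`
(`harmonic_expansion`), and `K(w) = O(|w|)` at `0`.

The vanishing statements follow from the expansion: along each coordinate axis it bounds
`B t + d log t + c` by `O(t^ξ + t⁻¹)`, and comparing orders of growth kills the coefficients
(`coeff_eq_zero_of_growth`).
-/

open Real MeasureTheory

noncomputable section

/-! ### Complex gradient and interior estimate -/

open Complex InnerProductSpace Filter Topology Metric Set in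
/-- The real differential of `v` is the real part of multiplication by the complex gradient
`∂₁v - i ∂₂v`. -/
theorem fderiv_eq_re_complexGradient_mul (v : ℂ → ℝ) (z h : ℂ) :
    fderiv ℝ v z h = ((fderiv ℝ v z 1 - I * fderiv ℝ v z I) * h).re := by
  have : h = h.re • (1 : ℂ) + h.im • I := by simp
  conv_lhs => rw [this, map_add, map_smul, map_smul]
  simp; ring

open Complex InnerProductSpace Filter Topology Metric Set in
/-- Interior gradient estimate: `v` is the real part of a holomorphic `F` on the disc, whose
derivative at the centre is the complex gradient of `v`; Borel-Carathéodory bounds `F - F(z)` on the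
half disc, and Cauchy's estimate then bounds `F'(z)`. -/
theorem norm_complexGradient_le {v : ℂ → ℝ} {z : ℂ} {R M : ℝ} (hR : 0 < R) (hM : 0 < M)
    (hv : HarmonicOnNhd v (ball z R)) (hb : ∀ y ∈ ball z R, |v y| ≤ M) :
    ‖((fderiv ℝ v z 1 - I * fderiv ℝ v z I : ℂ))‖ ≤ 8 * M / R := by
  obtain ⟨F, hF, hFv⟩ := hv.exists_analyticOnNhd_ball_re_eq
  have hz : z ∈ ball z R := mem_ball_self hR
  have hFd := (hF z hz).differentiableAt
  have key : (fderiv ℝ v z 1 - I * fderiv ℝ v z I : ℂ) = deriv F z := by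
    have h1 : HasFDerivAt v (reCLM.comp ((fderiv ℂ F z).restrictScalars ℝ)) z :=
      (reCLM.hasFDerivAt.comp z (hFd.hasFDerivAt.restrictScalars ℝ)).congr_of_eventuallyEq
        (Filter.eventually_of_mem (ball_mem_nhds z hR) fun y hy => (hFv hy).symm)
    rw [h1.fderiv]
    apply Complex.ext <;> simp
  rw [key]
  have hshift : ∀ w ∈ ball (0 : ℂ) R, z + w ∈ ball z R := fun w hw => by simpa using hw
  have hd : DifferentiableOn ℂ (fun w => F (z + w) - F z) (ball 0 R) := by
    intro w hw
    have h1 : DifferentiableAt ℂ F (z + w) := (hF _ (hshift w hw)).differentiableAt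
    have : DifferentiableAt ℂ (fun w => F (z + w)) w := by fun_prop
    exact (this.sub_const _).differentiableWithinAt
  have hbd : ∀ w ∈ closedBall (0 : ℂ) (R / 2), ‖F (z + w) - F z‖ ≤ 4 * M := by
    intro w hw
    have hw' : ‖w‖ ≤ R / 2 := by simpa using hw
    have hwR : w ∈ ball (0 : ℂ) R := by simp; linarith
    have := borelCaratheodory_zero (M := 2 * M) (by positivity) hd (fun y hy => ?_) hR hwR (by simp)
    · refine this.trans ?_
      rw [div_le_iff₀ (by linarith)]
      nlinarith [norm_nonneg w]
    · have h1 := hFv (hshift y hy)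
      have h2 := hFv hz
      have h3 := abs_le.1 (hb _ (hshift y hy))
      have h4 := abs_le.1 (hb _ hz)
      simp only [Set.mem_ofPred_eq, sub_re] at *
      linarith
  have hderiv : deriv (fun w => F (z + w) - F z) 0 = deriv F z := by
    rw [deriv_sub_const, deriv_comp_const_add, add_zero]
  rw [← hderiv]
  have hdc : DiffContOnCl ℂ (fun w => F (z + w) - F z) (ball 0 (R / 2)) := by
    apply DifferentiableOn.diffContOnCl_ball hd
    exact closedBall_subset_ball (by linarith)
  refine (norm_deriv_le_of_forall_mem_sphere_norm_le (by positivity) hdc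
    (fun w hw => hbd w (sphere_subset_closedBall hw))).trans (le_of_eq ?_)
  field_simp; norm_num

/-! ### Holomorphic functions near infinity -/

open Complex Filter Topology Metric Set in
/-- The first two terms of the Laurent expansion at infinity of a holomorphic function that is
`o(|z|)` there. They come from the removable singularity of `w ↦ g(1/w)` at `0`; in the remainder,
`k` is the second divided difference at `0`. -/
theorem exists_laurent_at_infinity {g : ℂ → ℂ} (hg : ∀ z, 1 < ‖z‖ → DifferentiableAt ℂ g z)
    (hgr : Tendsto (fun z => g z / z) (Bornology.cobounded ℂ) (𝓝 0)) :
    ∃ (β δ : ℂ) (k : ℂ → ℂ), DifferentiableOn ℂ k (ball 0 1) ∧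
      ∀ z, 1 < ‖z‖ → g z = β + δ / z + k z⁻¹ / z ^ 2 := by
  have hb : ball (0 : ℂ) 1 ∈ 𝓝 (0 : ℂ) := ball_mem_nhds _ one_pos
  have hd : DifferentiableOn ℂ (fun w => g w⁻¹) (ball 0 1 \ {0}) := by
    rintro w ⟨hw, hw0⟩
    have hw0 : w ≠ 0 := hw0
    have hw : ‖w‖ < 1 := by simpa using hw
    have h1 : DifferentiableAt ℂ g w⁻¹ := hg _ (by
      rw [norm_inv]; exact (one_lt_inv₀ (norm_pos_iff.2 hw0)).2 hw)
    exact (DifferentiableAt.comp w h1 (differentiableAt_inv hw0)).differentiableWithinAt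
  -- The removable singularity theorem compares with the junk value `g 0⁻¹ = g 0`, a mere constant.
  have ho : (fun w => g w⁻¹ - g (0:ℂ)⁻¹) =o[𝓝[≠] 0] fun w : ℂ => (w - 0)⁻¹ := by
    have h1 : (fun z => g z - g 0) =o[Bornology.cobounded ℂ] fun z => z := by
      refine Asymptotics.IsLittleO.sub ?_ ?_
      · rw [Asymptotics.isLittleO_iff_tendsto']
        · exact hgr
        · filter_upwards [(Filter.hasBasis_cobounded_norm (E := ℂ)).mem_of_mem (i := 1) trivial] with z hz h0
          simp [h0] at hz
          linarith
      · rw [Asymptotics.isLittleO_const_left]; right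
        exact tendsto_norm_cobounded_atTop
    simpa [Function.comp_def] using h1.comp_tendsto (Filter.tendsto_inv₀_nhdsNE_zero (α := ℂ))
  have hH := Complex.differentiableOn_update_limUnder_of_isLittleO hb hd ho
  set h := Function.update (fun w => g w⁻¹) 0 (limUnder (𝓝[≠] 0) (fun w => g w⁻¹)) with hh
  refine ⟨h 0, dslope h 0 0, dslope (dslope h 0) 0,
    (differentiableOn_dslope hb).2 ((differentiableOn_dslope hb).2 hH), fun z hz => ?_⟩
  have hz0 : z ≠ 0 := by rintro rfl; simp at hz; linarith
  have hi : z⁻¹ ≠ 0 := inv_ne_zero hz0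
  have e1 : h z⁻¹ = g z := by simp [hh, Function.update_of_ne hi]
  rw [← e1]
  have e2 := sub_smul_dslope h 0 z⁻¹
  have e3 := sub_smul_dslope (dslope h 0) 0 z⁻¹
  simp only [sub_zero, smul_eq_mul] at e2 e3
  field_simp at e2 e3 ⊢
  linear_combination (-z) * e2 - e3

/-! ### Comparison of orders of growth -/

open Filter Topology Asymptotics in
theorem eq_zero_of_isLittleO_self {a : ℝ} {f : ℝ → ℝ} (hf : ∀ᶠ t in atTop, f t ≠ 0)
    (h : (fun t => a * f t) =o[atTop] f) : a = 0 := by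
  have h1 := h.tendsto_div_nhds_zero
  have h2 : Tendsto (fun t => a * f t / f t) atTop (𝓝 a) := by
    refine tendsto_const_nhds.congr' ?_
    filter_upwards [hf] with t ht
    field_simp
  exact tendsto_nhds_unique h2 h1

open Filter Topology Asymptotics in
/-- Comparison of the growth of `t`, `log t` and `1` with that of the bound. -/
theorem coeff_eq_zero_of_growth {B d c ξ A C R : ℝ}
    (h : ∀ t, R ≤ t → |B * t + d * Real.log t + c| ≤ A * t ^ ξ + C * t ^ (-1 : ℝ)) :
    (ξ < 1 → B = 0) ∧ (ξ ≤ 0 → d = 0) ∧ (ξ < 0 → c = 0) := by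
  have hO : (fun t => B * t + d * Real.log t + c) =O[atTop]
      fun t => A * t ^ ξ + C * t ^ (-1 : ℝ) := by
    refine IsBigO.of_bound 1 ?_
    filter_upwards [eventually_ge_atTop R] with t ht
    rw [one_mul]
    exact (h t ht).trans (le_abs_self _)
  have hrp : ∀ a b : ℝ, a < b → (fun t : ℝ => t ^ a) =o[atTop] fun t : ℝ => t ^ b := by
    intro a b hab
    rw [isLittleO_iff_tendsto']
    · refine (tendsto_rpow_neg_atTop (sub_pos.2 hab)).congr' ?_
      filter_upwards [eventually_gt_atTop 0] with t ht
      rw [← Real.rpow_sub ht, neg_sub]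
    · filter_upwards [eventually_gt_atTop 0] with t ht h0
      exact absurd h0 (Real.rpow_pos_of_pos ht _).ne'
  have hlog := Real.isLittleO_log_id_atTop
  have hcl : ∀ a : ℝ, (fun _ => a) =o[atTop] Real.log := fun a => Real.isLittleO_const_log_atTop
  have hct : ∀ a : ℝ, (fun _ => a) =o[atTop] (id : ℝ → ℝ) := fun a => (hcl a).trans hlog
  have hsum : ∀ e, ξ < e → -1 < e →
      (fun t => B * t + d * Real.log t + c) =o[atTop] fun t : ℝ => t ^ e := fun e h1 h2 =>
    hO.trans_isLittleO (((hrp _ _ h1).const_mul_left A).add ((hrp _ _ h2).const_mul_left C))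
  have h1 : ξ < 1 → B = 0 := by
    intro hξ
    -- For `ξ < 1` all terms but `B t` are `o(t)`.
    refine eq_zero_of_isLittleO_self (f := id) (eventually_ne_atTop 0) ?_
    have := ((hsum 1 hξ (by norm_num)).congr_right (g₂ := id) (by simp)).sub
      ((hlog.const_mul_left d).add (hct c))
    refine this.congr_left fun t => ?_
    simp
  have h2 : ξ ≤ 0 → d = 0 := by
    intro hξ
    have hB := h1 (by linarith)
    refine eq_zero_of_isLittleO_self (f := Real.log) ?_ ?_
    · filter_upwards [eventually_gt_atTop 1] with t ht
      exact (Real.log_pos ht).ne'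
    have h3 : (fun t => A * t ^ ξ + C * t ^ (-1 : ℝ)) =O[atTop] fun _ : ℝ => (1 : ℝ) := by
      have h4 : ∀ e : ℝ, e ≤ 0 → (fun t : ℝ => t ^ e) =O[atTop] fun _ : ℝ => (1 : ℝ) := by
        intro e he
        rcases he.eq_or_lt with rfl | he
        · simpa using isBigO_refl (fun _ : ℝ => (1 : ℝ)) atTop
        · simpa using (hrp e 0 he).isBigO
      exact ((h4 _ hξ).const_mul_left A).add ((h4 _ (by norm_num)).const_mul_left C)
    have := ((hO.trans h3).trans_isLittleO (hcl 1)).sub (hcl c)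
    refine this.congr_left fun t => ?_
    simp [hB]
  refine ⟨h1, h2, fun hξ => ?_⟩
  refine eq_zero_of_isLittleO_self (f := fun _ => 1) (by simp) ?_
  have := (hsum 0 hξ (by norm_num))
  rw [h1 (by linarith), h2 hξ.le] at this
  simpa using this

/-! ### Expansion of harmonic functions at infinity -/

open Complex InnerProductSpace Filter Topology Metric Set in
/-- Expansion at infinity of a function harmonic outside the unit disc with complex gradient
`o(|z|)`. The function is integrated after pulling it back by `exp` to the half plane `Re ζ > 0`. -/
theorem harmonic_expansion {v : ℂ → ℝ} (hv : ∀ z, 1 < ‖z‖ → HarmonicAt v z)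
    (hgr : Tendsto (fun z => (fderiv ℝ v z 1 - I * fderiv ℝ v z I) / z)
      (Bornology.cobounded ℂ) (𝓝 0)) :
    ∃ (β : ℂ) (d c : ℝ) (K : ℂ → ℂ), K 0 = 0 ∧ DifferentiableAt ℂ K 0 ∧
      ∀ z, 1 < ‖z‖ → v z = (β * z).re + d * Real.log ‖z‖ + c - (K z⁻¹).re := by
  obtain ⟨β, δ, k, hk, hg⟩ := exists_laurent_at_infinity
    (fun z hz => HarmonicAt.differentiableAt_complex_partial (hv z hz)) hgr
  obtain ⟨K, hK0, hK⟩ := hk.isExactOn_ball.with_val_at 0 0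
  set G : ℂ → ℂ := fun ζ => β * cexp ζ + δ * ζ - K (cexp (-ζ)) with hGdef
  set S : Set ℂ := {ζ | 0 < ζ.re} with hS
  have hSo : IsOpen S := isOpen_lt continuous_const continuous_re
  have hSc : IsPreconnected S := (convex_halfSpace_re_gt 0).isPreconnected
  have hnorm : ∀ ζ ∈ S, 1 < ‖cexp ζ‖ := fun ζ hζ => by
    rw [norm_exp]; exact Real.one_lt_exp_iff.2 hζ
  have hU : ∀ ζ ∈ S, HasFDerivAt (fun ζ => v (cexp ζ))
      ((fderiv ℝ v (cexp ζ)).comp ((ContinuousLinearMap.toSpanSingleton ℂ (cexp ζ)).restrictScalars ℝ)) ζ := by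
    intro ζ hζ
    have h1 : HasFDerivAt v (fderiv ℝ v (cexp ζ)) (cexp ζ) :=
      ((hv _ (hnorm ζ hζ)).1.differentiableAt (by norm_num)).hasFDerivAt
    exact h1.comp ζ ((hasDerivAt_exp ζ).hasFDerivAt.restrictScalars ℝ)
  have hG : ∀ ζ ∈ S, HasDerivAt G
      ((fderiv ℝ v (cexp ζ) 1 - I * fderiv ℝ v (cexp ζ) I) * cexp ζ) ζ := by
    intro ζ hζ
    have h1 : HasDerivAt K (k (cexp (-ζ))) (cexp (-ζ)) := by
      apply hK
      rw [mem_ball_zero_iff, norm_exp]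
      rw [← Real.exp_zero]; exact Real.exp_lt_exp.2 (by simpa [hS] using hζ)
    have h2 : HasDerivAt (fun ζ => cexp (-ζ)) (cexp (-ζ) * (-1)) ζ := (hasDerivAt_neg ζ).cexp
    have h3 := (((hasDerivAt_exp ζ).const_mul β).add ((hasDerivAt_id ζ).const_mul δ)).sub
      (h1.comp ζ h2)
    refine h3.congr_deriv ?_
    rw [hg _ (hnorm ζ hζ), Complex.exp_neg]
    have := Complex.exp_ne_zero ζ
    field_simp
    ring
  have hGre : ∀ ζ ∈ S, HasFDerivAt (fun ζ => (G ζ).re) _ ζ := fun ζ hζ =>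
    reCLM.hasFDerivAt.comp ζ ((hG ζ hζ).hasFDerivAt.restrictScalars ℝ)
  obtain ⟨a, ha⟩ := hSo.exists_eq_add_of_fderiv_eq hSc
    (fun ζ hζ => (hU ζ hζ).differentiableAt.differentiableWithinAt)
    (fun ζ hζ => (hGre ζ hζ).differentiableAt.differentiableWithinAt)
    (fun ζ hζ => by
      rw [(hU ζ hζ).fderiv, (hGre ζ hζ).fderiv]
      ext h
      simp only [ContinuousLinearMap.comp_apply, ContinuousLinearMap.coe_restrictScalars',
        ContinuousLinearMap.toSpanSingleton_apply, reCLM_apply, smul_eq_mul]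
      rw [fderiv_eq_re_complexGradient_mul]
      congr 1; ring)
  -- `v ∘ exp` and the other terms have period `2πi`, while `δ ζ` increases by `2πi δ`.
  have hδ : δ.im = 0 := by
    have h1 := ha (show (1 : ℂ) ∈ S by simp [hS])
    have h2 := ha (show (1 + 2 * π * I : ℂ) ∈ S by simp [hS])
    have h3 : cexp (1 + 2 * π * I : ℂ) = cexp 1 := exp_periodic 1
    have h4 : cexp (-(1 + 2 * π * I) : ℂ) = cexp (-1) := by rw [Complex.exp_neg, h3, Complex.exp_neg]
    simp only [hGdef, h3, h4] at h1 h2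
    have h5 := h1.symm.trans h2
    simp at h5
    have h6 : δ.im * (2 * π) = 0 := by linarith
    simpa [Real.pi_ne_zero] using h6
  refine ⟨β, δ.re, a, K, hK0, (hK 0 (by simp)).differentiableAt, fun z hz => ?_⟩
  have hz0 : z ≠ 0 := by rintro rfl; simp at hz; linarith
  have := ha (show log z ∈ S by simpa [hS, log_re] using Real.log_pos hz)
  simp only [hGdef, Complex.exp_neg, exp_log hz0, sub_re, add_re] at this
  rw [this, mul_re δ, hδ, log_re]
  ring

/-! ### Transfer from the real plane -/

open Complex InnerProductSpace Filter Topology in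
/-- The Hessian hypothesis is harmonicity in Mathlib's sense once `E2` is identified with `ℂ`. -/
theorem harmonicAt_complexCoordinate {u : E2 → ℝ}
    (hu : ContDiffOn ℝ (⊤ : ℕ∞) u {x : E2 | 1 < ‖x‖})
    (hharm : ∀ x : E2, 1 < ‖x‖ → Hess u x 0 0 + Hess u x 1 1 = 0) {z : ℂ} (hz : 1 < ‖z‖) :
    HarmonicAt (fun z => u (Complex.orthonormalBasisOneI.repr z)) z := by
  have hopen : IsOpen {x : E2 | 1 < ‖x‖} := isOpen_lt continuous_const continuous_norm
  refine ⟨?_, ?_⟩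
  · have h1 : ContDiffAt ℝ 2 u (Complex.orthonormalBasisOneI.repr z) :=
      (hu.contDiffAt (hopen.mem_nhds (by simpa using hz))).of_le (WithTop.coe_le_coe.2 (le_top (a := (2 : ℕ∞))))
    exact h1.comp z Complex.orthonormalBasisOneI.repr.contDiff.contDiffAt
  · filter_upwards [(isOpen_lt continuous_const continuous_norm).mem_nhds hz] with y hy
    have hy : 1 < ‖y‖ := hy
    have h1 := hharm (Complex.orthonormalBasisOneI.repr y) (by simpa using hy)
    have e0 : Complex.orthonormalBasisOneI.repr 1 = EuclideanSpace.single 0 1 := by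
      ext i; fin_cases i <;> simp [Complex.orthonormalBasisOneI_repr_apply]
    have e1 : Complex.orthonormalBasisOneI.repr I = EuclideanSpace.single 1 1 := by
      ext i; fin_cases i <;> simp [Complex.orthonormalBasisOneI_repr_apply]
    have h2 := Complex.orthonormalBasisOneI.repr.toContinuousLinearEquiv.iteratedFDerivWithin_comp_right
      u uniqueDiffOn_univ (Set.mem_univ (Complex.orthonormalBasisOneI.repr y)) 2
    simp only [Set.preimage_univ, iteratedFDerivWithin_univ] at h2
    rw [laplacian_eq_iteratedFDeriv_complexPlane]
    change iteratedFDeriv ℝ 2 (u ∘ Complex.orthonormalBasisOneI.repr.toContinuousLinearEquiv) y _ +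
      iteratedFDeriv ℝ 2 (u ∘ Complex.orthonormalBasisOneI.repr.toContinuousLinearEquiv) y _ = 0
    rw [h2]
    simp only [Hess, Matrix.of_apply] at h1
    have f0 : (fun i => Complex.orthonormalBasisOneI.repr ((![1, 1] : Fin 2 → ℂ) i)) =
        ![EuclideanSpace.single 0 1, EuclideanSpace.single 0 1] := by
      funext i; fin_cases i <;> simp only [← e0] <;> rfl
    have f1 : (fun i => Complex.orthonormalBasisOneI.repr ((![I, I] : Fin 2 → ℂ) i)) =
        ![EuclideanSpace.single 1 1, EuclideanSpace.single 1 1] := by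
      funext i; fin_cases i <;> simp only [← e1] <;> rfl
    rw [← f0, ← f1] at h1
    exact h1

open Complex InnerProductSpace Filter Topology Metric in
theorem complexGradient_div_tendsto_zero {v : ℂ → ℝ} (hv : ∀ z, 1 < ‖z‖ → HarmonicAt v z) {ξ C₀ R₀ : ℝ}
    (hξ : ξ < 2) (hC₀ : 0 < C₀) (hR₀ : 1 < R₀)
    (hgrowth : ∀ z, R₀ ≤ ‖z‖ → |v z| ≤ C₀ * ‖z‖ ^ ξ) :
    Tendsto (fun z => (fderiv ℝ v z 1 - I * fderiv ℝ v z I) / z)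
      (Bornology.cobounded ℂ) (𝓝 0) := by
  -- A nonnegative exponent makes `r ↦ r ^ η` monotone, so that it can be bounded on a whole disc.
  set η := max ξ 0 with hη
  have hη2 : η < 2 := max_lt hξ (by norm_num)
  have hη0 : 0 ≤ η := le_max_right _ _
  have hlim : Tendsto (fun z : ℂ => 16 * C₀ * 2 ^ η * ‖z‖ ^ (-(2 - η))) (Bornology.cobounded ℂ)
      (𝓝 0) := by
    simpa using (((tendsto_rpow_neg_atTop (sub_pos.2 hη2)).comp
      (tendsto_norm_cobounded_atTop (E := ℂ))).const_mul (16 * C₀ * 2 ^ η))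
  refine squeeze_zero_norm' ?_ hlim
  filter_upwards [(Filter.hasBasis_cobounded_norm (E := ℂ)).mem_of_mem (i := 2 * R₀) trivial]
    with z hz
  have hz : 2 * R₀ ≤ ‖z‖ := hz
  have hz0 : 0 < ‖z‖ := by linarith
  have hy1 : ∀ y ∈ ball z (‖z‖ / 2), R₀ ≤ ‖y‖ ∧ ‖y‖ ≤ 2 * ‖z‖ := by
    intro y hy
    rw [mem_ball, dist_eq_norm] at hy
    have h1 := norm_sub_norm_le z y
    have h2 := norm_sub_norm_le y z
    rw [norm_sub_rev] at h1
    constructor <;> linarith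
  have h1 := norm_complexGradient_le (v := v) (z := z) (R := ‖z‖ / 2) (M := C₀ * (2 * ‖z‖) ^ η)
    (by positivity) (by positivity) (fun y hy => hv y (by linarith [hy1 y hy])) (fun y hy => by
      obtain ⟨h3, h4⟩ := hy1 y hy
      refine (hgrowth y h3).trans ?_
      gcongr
      calc ‖y‖ ^ ξ ≤ ‖y‖ ^ η := Real.rpow_le_rpow_of_exponent_le (by linarith) (le_max_left _ _)
        _ ≤ _ := Real.rpow_le_rpow (norm_nonneg _) h4 hη0)
  rw [norm_div, div_le_iff₀ hz0]
  refine h1.trans (le_of_eq ?_)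
  rw [Real.mul_rpow (by norm_num) hz0.le, neg_sub, Real.rpow_sub hz0]
  norm_num
  field_simp
  norm_num

theorem statement13
    (u : E2 → ℝ)
    (hu : ContDiffOn ℝ (⊤ : ℕ∞) u {x : E2 | 1 < ‖x‖})
    (hharm : ∀ x : E2, 1 < ‖x‖ → Hess u x 0 0 + Hess u x 1 1 = 0)
    (ξ C₀ R₀ : ℝ) (hξ : ξ ∈ Set.Ioo (-1 : ℝ) 2) (hC₀ : 0 < C₀) (hR₀ : 1 < R₀)
    (hgrowth : ∀ x : E2, R₀ ≤ ‖x‖ → |u x| ≤ C₀ * ‖x‖ ^ ξ) :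
    ∃ (b : E2) (c d : ℝ), ∃ C > (0:ℝ), ∃ R > (1:ℝ),
      (∀ x : E2, R ≤ ‖x‖ →
        |u x - (∑ i, b i * x i) - d * Real.log ‖x‖ - c| ≤ C * ‖x‖ ^ (-1 : ℝ))
      ∧ (0 < ξ ∧ ξ < 1 → b = 0)
      ∧ (ξ = 0 → b = 0 ∧ d = 0)
      ∧ (ξ < 0 → b = 0 ∧ c = 0 ∧ d = 0) := by
  have hv := fun z hz => harmonicAt_complexCoordinate hu hharm (z := z) hz
  obtain ⟨β, d, c, K, hK0, hKd, hexp⟩ := harmonic_expansion hv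
    (complexGradient_div_tendsto_zero hv hξ.2 hC₀ hR₀ fun z hz => by
      simpa using hgrowth (Complex.orthonormalBasisOneI.repr z) (by simpa using hz))
  have hKO := hKd.isBigO_sub
  simp only [hK0, sub_zero] at hKO
  obtain ⟨C, hC, hCK⟩ := hKO.exists_pos
  obtain ⟨ε, hε, hKε⟩ := Metric.eventually_nhds_iff_ball.1 hCK.bound
  -- `‖x‖ ≥ 2 / ε` puts the inverse of the coordinate inside the ball of radius `ε`.
  set R := max R₀ (2 / ε) with hR
  have hR1 : 1 < R := hR₀.trans_le (le_max_left _ _)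
  have key : ∀ x : E2, R ≤ ‖x‖ → |u x - (∑ i, (!₂[β.re, -β.im] : E2) i * x i)
      - d * Real.log ‖x‖ - c| ≤ C * ‖x‖ ^ (-1 : ℝ) := by
    intro x hx
    set z : ℂ := Complex.orthonormalBasisOneI.repr.symm x with hz
    have hzn : ‖z‖ = ‖x‖ := LinearIsometryEquiv.norm_map _ _
    have hx0 : 0 < ‖x‖ := by linarith
    have h1 := hexp z (by rw [hzn]; linarith)
    have hLz : Complex.orthonormalBasisOneI.repr z = x := LinearIsometryEquiv.apply_symm_apply _ _
    have hre : (β * z).re = ∑ i, (!₂[β.re, -β.im] : E2) i * x i := by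
      rw [hz, Complex.orthonormalBasisOneI_repr_symm_apply]
      simp [Fin.sum_univ_two]
      ring
    rw [hLz, hre, hzn] at h1
    have h2 : ‖K z⁻¹‖ ≤ C * ‖z⁻¹‖ := hKε _ (by
      rw [mem_ball_zero_iff, norm_inv, hzn]
      have : 2 / ε ≤ ‖x‖ := (le_max_right _ _).trans hx
      rw [div_le_iff₀ hε] at this
      rw [inv_lt_iff_one_lt_mul₀ hx0]
      linarith)
    rw [norm_inv, hzn] at h2
    rw [h1, Real.rpow_neg_one]
    refine le_trans (le_of_eq ?_) ((Complex.abs_re_le_norm _).trans h2)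
    rw [← abs_neg]; congr 1; ring
  have hdir := fun i : Fin 2 => coeff_eq_zero_of_growth (B := (!₂[β.re, -β.im] : E2) i) (d := d) (c := c)
    (ξ := ξ) (A := C₀) (C := C) (R := R) (fun t ht => by
      have ht0 : 0 < t := by linarith
      have hn : ‖(EuclideanSpace.single i t : E2)‖ = t := by simp [abs_of_pos ht0]
      have h1 := key (EuclideanSpace.single i t) (by rwa [hn])
      have h2 := hgrowth (EuclideanSpace.single i t) (by
        rw [hn]; exact (le_max_left _ _).trans ht)
      have h3 : ∑ j, (!₂[β.re, -β.im] : E2) j * (EuclideanSpace.single i t : E2) j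
          = (!₂[β.re, -β.im] : E2) i * t := by
        simp
      rw [hn] at h1 h2
      rw [h3] at h1
      rw [abs_le] at *
      constructor <;> linarith)
  have hb : ξ < 1 → (!₂[β.re, -β.im] : E2) = 0 := fun h => by
    ext i; exact (hdir i).1 h
  exact ⟨!₂[β.re, -β.im], c, d, C, hC, R, hR1, key, fun h => hb h.2,
    fun h => ⟨hb (by linarith), (hdir 0).2.1 h.le⟩,
    fun h => ⟨hb (by linarith), (hdir 0).2.2 h, (hdir 0).2.1 h.le⟩⟩
end
end
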